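/- arXiv:1901.09736 — 2 statements merged into one kernel-verified Lean document; each statement's English description precedes it below -/
import Mathlib

section
/- Under the Viscous Setup, suppose additionally that δ ≤ ε, ρ̄ ≤ 1, and that there is a constant M₀ > 0 with ε b^n/a + δ|log a|(1 + b^n/ε) + ρ̄^θ|log a| + ρ̄^γ b^n + √ε/a ≤ M₀, where θ = (γ−1)/2. Let ω ∈ C_c^∞([0,∞)) be a test function with ω(r) = 1 for r ∈ [0,1] and ω(r) ≥ 0. Then there exists a constant M > 0, depending only on n, γ, T, E₀, M₀ and ω but not on ε, such that ∫₀^T∫_a^b (ρ|u|³ + ρ^{γ+θ}) ω(r) r^{n−1} dr dt ≤ M. -/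
open MeasureTheory Real Set

noncomputable section

/-- The internal energy function `h_δ(ρ) = κρ^γ/(γ-1) + δρ²`. -/
def hDelta (γ κ δ ρ : ℝ) : ℝ := κ * ρ ^ γ / (γ - 1) + δ * ρ ^ (2 : ℕ)

/-- Its derivative `h_δ'(ρ̄) = κγρ̄^{γ-1}/(γ-1) + 2δρ̄`. -/
def hDelta' (γ κ δ ρbar : ℝ) : ℝ := κ * γ * ρbar ^ (γ - 1) / (γ - 1) + 2 * δ * ρbar

/-- Its second derivative `h_δ''(ρ) = κγρ^{γ-2} + 2δ`. -/
def hDelta'' (γ κ δ ρ : ℝ) : ℝ := κ * γ * ρ ^ (γ - 2) + 2 * δ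

/-- The relative internal energy `h̄_δ(ρ,ρ̄) = h_δ(ρ) − h_δ(ρ̄) − h_δ'(ρ̄)(ρ−ρ̄)`. -/
def hBarDelta (γ κ δ ρ ρbar : ℝ) : ℝ :=
  hDelta γ κ δ ρ - hDelta γ κ δ ρbar - hDelta' γ κ δ ρbar * (ρ - ρbar)

/-- The Viscous Setup: `n ≥ 2`, `γ > 1`, `κ = (γ−1)²/(4γ)`, `p_δ(ρ) = κρ^γ + δρ²`;
`T > 0`, `ε > 0`, `δ > 0`, `0 < a < 1 < b`, `ρ̄ > 0`; smooth functions `(ρ, m)` on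
`[0,T]×[a,b]` with `ρ ≥ c_ε > 0` and `u = m/ρ`, satisfying the viscous system
`(r^{n−1}ρ)_t + (r^{n−1}m)_r = ε(r^{n−1}ρ_r)_r`,
`(r^{n−1}m)_t + (r^{n−1}m²/ρ)_r + r^{n−1}(p_δ(ρ))_r
  = ε(r^{n−1}m)_{rr} − ε((n−1)/r)(r^{n−1}m)_r` on `(0,T)×(a,b)`,
the boundary conditions `ρ_r(t,a) = 0`, `m(t,a) = 0`, `ρ(t,b) = ρ̄`, `m(t,b) = 0`,
and the energy estimate with total energy bound `E₀`. -/
structure ViscousSetup (n : ℕ) (γ T E₀ : ℝ) where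
  ε : ℝ
  δ : ℝ
  a : ℝ
  b : ℝ
  ρbar : ℝ
  cε : ℝ
  ρ : ℝ → ℝ → ℝ
  m : ℝ → ℝ → ℝ
  hn : 2 ≤ n
  hγ : 1 < γ
  hT : 0 < T
  hε : 0 < ε
  hδ : 0 < δ
  ha0 : 0 < a
  ha1 : a < 1
  hb : 1 < b
  hρbar : 0 < ρbar
  hcε : 0 < cε
  smooth_ρ : ContDiff ℝ (⊤ : ℕ∞) (Function.uncurry ρ)
  smooth_m : ContDiff ℝ (⊤ : ℕ∞) (Function.uncurry m)
  pos : ∀ t ∈ Set.Icc 0 T, ∀ r ∈ Set.Icc a b, cε ≤ ρ t r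
  continuity_eq : ∀ t ∈ Set.Ioo 0 T, ∀ r ∈ Set.Ioo a b,
    r ^ (n - 1) * deriv (fun s => ρ s r) t + deriv (fun y => y ^ (n - 1) * m t y) r
      = ε * deriv (fun y => y ^ (n - 1) * deriv (fun z => ρ t z) y) r
  momentum_eq : ∀ t ∈ Set.Ioo 0 T, ∀ r ∈ Set.Ioo a b,
    r ^ (n - 1) * deriv (fun s => m s r) t
      + deriv (fun y => y ^ (n - 1) * (m t y) ^ (2:ℕ) / ρ t y) r
      + r ^ (n - 1) * deriv (fun y =>
          (γ - 1) ^ (2:ℕ) / (4 * γ) * (ρ t y) ^ γ + δ * (ρ t y) ^ (2:ℕ)) r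
      = ε * deriv (fun y => deriv (fun z => z ^ (n - 1) * m t z) y) r
        - ε * ((n - 1 : ℝ) / r) * deriv (fun y => y ^ (n - 1) * m t y) r
  bc_ρr : ∀ t ∈ Set.Icc 0 T, deriv (fun y => ρ t y) a = 0
  bc_ma : ∀ t ∈ Set.Icc 0 T, m t a = 0
  bc_ρb : ∀ t ∈ Set.Icc 0 T, ρ t b = ρbar
  bc_mb : ∀ t ∈ Set.Icc 0 T, m t b = 0
  energy : ∀ t ∈ Set.Icc 0 T,
    (∫ r in Set.Ioo a b,
      ((1/2) * ρ t r * (m t r / ρ t r) ^ (2:ℕ)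
        + hBarDelta γ ((γ - 1) ^ (2:ℕ) / (4 * γ)) δ (ρ t r) ρbar) * r ^ (n - 1))
    + ε * ∫ s in Set.Ioo 0 T, ∫ r in Set.Ioo a b,
        (hDelta'' γ ((γ - 1) ^ (2:ℕ) / (4 * γ)) δ (ρ s r) * (deriv (fun y => ρ s y) r) ^ (2:ℕ)
          + ρ s r * (deriv (fun y => m s y / ρ s y) r) ^ (2:ℕ)
          + (n - 1 : ℝ) * ρ s r * (m s r / ρ s r) ^ (2:ℕ) / r ^ (2:ℕ)) * r ^ (n - 1)
      ≤ E₀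

/-- Truncation of a real number to `[-1, 1]`. -/
def clampUnit (x : ℝ) : ℝ := max (-1) (min 1 x)

lemma continuous_clampUnit : Continuous clampUnit := by unfold clampUnit; fun_prop

lemma monotone_clampUnit : Monotone clampUnit := fun x y h => by
  unfold clampUnit; gcongr

lemma clampUnit_of_le {x : ℝ} (h : x ≤ -1) : clampUnit x = -1 := by
  unfold clampUnit; rw [min_eq_right (by linarith), max_eq_left h]

lemma clampUnit_of_ge {x : ℝ} (h : 1 ≤ x) : clampUnit x = 1 := by
  unfold clampUnit; rw [min_eq_left h, max_eq_right (by norm_num)]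

lemma clampUnit_neg (x : ℝ) : clampUnit (-x) = -clampUnit x := by
  unfold clampUnit
  rcases le_total x (-1) with h | h <;> rcases le_total x 1 with h' | h' <;>
  simp only [max_def, min_def] <;> split_ifs <;> linarith

lemma abs_clampUnit_le (x : ℝ) : |clampUnit x| ≤ 1 := by
  unfold clampUnit
  rw [abs_le]
  exact ⟨le_max_left _ _, max_le (by norm_num) (min_le_left _ _)⟩

/-- The primitive of `g * exp (∫ g)`. -/
lemma integral_mul_exp_primitive {g : ℝ → ℝ} (hg : Continuous g) (l x : ℝ) :
    ∫ s in l..x, g s * exp (∫ τ in l..s, g τ) = exp (∫ τ in l..x, g τ) - 1 := by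
  have hd : ∀ s, HasDerivAt (fun s => exp (∫ τ in l..s, g τ)) (g s * exp (∫ τ in l..s, g τ)) s := by
    intro s
    have := (intervalIntegral.integral_hasDerivAt_right (hg.intervalIntegrable l s)
      (hg.stronglyMeasurableAtFilter _ _) hg.continuousAt).exp
    simpa [mul_comm] using this
  have hc : Continuous fun s => ∫ τ in l..s, g τ :=
    continuous_iff_continuousAt.2 fun s => (intervalIntegral.integral_hasDerivAt_right
      (hg.intervalIntegrable l s) (hg.stronglyMeasurableAtFilter _ _) hg.continuousAt).continuousAt
  rw [intervalIntegral.integral_eq_sub_of_hasDerivAt (fun s _ => hd s)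
    ((hg.mul (continuous_exp.comp hc)).intervalIntegrable _ _)]
  simp

/-- A damped wave equation written along its characteristics: the Riemann invariant `A` relaxes
towards minus its reflection about the curve `x = k ρ`, starting from the truncated identity. -/
theorem exists_reflected_relaxation {l r σ : ℝ} (hlr : l < r) (hσ : 0 < σ) {g k : ℝ → ℝ}
    (hg : Continuous g) (hg0 : ∀ s, 0 ≤ g s) (hk : Continuous k) (hkl : k l = 0)
    (hkm : ∀ s ρ, l ≤ s → s ≤ ρ → k s ≤ k ρ) :
    ∃ A : ℝ → ℝ → ℝ, Continuous (Function.uncurry A) ∧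
      (∀ ρ ∈ Icc l r, Monotone (A ρ)) ∧
      (∀ ρ ∈ Icc l r, ∀ x ≤ -σ, A ρ x = -1) ∧
      (∀ ρ ∈ Icc l r, ∀ x, 2 * k ρ + σ ≤ x → A ρ x = 1) ∧
      (∀ x, A l x = clampUnit (x / σ)) ∧
      ∀ ρ ∈ Ioo l r, ∀ x,
        HasDerivAt (fun s => A s x) (-g ρ * (A ρ x + A ρ (2 * k ρ - x))) ρ := by
  set m : ℝ → ℝ := fun ρ => ∫ τ in l..ρ, g τ with hm
  have hmd : ∀ s, HasDerivAt m (g s) s := fun s =>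
    intervalIntegral.integral_hasDerivAt_right (hg.intervalIntegrable l s)
      (hg.stronglyMeasurableAtFilter _ _) hg.continuousAt
  have hmc : Continuous m := continuous_iff_continuousAt.2 fun s => (hmd s).continuousAt
  have hmm : Monotone m := monotone_of_hasDerivAt_nonneg hmd hg0
  have hml : m l = 0 := by simp [hm]
  set pr : ℝ → ℝ := fun ρ => max l (min r ρ) with hpr
  have hprc : Continuous pr := by rw [hpr]; fun_prop
  have hprm : ∀ ρ, pr ρ ∈ Icc l r := fun ρ => ⟨le_max_left _ _, max_le hlr.le (min_le_left _ _)⟩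
  have hpre : ∀ ρ ∈ Icc l r, pr ρ = ρ := fun ρ h => by
    simp only [hpr]; rw [min_eq_right h.2, max_eq_right h.1]
  set y₀ : ℝ → ℝ := fun x => clampUnit (x / σ) with hy₀
  have hy₀c : Continuous y₀ := continuous_clampUnit.comp (by fun_prop)
  -- the integral operator
  let Ψ : (ℝ × ℝ → ℝ) → ℝ × ℝ → ℝ := fun B p =>
    exp (-m (pr p.1)) * (y₀ p.2 - ∫ s in l..pr p.1, g s * exp (m s) * B (s, 2 * k s - p.2))
  have hΨc : ∀ B : ℝ × ℝ → ℝ, Continuous B → Continuous (Ψ B) := by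
    intro B hB
    have : Continuous fun p : ℝ × ℝ =>
        ∫ s in l..pr p.1, g s * exp (m s) * B (s, 2 * k s - p.2) :=
      intervalIntegral.continuous_parametric_intervalIntegral_of_continuous
        (by simp only [Function.uncurry_def]; fun_prop) (by fun_prop)
    simp only [Ψ]
    fun_prop
  have hInt : ∀ (B : ℝ × ℝ → ℝ), Continuous B → ∀ x ρ, IntervalIntegrable
      (fun s => g s * exp (m s) * B (s, 2 * k s - x)) volume l ρ := fun B hB x ρ =>
    Continuous.intervalIntegrable (by fun_prop) _ _
  have hge : ∀ s, 0 ≤ g s * exp (m s) := fun s => mul_nonneg (hg0 s) (exp_pos _).le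
  have hInt₀ : ∀ c ρ, ∫ s in l..ρ, g s * exp (m s) * c = (exp (m ρ) - 1) * c := by
    intro c ρ
    rw [intervalIntegral.integral_mul_const, integral_mul_exp_primitive hg]
  -- bound of differences
  have hdiff : ∀ (B B' : ℝ × ℝ → ℝ), Continuous B → Continuous B' → ∀ c, (∀ p, |B p - B' p| ≤ c) →
      ∀ p, |Ψ B p - Ψ B' p| ≤ (1 - exp (-m r)) * c := by
    intro B B' hB hB' c hc p
    have h0c : 0 ≤ c := (abs_nonneg _).trans (hc (0, 0))
    have e : Ψ B p - Ψ B' p = -exp (-m (pr p.1)) *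
        ∫ s in l..pr p.1, g s * exp (m s) * (B (s, 2 * k s - p.2) - B' (s, 2 * k s - p.2)) := by
      have : ∫ s in l..pr p.1, g s * exp (m s) * (B (s, 2 * k s - p.2) - B' (s, 2 * k s - p.2))
          = (∫ s in l..pr p.1, g s * exp (m s) * B (s, 2 * k s - p.2)) -
            ∫ s in l..pr p.1, g s * exp (m s) * B' (s, 2 * k s - p.2) := by
        rw [← intervalIntegral.integral_sub (hInt B hB _ _) (hInt B' hB' _ _)]
        congr 1; ext s; ring
      rw [this]; simp only [Ψ]; ring
    have hb : |∫ s in l..pr p.1, g s * exp (m s) * (B (s, 2 * k s - p.2) - B' (s, 2 * k s - p.2))|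
        ≤ (exp (m (pr p.1)) - 1) * c := by
      rw [← hInt₀]
      refine (intervalIntegral.abs_integral_le_integral_abs (hprm p.1).1).trans ?_
      refine intervalIntegral.integral_mono_on (hprm p.1).1
        (Continuous.intervalIntegrable (by fun_prop) _ _)
        (Continuous.intervalIntegrable (by fun_prop) _ _) fun s _ => ?_
      rw [abs_mul, abs_of_nonneg (hge s)]
      exact mul_le_mul_of_nonneg_left (hc _) (hge s)
    rw [e, abs_mul, abs_neg, abs_of_pos (exp_pos _)]
    calc exp (-m (pr p.1)) * _ ≤ exp (-m (pr p.1)) * ((exp (m (pr p.1)) - 1) * c) :=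
          mul_le_mul_of_nonneg_left hb (exp_pos _).le
      _ = (1 - exp (-m (pr p.1))) * c := by
          have : exp (-m (pr p.1)) * exp (m (pr p.1)) = 1 := by rw [← exp_add]; simp
          linear_combination c * this
      _ ≤ (1 - exp (-m r)) * c := by
          refine mul_le_mul_of_nonneg_right ?_ h0c
          have := exp_le_exp.2 (neg_le_neg (hmm (hprm p.1).2))
          linarith
  -- the invariant class
  let P : (ℝ × ℝ → ℝ) → Prop := fun B => ∀ ρ,
    (∀ x x', x ≤ x' → B (ρ, x) ≤ B (ρ, x')) ∧ (∀ x, x ≤ -σ → B (ρ, x) = -1) ∧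
      (∀ x, 2 * k (pr ρ) + σ ≤ x → B (ρ, x) = 1)
  have hPb : ∀ B, P B → ∀ p, |B p| ≤ 1 := by
    rintro B hB ⟨ρ, x⟩
    obtain ⟨h1, h2, h3⟩ := hB ρ
    have a1 := h1 (min x (-σ)) x (min_le_left _ _)
    have a2 := h1 x (max x (2 * k (pr ρ) + σ)) (le_max_left _ _)
    rw [h2 _ (min_le_right _ _)] at a1
    rw [h3 _ (le_max_right _ _)] at a2
    exact abs_le.2 ⟨a1, a2⟩
  have hPΨ : ∀ B, Continuous B → P B → P (Ψ B) := by
    intro B hB hPB ρ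
    have hkpr : ∀ s ∈ Icc l (pr ρ), k s ≤ k (pr ρ) := fun s hs => hkm s _ hs.1 hs.2
    have hk0 : ∀ s ∈ Icc l (pr ρ), 0 ≤ k s := fun s hs => hkl ▸ hkm l s le_rfl hs.1
    have hprpr : ∀ s ∈ Icc l (pr ρ), pr s = s := fun s hs => hpre s ⟨hs.1, hs.2.trans (hprm ρ).2⟩
    refine ⟨fun x x' hxx => ?_, fun x hx => ?_, fun x hx => ?_⟩
    · simp only [Ψ]
      refine mul_le_mul_of_nonneg_left (sub_le_sub ?_ ?_) (exp_pos _).le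
      · exact monotone_clampUnit (by gcongr)
      · refine intervalIntegral.integral_mono_on (hprm ρ).1 (hInt B hB _ _) (hInt B hB _ _)
          fun s _ => mul_le_mul_of_nonneg_left ((hPB s).1 _ _ (by linarith)) (hge s)
    · have : ∫ s in l..pr ρ, g s * exp (m s) * B (s, 2 * k s - x)
          = ∫ s in l..pr ρ, g s * exp (m s) * 1 := by
        refine intervalIntegral.integral_congr fun s hs => ?_
        rw [uIcc_of_le (hprm ρ).1] at hs
        rw [(hPB s).2.2 _ (by rw [hprpr s hs]; linarith)]
      simp only [Ψ]
      rw [this, hInt₀, hy₀]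
      simp only
      rw [clampUnit_of_le (by rw [div_le_iff₀ hσ]; linarith)]
      have : exp (-m (pr ρ)) * exp (m (pr ρ)) = 1 := by rw [← exp_add]; simp
      linear_combination -this
    · have : ∫ s in l..pr ρ, g s * exp (m s) * B (s, 2 * k s - x)
          = ∫ s in l..pr ρ, g s * exp (m s) * (-1) := by
        refine intervalIntegral.integral_congr fun s hs => ?_
        rw [uIcc_of_le (hprm ρ).1] at hs
        rw [(hPB s).2.1 _ (by linarith [hkpr s hs])]
      have hk00 := hk0 (pr ρ) ⟨(hprm ρ).1, le_rfl⟩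
      simp only [Ψ]
      rw [this, hInt₀, hy₀]
      simp only
      rw [clampUnit_of_ge (by rw [le_div_iff₀ hσ]; linarith)]
      have : exp (-m (pr ρ)) * exp (m (pr ρ)) = 1 := by rw [← exp_add]; simp
      linear_combination this
  -- a member of the class
  let B₀ : ℝ × ℝ → ℝ := fun p => clampUnit ((p.2 - k (pr p.1)) / (k (pr p.1) + σ))
  have hkpr0 : ∀ ρ, 0 ≤ k (pr ρ) := fun ρ => hkl ▸ hkm l _ le_rfl (hprm ρ).1
  have hB₀c : Continuous B₀ := by
    refine continuous_clampUnit.comp (Continuous.div (by fun_prop) (by fun_prop) fun p => ?_)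
    have := hkpr0 p.1
    positivity
  have hB₀P : P B₀ := by
    intro ρ
    have h0 := hkpr0 ρ
    have h1 : 0 < k (pr ρ) + σ := by positivity
    refine ⟨fun x x' hxx => monotone_clampUnit (by gcongr), fun x hx => clampUnit_of_le ?_,
      fun x hx => clampUnit_of_ge ?_⟩
    · rw [div_le_iff₀ h1]; dsimp only; linarith
    · rw [le_div_iff₀ h1]; dsimp only; linarith
  -- fixed point
  have hΨb : ∀ B : BoundedContinuousFunction (ℝ × ℝ) ℝ, ∀ p, ‖Ψ B p‖ ≤ 1 + ‖B‖ := by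
    intro B p
    have h1 := hdiff B (fun _ => 0) B.continuous continuous_const ‖B‖
      (fun p => by simpa using B.norm_coe_le_norm p) p
    have h2 : Ψ (fun _ => 0) p = exp (-m (pr p.1)) * y₀ p.2 := by simp [Ψ]
    rw [h2] at h1
    have h3 : |exp (-m (pr p.1)) * y₀ p.2| ≤ 1 := by
      rw [abs_mul, abs_of_pos (exp_pos _)]
      have e1 : exp (-m (pr p.1)) ≤ 1 := by
        rw [exp_le_one_iff]; have := hmm (hprm p.1).1; linarith
      exact mul_le_one₀ e1 (abs_nonneg _) (abs_clampUnit_le _)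
    have h4 : (1 - exp (-m r)) * ‖B‖ ≤ ‖B‖ := by
      nlinarith [exp_pos (-m r), norm_nonneg B, mul_nonneg (exp_pos (-m r)).le (norm_nonneg B)]
    rw [Real.norm_eq_abs]
    have h5 := abs_add_le (Ψ B p - exp (-m (pr p.1)) * y₀ p.2) (exp (-m (pr p.1)) * y₀ p.2)
    rw [sub_add_cancel] at h5
    linarith
  let Φ : BoundedContinuousFunction (ℝ × ℝ) ℝ → BoundedContinuousFunction (ℝ × ℝ) ℝ := fun B =>
    BoundedContinuousFunction.ofNormedAddCommGroup (Ψ B) (hΨc B B.continuous) (1 + ‖B‖) (hΨb B)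
  have hΦ : ∀ B p, Φ B p = Ψ B p := fun _ _ => rfl
  let C : Set (BoundedContinuousFunction (ℝ × ℝ) ℝ) := {B | P B}
  have hCc : IsClosed C := by
    have ev : ∀ p, Continuous fun B : BoundedContinuousFunction (ℝ × ℝ) ℝ => B p := fun p =>
      continuous_eval_const p
    have : C = ⋂ ρ : ℝ, ((⋂ x : ℝ, ⋂ x' : ℝ, ⋂ _ : x ≤ x',
        {B : BoundedContinuousFunction (ℝ × ℝ) ℝ | B (ρ, x) ≤ B (ρ, x')}) ∩
        ((⋂ x : ℝ, ⋂ _ : x ≤ -σ, {B : BoundedContinuousFunction (ℝ × ℝ) ℝ | B (ρ, x) = -1}) ∩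
        (⋂ x : ℝ, ⋂ _ : 2 * k (pr ρ) + σ ≤ x,
          {B : BoundedContinuousFunction (ℝ × ℝ) ℝ | B (ρ, x) = 1}))) := by
      ext B; simp [C, P]
    rw [this]
    refine isClosed_iInter fun ρ => IsClosed.inter ?_ (IsClosed.inter ?_ ?_)
    · exact isClosed_iInter fun x => isClosed_iInter fun x' => isClosed_iInter fun _ =>
        isClosed_le (ev _) (ev _)
    · exact isClosed_iInter fun x => isClosed_iInter fun _ => isClosed_eq (ev _) continuous_const
    · exact isClosed_iInter fun x => isClosed_iInter fun _ => isClosed_eq (ev _) continuous_const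
  have hCm : MapsTo Φ C C := fun B hB => hPΨ B B.continuous hB
  have hK0 : 0 ≤ 1 - exp (-m r) := by
    have : exp (-m r) ≤ 1 := by
      rw [exp_le_one_iff]; have := hmm hlr.le; linarith
    linarith
  have hcontr : ContractingWith (1 - exp (-m r)).toNNReal (hCm.restrict Φ C C) := by
    refine ⟨?_, LipschitzWith.of_dist_le_mul fun B B' => ?_⟩
    · rw [Real.toNNReal_lt_one]; linarith [exp_pos (-m r)]
    · rw [Real.coe_toNNReal _ hK0]
      change dist (Φ B) (Φ B') ≤
        (1 - exp (-m r)) * dist (B : BoundedContinuousFunction (ℝ × ℝ) ℝ) B'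
      rw [BoundedContinuousFunction.dist_le (mul_nonneg hK0 dist_nonneg)]
      intro p
      exact hdiff _ _ (ContinuousMapClass.map_continuous _) (ContinuousMapClass.map_continuous _) _
        (fun p => by
          rw [← Real.dist_eq]; exact BoundedContinuousFunction.dist_coe_le_dist p) p
  let b₀ : BoundedContinuousFunction (ℝ × ℝ) ℝ :=
    BoundedContinuousFunction.ofNormedAddCommGroup B₀ hB₀c 1 (hPb B₀ hB₀P)
  obtain ⟨B, hBC, hfix, -⟩ := hcontr.exists_fixedPoint' hCc.isComplete hCm
    (x := b₀) hB₀P (edist_ne_top _ _)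
  have hBe : ∀ p, B p = Ψ B p := fun p => by
    conv_lhs => rw [← hfix]
    rfl
  refine ⟨fun ρ x => B (ρ, x), by simpa [Function.uncurry_def] using B.continuous,
    fun ρ _ x x' h => (hBC ρ).1 x x' h,
    fun ρ _ x hx => (hBC ρ).2.1 x hx, fun ρ hρ x hx => (hBC ρ).2.2 x (by rwa [hpre ρ hρ]), ?_, ?_⟩
  · intro x
    change B (l, x) = _
    rw [hBe]
    simp only [Ψ]
    rw [hpre l ⟨le_rfl, hlr.le⟩, hml]
    simp [hy₀]
  · intro ρ hρ x
    have hev : (fun s => B (s, x)) =ᶠ[nhds ρ] fun s => exp (-m s) *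
        (y₀ x - ∫ τ in l..s, g τ * exp (m τ) * B (τ, 2 * k τ - x)) := by
      filter_upwards [Ioo_mem_nhds hρ.1 hρ.2] with s hs
      rw [hBe]
      simp only [Ψ]
      rw [hpre s ⟨hs.1.le, hs.2.le⟩]
    have hcc : Continuous fun τ => g τ * exp (m τ) * B (τ, 2 * k τ - x) := by
      have := B.continuous
      fun_prop
    have hd := ((hmd ρ).neg.exp).mul ((intervalIntegral.integral_hasDerivAt_right
      (hcc.intervalIntegrable l ρ) (hcc.stronglyMeasurableAtFilter _ _)
        hcc.continuousAt).const_sub (y₀ x))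
    refine (hd.congr_of_eventuallyEq hev).congr_deriv ?_
    have e := hev.self_of_nhds
    simp only at e
    have h1 : exp (-m ρ) * exp (m ρ) = 1 := by rw [← exp_add]; simp
    simp only [Pi.neg_apply]
    linear_combination g ρ * e - g ρ * B (ρ, 2 * k ρ - x) * h1

/-- `f` has continuous partial derivatives `f₁`, `f₂` on the strip `I × ℝ`. -/
def HasPartials (f f₁ f₂ : ℝ → ℝ → ℝ) (I : Set ℝ) : Prop :=
  (∀ ρ ∈ I, ∀ u, HasDerivAt (fun s => f s u) (f₁ ρ u) ρ) ∧
  (∀ ρ ∈ I, ∀ u, HasDerivAt (fun v => f ρ v) (f₂ ρ u) u) ∧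
  ContinuousOn (Function.uncurry f₁) (I ×ˢ univ) ∧ ContinuousOn (Function.uncurry f₂) (I ×ˢ univ)

/-- Chain rule along a curve for a function with continuous partial derivatives. -/
lemma HasPartials.comp {f f₁ f₂ : ℝ → ℝ → ℝ} {I : Set ℝ} (h : HasPartials f f₁ f₂ I)
    (hI : IsOpen I) {x y : ℝ → ℝ} {x' y' t : ℝ} (hx : HasDerivAt x x' t) (hy : HasDerivAt y y' t)
    (ht : x t ∈ I) :
    HasDerivAt (fun s => f (x s) (y s)) (f₁ (x t) (y t) * x' + f₂ (x t) (y t) * y') t := by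
  obtain ⟨h1, h2, h3, h4⟩ := h
  have hN : I ×ˢ (univ : Set ℝ) ∈ nhds (x t, y t) := (hI.prod isOpen_univ).mem_nhds ⟨ht, mem_univ _⟩
  have key := hasStrictFDerivAt_uncurry_coprod (𝕜 := ℝ) (u := (x t, y t)) (f := f)
    (f₁ := fun a b => ContinuousLinearMap.toSpanSingleton ℝ (f₁ a b))
    (f₂ := fun a b => ContinuousLinearMap.toSpanSingleton ℝ (f₂ a b))
    (by filter_upwards [hN] with v hv; exact (h1 v.1 hv.1 v.2).hasFDerivAt)
    (by filter_upwards [hN] with v hv; exact (h2 v.1 hv.1 v.2).hasFDerivAt)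
    ((LinearMap.continuous_of_finiteDimensional
      (ContinuousLinearMap.toSpanSingletonLE ℝ ℝ ℝ).toLinearMap).continuousAt.comp
      (h3.continuousAt hN))
    ((LinearMap.continuous_of_finiteDimensional
      (ContinuousLinearMap.toSpanSingletonLE ℝ ℝ ℝ).toLinearMap).continuousAt.comp
      (h4.continuousAt hN))
  have := key.hasFDerivAt.comp_hasDerivAt t (hx.prodMk hy)
  refine this.congr_deriv ?_
  simp [Function.HasUncurry.uncurry]
  ring

/-- Differentiation under an interval integral with a jointly continuous derivative. -/
lemma hasDerivAt_intervalIntegral_param {f f₁ : ℝ → ℝ → ℝ} {I : Set ℝ} (hI : IsOpen I) {α β : ℝ}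
    (h1 : ∀ ρ ∈ I, ∀ u ∈ uIcc α β, HasDerivAt (fun s => f s u) (f₁ ρ u) ρ)
    (hf : ContinuousOn (Function.uncurry f) (I ×ˢ uIcc α β))
    (hf₁ : ContinuousOn (Function.uncurry f₁) (I ×ˢ uIcc α β)) {ρ : ℝ} (hρ : ρ ∈ I) :
    HasDerivAt (fun s => ∫ v in α..β, f s v) (∫ v in α..β, f₁ ρ v) ρ := by
  obtain ⟨e, he, hsub⟩ := Metric.nhds_basis_closedBall.mem_iff.1 (hI.mem_nhds hρ)
  have hcomp : IsCompact (Metric.closedBall ρ e ×ˢ uIcc α β) :=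
    (isCompact_closedBall ρ e).prod isCompact_uIcc
  obtain ⟨C, hC⟩ := hcomp.exists_bound_of_continuousOn (hf₁.mono (prod_mono_left hsub))
  have sl : ∀ (φ : ℝ → ℝ → ℝ), ContinuousOn (Function.uncurry φ) (I ×ˢ uIcc α β) → ∀ s ∈ I,
      ContinuousOn (φ s) (uIcc α β) := fun φ hφ s hs =>
    hφ.comp (f := fun v => (s, v)) (by fun_prop) fun v hv => ⟨hs, hv⟩
  refine (intervalIntegral.hasDerivAt_integral_of_dominated_loc_of_deriv_le (bound := fun _ => C)
    (F := f) (F' := f₁)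
    (Metric.closedBall_mem_nhds ρ he) ?_ (sl f hf ρ hρ).intervalIntegrable ?_ ?_
    intervalIntegrable_const ?_).2
  · filter_upwards [hI.mem_nhds hρ] with s hs
    exact ((sl f hf s hs).mono uIoc_subset_uIcc).aestronglyMeasurable measurableSet_uIoc
  · exact ((sl f₁ hf₁ ρ hρ).mono uIoc_subset_uIcc).aestronglyMeasurable measurableSet_uIoc
  · exact Filter.Eventually.of_forall fun v hv s hs => hC (s, v) ⟨hs, uIoc_subset_uIcc hv⟩
  · exact Filter.Eventually.of_forall fun v hv s hs => h1 s (hsub hs) v (uIoc_subset_uIcc hv)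

/-- A sound speed `c`, its Riemann primitive `k`, the relaxation rate `g` and the associated
Riemann invariant `A` on the density interval `[l, r]`. -/
structure WaveKernel (l r σ : ℝ) where
  c : ℝ → ℝ
  g : ℝ → ℝ
  k : ℝ → ℝ
  A : ℝ → ℝ → ℝ
  hl : 0 < l
  hlr : l < r
  hσ : 0 < σ
  hc : Continuous c
  hc0 : ∀ s, 0 < c s
  hg : Continuous g
  hk : Continuous k
  hkl : k l = 0
  hk' : ∀ ρ ∈ Ioo l r, HasDerivAt k (c ρ / ρ) ρ
  hQ' : ∀ ρ ∈ Ioo l r, HasDerivAt (fun s => s * c s) (2 * g ρ * (ρ * c ρ)) ρ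
  hA : Continuous (Function.uncurry A)
  hAm : ∀ ρ ∈ Icc l r, Monotone (A ρ)
  hAneg : ∀ ρ ∈ Icc l r, ∀ x ≤ -σ, A ρ x = -1
  hApos : ∀ ρ ∈ Icc l r, ∀ x, 2 * k ρ + σ ≤ x → A ρ x = 1
  hAl : ∀ x, A l x = clampUnit (x / σ)
  hA' : ∀ ρ ∈ Ioo l r, ∀ x, HasDerivAt (fun s => A s x) (-g ρ * (A ρ x + A ρ (2 * k ρ - x))) ρ

namespace WaveKernel

variable {l r σ : ℝ} (K : WaveKernel l r σ)

/-- Primitive of the Riemann invariant. -/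
def prim (ρ x : ℝ) : ℝ := ∫ v in (0)..x, K.A ρ v

/-- Second velocity derivative of the entropy density. -/
def y (ρ u : ℝ) : ℝ := (K.A ρ (K.k ρ + u) - K.A ρ (K.k ρ - u)) / 2

/-- Normalised mixed derivative of the entropy density. -/
def z (ρ u : ℝ) : ℝ := (K.A ρ (K.k ρ + u) + K.A ρ (K.k ρ - u)) / 2

/-- Density-dependent normalisation of `V`. -/
def shift (ρ : ℝ) : ℝ := ∫ s in l..ρ, K.g s * K.prim s (2 * K.k s)

/-- Derivative of the entropy with respect to the momentum. -/
def V (ρ u : ℝ) : ℝ := (K.prim ρ (K.k ρ + u) + K.prim ρ (K.k ρ - u)) / 2 + K.shift ρ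

/-- The stress potential. -/
def J (ρ u : ℝ) : ℝ := ρ * K.c ρ * ((K.prim ρ (K.k ρ + u) - K.prim ρ (K.k ρ - u)) / 2)

/-- Specific entropy. -/
def F (ρ u : ℝ) : ℝ := ∫ v in (0)..u, K.V ρ v

/-- Non-convective part of the entropy flux. -/
def H (ρ u : ℝ) : ℝ := ∫ s in l..ρ, K.c s ^ 2 * K.V s u

lemma continuous_prim : Continuous (Function.uncurry K.prim) := by
  have : Continuous fun p : ℝ × ℝ => ∫ v in (0)..p.2, K.A p.1 v :=
    intervalIntegral.continuous_parametric_intervalIntegral_of_continuous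
      (by
        have := K.hA
        exact this.comp (f := fun q : (ℝ × ℝ) × ℝ => (q.1.1, q.2)) (by fun_prop)) (by fun_prop)
  exact this

lemma continuous_A_comp {X : Type*} [TopologicalSpace X] {f₁ f₂ : X → ℝ} (h₁ : Continuous f₁)
    (h₂ : Continuous f₂) : Continuous fun p => K.A (f₁ p) (f₂ p) :=
  K.hA.comp (f := fun p => (f₁ p, f₂ p)) (by fun_prop)

lemma continuous_prim_comp {X : Type*} [TopologicalSpace X] {f₁ f₂ : X → ℝ} (h₁ : Continuous f₁)
    (h₂ : Continuous f₂) : Continuous fun p => K.prim (f₁ p) (f₂ p) :=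
  K.continuous_prim.comp (f := fun p => (f₁ p, f₂ p)) (by fun_prop)

lemma continuous_y : Continuous (Function.uncurry K.y) := by
  have := K.hk
  simp only [Function.uncurry_def, y]
  exact ((K.continuous_A_comp (by fun_prop) (by fun_prop)).sub
    (K.continuous_A_comp (by fun_prop) (by fun_prop))).div_const _

lemma continuous_z : Continuous (Function.uncurry K.z) := by
  have := K.hk
  simp only [Function.uncurry_def, z]
  exact ((K.continuous_A_comp (by fun_prop) (by fun_prop)).add
    (K.continuous_A_comp (by fun_prop) (by fun_prop))).div_const _

lemma continuous_shift_integrand : Continuous fun s => K.g s * K.prim s (2 * K.k s) := by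
  have := K.hk
  exact K.hg.mul (K.continuous_prim_comp (by fun_prop) (by fun_prop))

lemma hasDerivAt_shift (ρ : ℝ) :
    HasDerivAt K.shift (K.g ρ * K.prim ρ (2 * K.k ρ)) ρ :=
  intervalIntegral.integral_hasDerivAt_right
    (K.continuous_shift_integrand.intervalIntegrable _ _)
    (K.continuous_shift_integrand.stronglyMeasurableAtFilter _ _)
    K.continuous_shift_integrand.continuousAt

lemma continuous_shift : Continuous K.shift :=
  continuous_iff_continuousAt.2 fun s => (K.hasDerivAt_shift s).continuousAt

lemma continuous_V : Continuous (Function.uncurry K.V) := by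
  have := K.hk
  have h2 := K.continuous_shift
  simp only [Function.uncurry_def, V]
  exact (((K.continuous_prim_comp (by fun_prop) (by fun_prop)).add
    (K.continuous_prim_comp (by fun_prop) (by fun_prop))).div_const _).add (by fun_prop)

lemma continuous_V_comp {X : Type*} [TopologicalSpace X] {f₁ f₂ : X → ℝ} (h₁ : Continuous f₁)
    (h₂ : Continuous f₂) : Continuous fun p => K.V (f₁ p) (f₂ p) :=
  K.continuous_V.comp (f := fun p => (f₁ p, f₂ p)) (by fun_prop)

lemma continuous_J : Continuous (Function.uncurry K.J) := by
  have := K.hk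
  have h2 := K.hc
  simp only [Function.uncurry_def, J]
  exact (Continuous.mul (by fun_prop) (((K.continuous_prim_comp (by fun_prop) (by fun_prop)).sub
    (K.continuous_prim_comp (by fun_prop) (by fun_prop))).div_const _))

lemma hasDerivAt_prim_right (ρ x : ℝ) : HasDerivAt (fun v => K.prim ρ v) (K.A ρ x) x := by
  have h : Continuous (K.A ρ) := K.continuous_A_comp continuous_const continuous_id
  exact intervalIntegral.integral_hasDerivAt_right (h.intervalIntegrable _ _)
    (h.stronglyMeasurableAtFilter _ _) h.continuousAt

lemma intervalIntegrable_A (ρ α β : ℝ) : IntervalIntegrable (K.A ρ) volume α β :=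
  Continuous.intervalIntegrable (K.continuous_A_comp continuous_const continuous_id) _ _

lemma hasDerivAt_prim_left {ρ : ℝ} (hρ : ρ ∈ Ioo l r) (x : ℝ) :
    HasDerivAt (fun s => K.prim s x)
      (-K.g ρ * (K.prim ρ x + K.prim ρ (2 * K.k ρ) - K.prim ρ (2 * K.k ρ - x))) ρ := by
  have hk := K.hk
  have hg := K.hg
  have h := hasDerivAt_intervalIntegral_param (f := K.A)
    (f₁ := fun ρ x => -K.g ρ * (K.A ρ x + K.A ρ (2 * K.k ρ - x))) (I := Ioo l r) isOpen_Ioo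
    (α := 0) (β := x) (fun ρ hρ u _ => K.hA' ρ hρ u) K.hA.continuousOn
    (Continuous.continuousOn (by
      simp only [Function.uncurry_def]
      exact Continuous.mul (by fun_prop) ((K.continuous_A_comp (by fun_prop) (by fun_prop)).add
        (K.continuous_A_comp (by fun_prop) (by fun_prop))))) hρ
  refine h.congr_deriv ?_
  have hi : IntervalIntegrable (fun v => K.A ρ (2 * K.k ρ - v)) volume 0 x :=
    Continuous.intervalIntegrable (K.continuous_A_comp (by fun_prop) (by fun_prop)) _ _
  rw [intervalIntegral.integral_const_mul,
    intervalIntegral.integral_add (K.intervalIntegrable_A _ _ _) hi,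
    intervalIntegral.integral_comp_sub_left (fun v => K.A ρ v), sub_zero, prim, prim, prim,
    ← intervalIntegral.integral_interval_sub_left (K.intervalIntegrable_A ρ 0 (2 * K.k ρ))
      (K.intervalIntegrable_A ρ 0 (2 * K.k ρ - x))]
  ring

lemma hasPartials_prim : HasPartials K.prim
    (fun ρ x => -K.g ρ * (K.prim ρ x + K.prim ρ (2 * K.k ρ) - K.prim ρ (2 * K.k ρ - x))) K.A
    (Ioo l r) := by
  have hk := K.hk
  have hg := K.hg
  refine ⟨fun ρ hρ u => K.hasDerivAt_prim_left hρ u, fun ρ _ u => K.hasDerivAt_prim_right ρ u,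
    Continuous.continuousOn ?_, K.hA.continuousOn⟩
  simp only [Function.uncurry_def]
  exact Continuous.mul (by fun_prop) (((K.continuous_prim_comp (by fun_prop) (by fun_prop)).add
        (K.continuous_prim_comp (by fun_prop) (by fun_prop))).sub
        (K.continuous_prim_comp (by fun_prop) (by fun_prop)))

lemma hasDerivAt_V_right (ρ u : ℝ) : HasDerivAt (fun v => K.V ρ v) (K.y ρ u) u := by
  have h1 := (K.hasDerivAt_prim_right ρ (K.k ρ + u)).comp u ((hasDerivAt_id u).const_add (K.k ρ))
  have h2 := (K.hasDerivAt_prim_right ρ (K.k ρ - u)).comp u ((hasDerivAt_id u).const_sub (K.k ρ))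
  refine (((h1.add h2).div_const 2).add_const (K.shift ρ)).congr_deriv ?_
  simp only [y]; ring

lemma hasDerivAt_J_right (ρ u : ℝ) : HasDerivAt (fun v => K.J ρ v) (ρ * K.c ρ * K.z ρ u) u := by
  have h1 := (K.hasDerivAt_prim_right ρ (K.k ρ + u)).comp u ((hasDerivAt_id u).const_add (K.k ρ))
  have h2 := (K.hasDerivAt_prim_right ρ (K.k ρ - u)).comp u ((hasDerivAt_id u).const_sub (K.k ρ))
  refine (((h1.sub h2).div_const 2).const_mul (ρ * K.c ρ)).congr_deriv ?_
  simp only [z]; ring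

lemma hasDerivAt_V_left {ρ : ℝ} (hρ : ρ ∈ Ioo l r) (u : ℝ) :
    HasDerivAt (fun s => K.V s u) (K.c ρ / ρ * K.z ρ u) ρ := by
  have h1 := K.hasPartials_prim.comp isOpen_Ioo (hasDerivAt_id ρ) ((K.hk' ρ hρ).add_const u) hρ
  have h2 := K.hasPartials_prim.comp isOpen_Ioo (hasDerivAt_id ρ) ((K.hk' ρ hρ).sub_const u) hρ
  refine (((h1.add h2).div_const 2).add (K.hasDerivAt_shift ρ)).congr_deriv ?_
  simp only [z, id]
  rw [show 2 * K.k ρ - (K.k ρ + u) = K.k ρ - u by ring,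
    show 2 * K.k ρ - (K.k ρ - u) = K.k ρ + u by ring]
  ring

lemma hasDerivAt_J_left {ρ : ℝ} (hρ : ρ ∈ Ioo l r) (u : ℝ) :
    HasDerivAt (fun s => K.J s u) (K.c ρ ^ 2 * K.y ρ u) ρ := by
  have h1 := K.hasPartials_prim.comp isOpen_Ioo (hasDerivAt_id ρ) ((K.hk' ρ hρ).add_const u) hρ
  have h2 := K.hasPartials_prim.comp isOpen_Ioo (hasDerivAt_id ρ) ((K.hk' ρ hρ).sub_const u) hρ
  refine ((K.hQ' ρ hρ).mul ((h1.sub h2).div_const 2)).congr_deriv ?_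
  have : ρ ≠ 0 := (K.hl.trans hρ.1).ne'
  simp only [y, id, Pi.sub_apply]
  rw [show 2 * K.k ρ - (K.k ρ + u) = K.k ρ - u by ring,
    show 2 * K.k ρ - (K.k ρ - u) = K.k ρ + u by ring]
  field_simp
  ring

lemma continuousOn_div_id {f : ℝ × ℝ → ℝ} (hf : Continuous f) (j : ℕ) (hl : 0 < l) :
    ContinuousOn (fun p : ℝ × ℝ => f p / p.1 ^ j) (Ioo l r ×ˢ univ) :=
  hf.continuousOn.div (by fun_prop) fun p hp => pow_ne_zero _ (hl.trans hp.1.1).ne'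

lemma hasPartials_V :
    HasPartials K.V (fun ρ u => K.c ρ / ρ * K.z ρ u) K.y (Ioo l r) := by
  refine ⟨fun ρ hρ u => K.hasDerivAt_V_left hρ u, fun ρ _ u => K.hasDerivAt_V_right ρ u, ?_,
    K.continuous_y.continuousOn⟩
  have hc := K.hc
  have := continuousOn_div_id (r := r) (f := fun p => K.c p.1 * K.z p.1 p.2)
    (Continuous.mul (by fun_prop) K.continuous_z) 1 K.hl
  refine this.congr fun p _ => ?_
  simp only [Function.uncurry_def, pow_one]; ring

lemma hasPartials_J :
    HasPartials K.J (fun ρ u => K.c ρ ^ 2 * K.y ρ u) (fun ρ u => ρ * K.c ρ * K.z ρ u)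
      (Ioo l r) := by
  have hc := K.hc
  refine ⟨fun ρ hρ u => K.hasDerivAt_J_left hρ u, fun ρ _ u => K.hasDerivAt_J_right ρ u,
    Continuous.continuousOn ?_, Continuous.continuousOn ?_⟩
  · exact Continuous.mul (by fun_prop) K.continuous_y
  · exact Continuous.mul (by fun_prop) K.continuous_z

lemma J_zero (ρ : ℝ) : K.J ρ 0 = 0 := by simp [J]

lemma A_neg_add (x : ℝ) : K.A l (-x) = -K.A l x := by
  rw [K.hAl, K.hAl, neg_div, clampUnit_neg]

lemma prim_left_even (x : ℝ) : K.prim l (-x) = K.prim l x := by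
  have h := intervalIntegral.integral_comp_neg (a := 0) (b := x) (fun v => K.A l v)
  simp only [K.A_neg_add, neg_zero, intervalIntegral.integral_neg] at h
  rw [prim, prim, intervalIntegral.integral_symm, ← h, neg_neg]

lemma J_left (u : ℝ) : K.J l u = 0 := by
  simp [J, K.hkl, K.prim_left_even]

lemma J_eq_integral {ρ : ℝ} (hρ : ρ ∈ Icc l r) (u : ℝ) :
    K.J ρ u = ∫ s in l..ρ, K.c s ^ 2 * K.y s u := by
  have hc := K.hc
  have hy := K.continuous_y
  have hJ := K.continuous_J
  rw [intervalIntegral.integral_eq_sub_of_hasDerivAt_of_le hρ.1 (f := fun s => K.J s u)]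
  · rw [K.J_left, sub_zero]
  · exact Continuous.continuousOn (hJ.comp (f := fun s => (s, u)) (by fun_prop))
  · exact fun s hs => K.hasDerivAt_J_left ⟨hs.1, hs.2.trans_le hρ.2⟩ u
  · exact Continuous.intervalIntegrable
      (Continuous.mul (by fun_prop) (hy.comp (f := fun s => (s, u)) (by fun_prop))) _ _

lemma hasDerivAt_F_left {ρ : ℝ} (hρ : ρ ∈ Ioo l r) (u : ℝ) :
    HasDerivAt (fun s => K.F s u) (K.J ρ u / ρ ^ 2) ρ := by
  have hp := K.hasPartials_V
  have h := hasDerivAt_intervalIntegral_param (f := K.V) isOpen_Ioo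
    (α := 0) (β := u) (fun ρ hρ u _ => hp.1 ρ hρ u) K.continuous_V.continuousOn
    (hp.2.2.1.mono (prod_mono_right (subset_univ _))) hρ
  refine h.congr_deriv ?_
  have hz : Continuous fun v => ρ * K.c ρ * K.z ρ v :=
    continuous_const.mul (K.continuous_z.comp (f := fun s => (ρ, s)) (by fun_prop))
  have e := intervalIntegral.integral_eq_sub_of_hasDerivAt (a := 0) (b := u)
    (fun v _ => K.hasDerivAt_J_right ρ v) (hz.intervalIntegrable _ _)
  rw [K.J_zero, sub_zero, intervalIntegral.integral_const_mul] at e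
  have : ρ ≠ 0 := (K.hl.trans hρ.1).ne'
  rw [intervalIntegral.integral_const_mul, ← e]
  field_simp

lemma hasDerivAt_F_right (ρ u : ℝ) : HasDerivAt (fun v => K.F ρ v) (K.V ρ u) u := by
  have h : Continuous (K.V ρ) := K.continuous_V.comp (f := fun s => (ρ, s)) (by fun_prop)
  exact intervalIntegral.integral_hasDerivAt_right (h.intervalIntegrable _ _)
    (h.stronglyMeasurableAtFilter _ _) h.continuousAt

lemma hasPartials_F :
    HasPartials K.F (fun ρ u => K.J ρ u / ρ ^ 2) K.V (Ioo l r) :=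
  ⟨fun _ hρ u => K.hasDerivAt_F_left hρ u, fun ρ _ u => K.hasDerivAt_F_right ρ u,
    continuousOn_div_id K.continuous_J 2 K.hl, K.continuous_V.continuousOn⟩

lemma continuous_F : Continuous (Function.uncurry K.F) := by
  have : Continuous fun p : ℝ × ℝ => ∫ v in (0)..p.2, K.V p.1 v :=
    intervalIntegral.continuous_parametric_intervalIntegral_of_continuous
      (f := fun (p : ℝ × ℝ) v => K.V p.1 v) (K.continuous_V_comp (by fun_prop) (by fun_prop))
      (by fun_prop)
  exact this

lemma continuous_H : Continuous (Function.uncurry K.H) := by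
  have hc := K.hc
  have : Continuous fun p : ℝ × ℝ => ∫ s in l..p.1, K.c s ^ 2 * K.V s p.2 :=
    intervalIntegral.continuous_parametric_intervalIntegral_of_continuous
      (f := fun (p : ℝ × ℝ) s => K.c s ^ 2 * K.V s p.2)
      (Continuous.mul (by fun_prop) (K.continuous_V_comp (by fun_prop) (by fun_prop))) (by fun_prop)
  exact this

lemma hasDerivAt_H_left (ρ u : ℝ) :
    HasDerivAt (fun s => K.H s u) (K.c ρ ^ 2 * K.V ρ u) ρ := by
  have hc := K.hc
  have h : Continuous fun s => K.c s ^ 2 * K.V s u :=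
    Continuous.mul (by fun_prop) (K.continuous_V.comp (f := fun s => (s, u)) (by fun_prop))
  exact intervalIntegral.integral_hasDerivAt_right (h.intervalIntegrable _ _)
    (h.stronglyMeasurableAtFilter _ _) h.continuousAt

lemma hasDerivAt_H_right {ρ : ℝ} (hρ : ρ ∈ Icc l r) (u : ℝ) :
    HasDerivAt (fun v => K.H ρ v) (K.J ρ u) u := by
  have hc := K.hc
  have h := hasDerivAt_intervalIntegral_param (f := fun v s => K.c s ^ 2 * K.V s v)
    (f₁ := fun v s => K.c s ^ 2 * K.y s v) (I := univ) isOpen_univ (α := l) (β := ρ)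
    (fun v _ s _ => (K.hasDerivAt_V_right s v).const_mul _)
    (Continuous.continuousOn (Continuous.mul (by fun_prop) (K.continuous_V.comp
        (f := fun q : ℝ × ℝ => (q.2, q.1)) (by fun_prop))))
    (Continuous.continuousOn (Continuous.mul (by fun_prop) (K.continuous_y.comp
        (f := fun q : ℝ × ℝ => (q.2, q.1)) (by fun_prop)))) (mem_univ u)
  exact h.congr_deriv (K.J_eq_integral hρ u).symm

lemma hasPartials_H :
    HasPartials K.H (fun ρ u => K.c ρ ^ 2 * K.V ρ u) K.J (Ioo l r) := by
  have hc := K.hc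
  exact ⟨fun ρ _ u => K.hasDerivAt_H_left ρ u,
    fun ρ hρ u => K.hasDerivAt_H_right ⟨hρ.1.le, hρ.2.le⟩ u,
    (Continuous.mul (by fun_prop) K.continuous_V).continuousOn, K.continuous_J.continuousOn⟩

/-- Pressure above the reference density `l`. -/
def press (ρ : ℝ) : ℝ := ∫ s in l..ρ, K.c s ^ 2

/-- Half-width of the velocity window in which the entropy differs from a cubic. -/
def width (ρ : ℝ) : ℝ := K.k ρ + σ

lemma k_mono {s ρ : ℝ} (hs : l ≤ s) (hsρ : s ≤ ρ) (hρ : ρ ≤ r) : K.k s ≤ K.k ρ := by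
  have : MonotoneOn K.k (Icc l r) := by
    refine monotoneOn_of_deriv_nonneg (convex_Icc l r) K.hk.continuousOn ?_ ?_
    · rw [interior_Icc]
      exact fun x hx => (K.hk' x hx).differentiableAt.differentiableWithinAt
    · rw [interior_Icc]
      intro x hx
      rw [(K.hk' x hx).deriv]
      exact div_nonneg (K.hc0 x).le (K.hl.trans hx.1).le
  exact this ⟨hs, hsρ.trans hρ⟩ ⟨hs.trans hsρ, hρ⟩ hsρ

lemma k_nonneg {ρ : ℝ} (hρ : ρ ∈ Icc l r) : 0 ≤ K.k ρ := by
  have := K.k_mono le_rfl hρ.1 hρ.2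
  rwa [K.hkl] at this

lemma width_mono {s ρ : ℝ} (hs : l ≤ s) (hsρ : s ≤ ρ) (hρ : ρ ≤ r) : K.width s ≤ K.width ρ :=
  add_le_add_left (K.k_mono hs hsρ hρ) σ

lemma le_width {ρ : ℝ} (hρ : ρ ∈ Icc l r) : σ ≤ K.width ρ := by
  have := K.k_nonneg hρ
  simp only [width]; linarith

lemma width_pos {ρ : ℝ} (hρ : ρ ∈ Icc l r) : 0 < K.width ρ := K.hσ.trans_le (K.le_width hρ)

lemma A_mem {ρ : ℝ} (hρ : ρ ∈ Icc l r) (x : ℝ) : -1 ≤ K.A ρ x ∧ K.A ρ x ≤ 1 := by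
  have a1 := K.hAm ρ hρ (min_le_left x (-σ))
  have a2 := K.hAm ρ hρ (le_max_left x (2 * K.k ρ + σ))
  rw [K.hAneg ρ hρ _ (min_le_right _ _)] at a1
  rw [K.hApos ρ hρ _ (le_max_right _ _)] at a2
  exact ⟨a1, a2⟩

lemma abs_y_le {ρ : ℝ} (hρ : ρ ∈ Icc l r) (u : ℝ) : |K.y ρ u| ≤ 1 := by
  have h1 := K.A_mem hρ (K.k ρ + u)
  have h2 := K.A_mem hρ (K.k ρ - u)
  rw [y, abs_le]; constructor <;> linarith

lemma abs_z_le {ρ : ℝ} (hρ : ρ ∈ Icc l r) (u : ℝ) : |K.z ρ u| ≤ 1 := by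
  have h1 := K.A_mem hρ (K.k ρ + u)
  have h2 := K.A_mem hρ (K.k ρ - u)
  rw [z, abs_le]; constructor <;> linarith

lemma y_mono {ρ : ℝ} (hρ : ρ ∈ Icc l r) : Monotone (K.y ρ) := fun u v h => by
  have h1 := K.hAm ρ hρ (show K.k ρ + u ≤ K.k ρ + v by linarith)
  have h2 := K.hAm ρ hρ (show K.k ρ - v ≤ K.k ρ - u by linarith)
  simp only [y]; linarith

lemma y_nonneg {ρ u : ℝ} (hρ : ρ ∈ Icc l r) (hu : 0 ≤ u) : 0 ≤ K.y ρ u := by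
  have := K.y_mono hρ hu
  simpa [y] using this

lemma y_of_ge {ρ u : ℝ} (hρ : ρ ∈ Icc l r) (hu : K.width ρ ≤ u) : K.y ρ u = 1 := by
  simp only [width] at hu
  rw [y, K.hApos ρ hρ _ (by linarith), K.hAneg ρ hρ _ (by linarith)]; norm_num

lemma z_of_ge {ρ u : ℝ} (hρ : ρ ∈ Icc l r) (hu : K.width ρ ≤ u) : K.z ρ u = 0 := by
  simp only [width] at hu
  rw [z, K.hApos ρ hρ _ (by linarith), K.hAneg ρ hρ _ (by linarith)]; norm_num

lemma V_neg (ρ u : ℝ) : K.V ρ (-u) = K.V ρ u := by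
  simp only [V, sub_neg_eq_add, ← sub_eq_add_neg]; ring

lemma J_neg (ρ u : ℝ) : K.J ρ (-u) = -K.J ρ u := by
  simp only [J, sub_neg_eq_add, ← sub_eq_add_neg]; ring

lemma F_neg (ρ u : ℝ) : K.F ρ (-u) = -K.F ρ u := by
  have h := intervalIntegral.integral_comp_neg (a := 0) (b := u) (fun v => K.V ρ v)
  simp only [K.V_neg, neg_zero] at h
  rw [F, F, h, intervalIntegral.integral_symm]

lemma H_neg (ρ u : ℝ) : K.H ρ (-u) = K.H ρ u := by simp only [H, K.V_neg]

lemma F_zero (ρ : ℝ) : K.F ρ 0 = 0 := by simp [F]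

lemma V_abs (ρ u : ℝ) : K.V ρ |u| = K.V ρ u := by
  rcases abs_cases u with h | h <;> rw [h.1]; rw [K.V_neg]

lemma H_abs (ρ u : ℝ) : K.H ρ |u| = K.H ρ u := by
  rcases abs_cases u with h | h <;> rw [h.1]; rw [K.H_neg]

lemma V_left (u : ℝ) : K.V l u = K.prim l u := by
  simp [V, K.hkl, shift, K.prim_left_even]

lemma V_left_of_ge {u : ℝ} (hu : σ ≤ u) : K.V l u = u - σ / 2 := by
  have hσ := K.hσ
  rw [V_left, prim, ← intervalIntegral.integral_add_adjacent_intervals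
    (K.intervalIntegrable_A l 0 σ) (K.intervalIntegrable_A l σ u)]
  have h1 : ∫ v in (0)..σ, K.A l v = ∫ v in (0)..σ, v / σ := by
    refine intervalIntegral.integral_congr fun v hv => ?_
    rw [uIcc_of_le hσ.le] at hv
    have h1 : v / σ ≤ 1 := (div_le_one hσ).2 hv.2
    have h0 : 0 ≤ v / σ := div_nonneg hv.1 hσ.le
    simp only [K.hAl, clampUnit]
    rw [min_eq_right h1, max_eq_right (by linarith)]
  have h2 : ∫ v in σ..u, K.A l v = ∫ v in σ..u, (1 : ℝ) := by
    refine intervalIntegral.integral_congr fun v hv => ?_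
    rw [uIcc_of_le hu] at hv
    simp only [K.hAl]
    rw [clampUnit_of_ge ((one_le_div hσ).2 hv.1)]
  rw [h1, h2, intervalIntegral.integral_div]
  simp
  field_simp
  ring

lemma V_of_ge {ρ u : ℝ} (hρ : ρ ∈ Icc l r) (hu : K.width ρ ≤ u) : K.V ρ u = u - σ / 2 := by
  have h := intervalIntegral.integral_eq_sub_of_hasDerivAt_of_le hρ.1 (f := fun s => K.V s u)
    (f' := fun _ => 0) (K.continuous_V_comp continuous_id continuous_const).continuousOn
    (fun s hs => by
      have hs' : s ∈ Icc l r := ⟨hs.1.le, hs.2.le.trans hρ.2⟩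
      have := K.hasDerivAt_V_left (ρ := s) ⟨hs.1, hs.2.trans_le hρ.2⟩ u
      rwa [K.z_of_ge hs' ((K.width_mono hs.1.le hs.2.le hρ.2).trans hu), mul_zero] at this)
    intervalIntegrable_const
  rw [intervalIntegral.integral_zero, K.V_left_of_ge ((K.le_width hρ).trans hu)] at h
  linarith

lemma sub_V_mono {ρ : ℝ} (hρ : ρ ∈ Icc l r) : Monotone fun v => v - K.V ρ v :=
  monotone_of_hasDerivAt_nonneg (fun v => (hasDerivAt_id v).sub (K.hasDerivAt_V_right ρ v))
    fun v => by
      have := (abs_le.1 (K.abs_y_le hρ v)).2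
      simp only [Pi.zero_apply]
      linarith

lemma V_mono {ρ u v : ℝ} (hρ : ρ ∈ Icc l r) (hu : 0 ≤ u) (huv : u ≤ v) : K.V ρ u ≤ K.V ρ v := by
  have : MonotoneOn (K.V ρ) (Ici 0) := by
    refine monotoneOn_of_deriv_nonneg (convex_Ici 0)
      (K.continuous_V_comp continuous_const continuous_id).continuousOn
      (fun x _ => (K.hasDerivAt_V_right ρ x).differentiableAt.differentiableWithinAt) ?_
    intro x hx
    rw [interior_Ici] at hx
    rw [show deriv (K.V ρ) x = _ from (K.hasDerivAt_V_right ρ x).deriv]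
    exact K.y_nonneg hρ (le_of_lt hx)
  exact this hu (hu.trans huv) huv

lemma V_ge {ρ : ℝ} (hρ : ρ ∈ Icc l r) (u : ℝ) : |u| - σ / 2 ≤ K.V ρ u := by
  have h := K.sub_V_mono hρ (le_max_left |u| (K.width ρ))
  simp only at h
  rw [K.V_of_ge hρ (le_max_right _ _), K.V_abs] at h
  linarith

lemma V_le {ρ : ℝ} (hρ : ρ ∈ Icc l r) (u : ℝ) : K.V ρ u ≤ |u| + K.width ρ := by
  have h := K.V_mono hρ (abs_nonneg u) (le_max_left |u| (K.width ρ))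
  rw [K.V_of_ge hρ (le_max_right _ _), K.V_abs] at h
  have h2 : max |u| (K.width ρ) ≤ |u| + K.width ρ :=
    max_le (by linarith [K.width_pos hρ]) (by linarith [abs_nonneg u])
  linarith [K.hσ]

lemma abs_V_le {ρ : ℝ} (hρ : ρ ∈ Icc l r) (u : ℝ) : |K.V ρ u| ≤ |u| + K.width ρ := by
  rw [abs_le]
  refine ⟨?_, K.V_le hρ u⟩
  linarith [K.V_ge hρ u, abs_nonneg u, K.le_width hρ, K.hσ]

lemma intervalIntegrable_V (ρ α β : ℝ) : IntervalIntegrable (K.V ρ) volume α β :=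
  (K.continuous_V_comp continuous_const continuous_id).intervalIntegrable _ _

lemma abs_F_le {ρ : ℝ} (hρ : ρ ∈ Icc l r) (u : ℝ) : |K.F ρ u| ≤ |u| * (|u| + K.width ρ) := by
  have h := intervalIntegral.norm_integral_le_of_norm_le_const (a := 0) (b := u)
    (f := K.V ρ) (C := |u| + K.width ρ) fun v hv => by
      have hv' := abs_sub_left_of_mem_uIcc (uIoc_subset_uIcc hv)
      rw [sub_zero, sub_zero] at hv'
      exact (K.abs_V_le hρ v).trans (by linarith)
  rw [sub_zero, Real.norm_eq_abs] at h
  rw [F, mul_comm]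
  exact h

lemma F_ge {ρ u : ℝ} (hρ : ρ ∈ Icc l r) (hu : 0 ≤ u) : u ^ 2 / 2 - σ / 2 * u ≤ K.F ρ u := by
  have h : ∫ v in (0)..u, (v - σ / 2) ≤ ∫ v in (0)..u, K.V ρ v := by
    refine intervalIntegral.integral_mono_on hu (Continuous.intervalIntegrable (by fun_prop) _ _)
      (K.intervalIntegrable_V _ _ _) fun v hv => ?_
    have := K.V_ge hρ v
    rwa [abs_of_nonneg hv.1] at this
  rw [intervalIntegral.integral_sub (Continuous.intervalIntegrable (by fun_prop) _ _)
    (Continuous.intervalIntegrable (by fun_prop) _ _)] at h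
  simp at h
  rw [F]; linarith

lemma mul_F_ge {ρ : ℝ} (hρ : ρ ∈ Icc l r) (u : ℝ) :
    |u| ^ 3 / 2 - σ / 2 * u ^ 2 ≤ u * K.F ρ u := by
  have key : ∀ v, 0 ≤ v → v ^ 3 / 2 - σ / 2 * v ^ 2 ≤ v * K.F ρ v := fun v hv => by
    have := mul_le_mul_of_nonneg_left (K.F_ge hρ hv) hv
    linarith
  have h := key |u| (abs_nonneg u)
  rw [sq_abs] at h
  refine h.trans_eq ?_
  rcases abs_cases u with h | h <;> rw [h.1]; rw [K.F_neg]; ring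

lemma F_le {ρ u : ℝ} (hρ : ρ ∈ Icc l r) (hu : 0 ≤ u) : K.F ρ u ≤ u * K.V ρ 0 + u ^ 2 / 2 := by
  have h : ∫ v in (0)..u, K.V ρ v ≤ ∫ v in (0)..u, (v + K.V ρ 0) := by
    refine intervalIntegral.integral_mono_on hu (K.intervalIntegrable_V _ _ _)
      (Continuous.intervalIntegrable (by fun_prop) _ _) fun v hv => ?_
    have := K.sub_V_mono hρ hv.1
    simp only at this
    linarith
  rw [intervalIntegral.integral_add (Continuous.intervalIntegrable (by fun_prop) _ _)
    (Continuous.intervalIntegrable (by fun_prop) _ _)] at h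
  simp at h
  rw [F]; linarith

lemma continuous_y_comp {X : Type*} [TopologicalSpace X] {f₁ f₂ : X → ℝ} (h₁ : Continuous f₁)
    (h₂ : Continuous f₂) : Continuous fun p => K.y (f₁ p) (f₂ p) :=
  K.continuous_y.comp (f := fun p => (f₁ p, f₂ p)) (by fun_prop)

lemma intervalIntegrable_y (u α β : ℝ) :
    IntervalIntegrable (fun s => K.c s ^ 2 * K.y s u) volume α β := by
  have hc := K.hc
  exact (Continuous.mul (by fun_prop)
    (K.continuous_y_comp continuous_id continuous_const)).intervalIntegrable _ _

lemma intervalIntegrable_cV (u α β : ℝ) :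
    IntervalIntegrable (fun s => K.c s ^ 2 * K.V s u) volume α β := by
  have hc := K.hc
  exact (Continuous.mul (by fun_prop)
    (K.continuous_V_comp continuous_id continuous_const)).intervalIntegrable _ _

lemma intervalIntegrable_c (α β : ℝ) : IntervalIntegrable (fun s => K.c s ^ 2) volume α β := by
  have hc := K.hc
  exact Continuous.intervalIntegrable (by fun_prop) _ _

lemma J_mono {ρ : ℝ} (hρ : ρ ∈ Icc l r) : Monotone (K.J ρ) := fun u v h => by
  rw [K.J_eq_integral hρ, K.J_eq_integral hρ]
  exact intervalIntegral.integral_mono_on hρ.1 (K.intervalIntegrable_y _ _ _)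
    (K.intervalIntegrable_y _ _ _) fun s hs =>
      mul_le_mul_of_nonneg_left (K.y_mono ⟨hs.1, hs.2.trans hρ.2⟩ h) (sq_nonneg _)

lemma J_of_ge {ρ u : ℝ} (hρ : ρ ∈ Icc l r) (hu : K.width ρ ≤ u) : K.J ρ u = K.press ρ := by
  rw [K.J_eq_integral hρ, press]
  refine intervalIntegral.integral_congr fun s hs => ?_
  rw [uIcc_of_le hρ.1] at hs
  rw [K.y_of_ge ⟨hs.1, hs.2.trans hρ.2⟩ ((K.width_mono hs.1 hs.2 hρ.2).trans hu), mul_one]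

lemma H_of_ge {ρ u : ℝ} (hρ : ρ ∈ Icc l r) (hu : K.width ρ ≤ u) :
    K.H ρ u = K.press ρ * (u - σ / 2) := by
  rw [H, press, ← intervalIntegral.integral_mul_const]
  refine intervalIntegral.integral_congr fun s hs => ?_
  rw [uIcc_of_le hρ.1] at hs
  rw [K.V_of_ge ⟨hs.1, hs.2.trans hρ.2⟩ ((K.width_mono hs.1 hs.2 hρ.2).trans hu)]

lemma press_nonneg {ρ : ℝ} (hρ : l ≤ ρ) : 0 ≤ K.press ρ :=
  intervalIntegral.integral_nonneg hρ fun _ _ => sq_nonneg _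

lemma H_mono {ρ u v : ℝ} (hρ : ρ ∈ Icc l r) (hu : 0 ≤ u) (huv : u ≤ v) : K.H ρ u ≤ K.H ρ v :=
  intervalIntegral.integral_mono_on hρ.1 (K.intervalIntegrable_cV _ _ _)
    (K.intervalIntegrable_cV _ _ _) fun _ hs =>
      mul_le_mul_of_nonneg_left (K.V_mono ⟨hs.1, hs.2.trans hρ.2⟩ hu huv) (sq_nonneg _)

lemma H_zero_le {ρ : ℝ} (hρ : ρ ∈ Icc l r) (u : ℝ) : K.H ρ 0 ≤ K.H ρ u := by
  rw [← K.H_abs ρ u]; exact K.H_mono hρ le_rfl (abs_nonneg u)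

lemma abs_H_zero_le {ρ : ℝ} (hρ : ρ ∈ Icc l r) : |K.H ρ 0| ≤ K.width ρ * K.press ρ := by
  rw [H, press, ← intervalIntegral.integral_const_mul]
  refine (intervalIntegral.abs_integral_le_integral_abs hρ.1).trans ?_
  refine intervalIntegral.integral_mono_on hρ.1 (K.intervalIntegrable_cV _ _ _).abs
    ((K.intervalIntegrable_c _ _).const_mul _) fun s hs => ?_
  have h := K.abs_V_le ⟨hs.1, hs.2.trans hρ.2⟩ 0
  rw [abs_zero, zero_add] at h
  rw [abs_mul, abs_of_nonneg (sq_nonneg _), mul_comm]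
  exact mul_le_mul_of_nonneg_right (h.trans (K.width_mono hs.1 hs.2 hρ.2)) (sq_nonneg _)

lemma mul_J_sub_H_le {ρ : ℝ} (hρ : ρ ∈ Icc l r) (u : ℝ) :
    u * K.J ρ u - K.H ρ u ≤ σ / 2 * K.press ρ := by
  have key : ∀ v, 0 ≤ v → v * K.J ρ v - K.H ρ v ≤ σ / 2 * K.press ρ := by
    intro v hv
    set U := max v (K.width ρ) with hU
    have hvU : v ≤ U := le_max_left _ _
    have hJU : K.J ρ U = K.press ρ := K.J_of_ge hρ (le_max_right _ _)
    have hHU : K.H ρ U = K.press ρ * (U - σ / 2) := K.H_of_ge hρ (le_max_right _ _)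
    have h1 : K.H ρ U - K.H ρ v ≤ (U - v) * K.J ρ U := by
      rcases hvU.eq_or_lt with e | e
      · rw [← e]; simp
      · obtain ⟨x, hx, hxe⟩ := exists_hasDerivAt_eq_slope (K.H ρ) (K.J ρ) e
          (fun x _ => (K.hasDerivAt_H_right hρ x).continuousAt.continuousWithinAt)
          fun x _ => K.hasDerivAt_H_right hρ x
        have h2 := K.J_mono hρ hx.2.le
        rw [hxe, div_le_iff₀ (by linarith)] at h2
        linarith
    have h2 := mul_le_mul_of_nonneg_left (K.J_mono hρ hvU) hv
    rw [hJU] at h1 h2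
    rw [hHU] at h1
    linarith
  have h := key |u| (abs_nonneg u)
  rw [K.H_abs] at h
  refine (le_of_eq ?_).trans h
  rcases abs_cases u with h | h <;> rw [h.1]; rw [K.J_neg]; ring

lemma continuous_press : Continuous K.press := by
  have hc : Continuous fun s => K.c s ^ 2 := K.hc.pow 2
  exact intervalIntegral.continuous_primitive (fun _ _ => hc.intervalIntegrable _ _) l

lemma intervalIntegrable_press_div {ρ : ℝ} (hρ : l ≤ ρ) :
    IntervalIntegrable (fun s => K.press s / s ^ 2) volume l ρ := by
  refine ContinuousOn.intervalIntegrable ?_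
  rw [uIcc_of_le hρ]
  exact K.continuous_press.continuousOn.div (by fun_prop) fun s hs =>
    pow_ne_zero _ (K.hl.trans_le hs.1).ne'

lemma width_mul_V_zero_ge {ρ : ℝ} (hρ : ρ ∈ Icc l r) :
    (∫ s in l..ρ, K.press s / s ^ 2) - σ / 2 * K.width ρ ≤ K.width ρ * K.V ρ 0 := by
  set U := K.width ρ with hU
  have hU0 : 0 ≤ U := (K.width_pos hρ).le
  have h := intervalIntegral.integral_eq_sub_of_hasDerivAt_of_le hρ.1 (f := fun s => K.F s U)
    (f' := fun s => K.press s / s ^ 2)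
    (K.continuous_F.comp (f := fun s => (s, U)) (by fun_prop)).continuousOn
    (fun s hs => by
      have hs' : s ∈ Icc l r := ⟨hs.1.le, hs.2.le.trans hρ.2⟩
      have := K.hasDerivAt_F_left (ρ := s) ⟨hs.1, hs.2.trans_le hρ.2⟩ U
      rwa [K.J_of_ge hs' (K.width_mono hs.1.le hs.2.le hρ.2)] at this)
    (K.intervalIntegrable_press_div hρ.1)
  have h1 := K.F_le hρ hU0
  have h2 := K.F_ge ⟨le_rfl, K.hlr.le⟩ hU0
  rw [h]
  linarith

end WaveKernel

/-- Derivative of the regularised pressure `θ² ρ^γ / γ + δ ρ²`, with `γ = 2θ + 1`. -/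
def pressDeriv (θ δ ρ : ℝ) : ℝ := θ ^ 2 * ρ ^ (2 * θ) + 2 * δ * ρ

lemma pressDeriv_pos {θ δ ρ : ℝ} (hθ : 0 < θ) (hδ : 0 < δ) (hρ : 0 < ρ) : 0 < pressDeriv θ δ ρ := by
  unfold pressDeriv; positivity

lemma hasDerivAt_pressDeriv {θ δ ρ : ℝ} (hρ : 0 < ρ) :
    HasDerivAt (pressDeriv θ δ) ((2 * θ ^ 3 * ρ ^ (2 * θ) + 2 * δ * ρ) / ρ) ρ := by
  have h := ((hasDerivAt_rpow_const (x := ρ) (p := 2 * θ) (Or.inl hρ.ne')).const_mul (θ ^ 2)).add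
    ((hasDerivAt_id ρ).const_mul (2 * δ))
  refine h.congr_deriv ?_
  rw [rpow_sub_one hρ.ne']
  field_simp

/-- The wave kernel of the regularised pressure law. -/
lemma exists_waveKernel {θ δ l r : ℝ} (hθ : 0 < θ) (hδ : 0 < δ) (hl : 0 < l) (hlr : l < r) :
    ∃ K : WaveKernel l r (l ^ θ + √(δ * l)), ∀ s, l ≤ s → K.c s = √(pressDeriv θ δ s) := by
  have hR : ∀ s, 0 < max l s := fun s => hl.trans_le (le_max_left _ _)
  have hRe : ∀ s, l ≤ s → max l s = s := fun s hs => max_eq_right hs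
  have hRc : Continuous fun s : ℝ => max l s := by fun_prop
  have hRp : Continuous fun s : ℝ => (max l s) ^ (2 * θ) :=
    hRc.rpow_const fun s => Or.inl (hR s).ne'
  have hP : Continuous fun s => pressDeriv θ δ (max l s) := by unfold pressDeriv; fun_prop
  have hP0 : ∀ s, 0 < pressDeriv θ δ (max l s) := fun s => pressDeriv_pos hθ hδ (hR s)
  set c : ℝ → ℝ := fun s => √(pressDeriv θ δ (max l s)) with hc
  have hcc : Continuous c := hP.sqrt
  have hc0 : ∀ s, 0 < c s := fun s => sqrt_pos.2 (hP0 s)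
  set g : ℝ → ℝ := fun s => (θ ^ 2 * (2 * θ + 2) * (max l s) ^ (2 * θ) + 6 * δ * max l s) /
    (4 * (max l s * pressDeriv θ δ (max l s))) with hg
  have hgc : Continuous g := by
    refine Continuous.div (by fun_prop) (by fun_prop) fun s => ?_
    have := hR s; have := hP0 s; positivity
  have hg0 : ∀ s, 0 ≤ g s := fun s => by
    have := hR s; have := hP0 s; simp only [hg]; positivity
  have hkc : Continuous fun s => c s / max l s := hcc.div hRc fun s => (hR s).ne'
  set k : ℝ → ℝ := fun ρ => ∫ s in l..ρ, c s / max l s with hk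
  have hkd : ∀ ρ, HasDerivAt k (c ρ / max l ρ) ρ := fun ρ =>
    intervalIntegral.integral_hasDerivAt_right (hkc.intervalIntegrable _ _)
    (hkc.stronglyMeasurableAtFilter _ _) hkc.continuousAt
  have hkcont : Continuous k := continuous_iff_continuousAt.2 fun s => (hkd s).continuousAt
  have hkl : k l = 0 := by simp [hk]
  have hkm : Monotone k := monotone_of_hasDerivAt_nonneg hkd fun s => by
    have := hR s; have := hc0 s
    simp only [Pi.zero_apply]; positivity
  have hσ : 0 < l ^ θ + √(δ * l) := by positivity
  obtain ⟨A, h1, h2, h3, h4, h5, h6⟩ := exists_reflected_relaxation hlr hσ hgc hg0 hkcont hkl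
    fun s ρ _ h => hkm h
  refine ⟨⟨c, g, k, A, hl, hlr, hσ, hcc, hc0, hgc, hkcont, hkl, fun ρ hρ => ?_, fun ρ hρ => ?_,
    h1, h2, h3, h4, h5, h6⟩, fun s hs => by simp only [hc, hRe s hs]⟩
  · have := hkd ρ
    rwa [hRe ρ hρ.1.le] at this
  · have hρ0 : 0 < ρ := hl.trans hρ.1
    have hPρ := pressDeriv_pos hθ hδ hρ0
    have ev : (fun s => s * c s) =ᶠ[nhds ρ] fun s => s * √(pressDeriv θ δ s) := by
      filter_upwards [Ioi_mem_nhds hρ.1] with s hs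
      simp only [hc, hRe s (le_of_lt hs)]
    have h := ((hasDerivAt_id ρ).mul ((hasDerivAt_pressDeriv (θ := θ) (δ := δ) hρ0).sqrt hPρ.ne'))
    refine (h.congr_of_eventuallyEq ev).congr_deriv ?_
    simp only [hg, hc, hRe ρ hρ.1.le, id]
    have hs0 := sqrt_pos.2 hPρ
    have hsq := sq_sqrt hPρ.le
    set q := √(pressDeriv θ δ ρ)
    rw [← hsq]
    field_simp
    rw [hsq, pressDeriv]
    ring

namespace WaveKernel

variable {l r θ δ σ : ℝ} (K : WaveKernel l r σ)

lemma hasDerivAt_rpow_add_sqrt {ρ : ℝ} (hρ : 0 < ρ) (hδ : 0 < δ) (j : ℝ) :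
    HasDerivAt (fun s => s ^ θ + j * √(δ * s)) ((θ * ρ ^ θ + j / 2 * √(δ * ρ)) / ρ) ρ := by
  have hδρ : 0 < δ * ρ := by positivity
  have h := (hasDerivAt_rpow_const (x := ρ) (p := θ) (Or.inl hρ.ne')).add
    ((((hasDerivAt_id ρ).const_mul δ).sqrt hδρ.ne').const_mul j)
  refine h.congr_deriv ?_
  rw [rpow_sub_one hρ.ne']
  have hs0 := sqrt_pos.2 hδρ
  have hsq := sq_sqrt hδρ.le
  simp only [id]
  set q := √(δ * ρ)
  field_simp
  linear_combination (-j) * hsq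

lemma rpow_two_mul_eq {ρ : ℝ} (hρ : 0 < ρ) : ρ ^ (2 * θ) = (ρ ^ θ) ^ 2 := by
  rw [mul_comm, rpow_mul hρ.le]; norm_cast

lemma width_le (hσ : σ = l ^ θ + √(δ * l)) (hθ : 0 < θ) (hδ : 0 < δ)
    (hc : ∀ s, l ≤ s → K.c s = √(pressDeriv θ δ s)) {ρ : ℝ} (hρ : ρ ∈ Icc l r) :
    K.width ρ ≤ ρ ^ θ + 3 * √(δ * ρ) := by
  have hmono : MonotoneOn (fun s => (s ^ θ + 3 * √(δ * s)) - K.k s) (Icc l r) := by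
    have hd : ∀ x, 0 < x → HasDerivAt (fun s => s ^ θ + 3 * √(δ * s)) _ x :=
      fun x hx => hasDerivAt_rpow_add_sqrt hx hδ 3
    refine monotoneOn_of_deriv_nonneg (convex_Icc l r) ?_ ?_ ?_
    · exact ContinuousOn.sub
        (fun x hx => (hd x (K.hl.trans_le hx.1)).continuousAt.continuousWithinAt)
        K.hk.continuousOn
    · rw [interior_Icc]
      exact fun x hx => ((hd x (K.hl.trans hx.1)).sub
        (K.hk' x hx)).differentiableAt.differentiableWithinAt
    · rw [interior_Icc]
      intro x hx
      have hx0 := K.hl.trans hx.1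
      rw [HasDerivAt.deriv (f := fun s => s ^ θ + 3 * √(δ * s) - K.k s)
        ((hd x hx0).sub (K.hk' x hx)), ← sub_div]
      refine div_nonneg ?_ hx0.le
      rw [hc x hx.1.le, sub_nonneg]
      refine Real.sqrt_le_iff.2 ⟨by positivity, ?_⟩
      have hsq := sq_sqrt (show 0 ≤ δ * x by positivity)
      rw [pressDeriv, rpow_two_mul_eq hx0]
      have : 0 ≤ θ * x ^ θ * √(δ * x) := by positivity
      nlinarith [mul_pos hδ hx0]
  have h := hmono ⟨le_rfl, K.hlr.le⟩ hρ hρ.1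
  simp only [K.hkl] at h
  have : 0 ≤ √(δ * l) := sqrt_nonneg _
  rw [width]; linarith

lemma rpow_le_width (hσ : σ = l ^ θ + √(δ * l)) (hδ : 0 < δ)
    (hc : ∀ s, l ≤ s → K.c s = √(pressDeriv θ δ s)) {ρ : ℝ} (hρ : ρ ∈ Icc l r) :
    ρ ^ θ ≤ K.width ρ := by
  have hmono : MonotoneOn (fun s => K.k s - (s ^ θ + 0 * √(δ * s))) (Icc l r) := by
    have hd : ∀ x, 0 < x → HasDerivAt (fun s => s ^ θ + 0 * √(δ * s)) _ x :=
      fun x hx => hasDerivAt_rpow_add_sqrt hx hδ 0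
    refine monotoneOn_of_deriv_nonneg (convex_Icc l r) ?_ ?_ ?_
    · exact ContinuousOn.sub K.hk.continuousOn
        (fun x hx => (hd x (K.hl.trans_le hx.1)).continuousAt.continuousWithinAt)
    · rw [interior_Icc]
      exact fun x hx => ((K.hk' x hx).sub
        (hd x (K.hl.trans hx.1))).differentiableAt.differentiableWithinAt
    · rw [interior_Icc]
      intro x hx
      have hx0 := K.hl.trans hx.1
      rw [HasDerivAt.deriv (f := fun s => K.k s - (s ^ θ + 0 * √(δ * s)))
        ((K.hk' x hx).sub (hd x hx0)), ← sub_div]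
      refine div_nonneg ?_ hx0.le
      rw [hc x hx.1.le, sub_nonneg]
      refine Real.le_sqrt_of_sq_le ?_
      rw [pressDeriv, rpow_two_mul_eq hx0]
      nlinarith [mul_pos hδ hx0]
  have h := hmono ⟨le_rfl, K.hlr.le⟩ hρ hρ.1
  simp only [K.hkl] at h
  have : 0 ≤ √(δ * l) := sqrt_nonneg _
  rw [width]; linarith

lemma width_sq_le (hσ : σ = l ^ θ + √(δ * l)) (hθ : 0 < θ) (hδ : 0 < δ)
    (hc : ∀ s, l ≤ s → K.c s = √(pressDeriv θ δ s)) {ρ : ℝ} (hρ : ρ ∈ Icc l r) :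
    K.width ρ ^ 2 ≤ 2 * ρ ^ (2 * θ) + 18 * (δ * ρ) := by
  have hρ0 := K.hl.trans_le hρ.1
  have h := K.width_le hσ hθ hδ hc hρ
  have h0 := K.width_pos hρ
  have hsq := sq_sqrt (show 0 ≤ δ * ρ by positivity)
  rw [rpow_two_mul_eq hρ0]
  nlinarith [sq_nonneg (ρ ^ θ - 3 * √(δ * ρ))]

lemma c_sq (hθ : 0 < θ) (hδ : 0 < δ) (hc : ∀ s, l ≤ s → K.c s = √(pressDeriv θ δ s)) {ρ : ℝ}
    (hρ : l ≤ ρ) : K.c ρ ^ 2 = pressDeriv θ δ ρ := by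
  rw [hc ρ hρ, sq_sqrt (pressDeriv_pos hθ hδ (K.hl.trans_le hρ)).le]

lemma press_eq (hθ : 0 < θ) (hδ : 0 < δ) (hc : ∀ s, l ≤ s → K.c s = √(pressDeriv θ δ s)) {ρ : ℝ}
    (hρ : l ≤ ρ) : K.press ρ = (θ ^ 2 / (2 * θ + 1) * ρ ^ (2 * θ + 1) + δ * ρ ^ 2) -
      (θ ^ 2 / (2 * θ + 1) * l ^ (2 * θ + 1) + δ * l ^ 2) := by
  have hd : ∀ s ∈ uIcc l ρ, HasDerivAt
      (fun s => θ ^ 2 / (2 * θ + 1) * s ^ (2 * θ + 1) + δ * s ^ 2) (K.c s ^ 2) s := by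
    intro s hs
    rw [uIcc_of_le hρ] at hs
    have hs0 := K.hl.trans_le hs.1
    have h := ((hasDerivAt_rpow_const (x := s) (p := 2 * θ + 1) (Or.inl hs0.ne')).const_mul
      (θ ^ 2 / (2 * θ + 1))).add ((hasDerivAt_pow 2 s).const_mul δ)
    refine h.congr_deriv ?_
    rw [K.c_sq hθ hδ hc hs.1, pressDeriv, add_sub_cancel_right]
    field_simp
    ring
  rw [press, intervalIntegral.integral_eq_sub_of_hasDerivAt hd (K.intervalIntegrable_c _ _)]

lemma press_le (hθ : 0 < θ) (hδ : 0 < δ) (hc : ∀ s, l ≤ s → K.c s = √(pressDeriv θ δ s)) {ρ : ℝ}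
    (hρ : l ≤ ρ) : K.press ρ ≤ (θ ^ 2 + 1) * (ρ ^ (2 * θ + 1) + δ * ρ ^ 2) := by
  rw [K.press_eq hθ hδ hc hρ]
  have hl := K.hl
  have hρ0 := hl.trans_le hρ
  have h1 : 0 ≤ θ ^ 2 / (2 * θ + 1) * l ^ (2 * θ + 1) + δ * l ^ 2 := by positivity
  have h2 : θ ^ 2 / (2 * θ + 1) ≤ θ ^ 2 := div_le_self (sq_nonneg θ) (by linarith)
  have h3 : 0 ≤ ρ ^ (2 * θ + 1) := by positivity
  have h4 : 0 ≤ δ * ρ ^ 2 := by positivity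
  nlinarith [mul_le_mul_of_nonneg_right h2 h3, mul_nonneg (sq_nonneg θ) h4]

lemma integral_press_div_ge (hθ : 0 < θ) (hδ : 0 < δ)
    (hc : ∀ s, l ≤ s → K.c s = √(pressDeriv θ δ s)) {ρ : ℝ} (hρ : l ≤ ρ) :
    θ / (2 * (2 * θ + 1)) * ρ ^ (2 * θ) + δ * ρ -
      (θ + θ ^ 2 + 2) * (l ^ θ + √(δ * l)) ^ 2 ≤ ∫ s in l..ρ, K.press s / s ^ 2 := by
  have hl := K.hl
  have hρ0 := hl.trans_le hρ
  set p₀ := θ ^ 2 / (2 * θ + 1) * l ^ (2 * θ + 1) + δ * l ^ 2 with hp₀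
  have hd : ∀ s ∈ uIcc l ρ, HasDerivAt
      (fun s => θ / (2 * (2 * θ + 1)) * s ^ (2 * θ) + δ * s + p₀ * s⁻¹) (K.press s / s ^ 2) s := by
    intro s hs
    rw [uIcc_of_le hρ] at hs
    have hs0 := K.hl.trans_le hs.1
    have h := (((hasDerivAt_rpow_const (x := s) (p := 2 * θ) (Or.inl hs0.ne')).const_mul
      (θ / (2 * (2 * θ + 1)))).add ((hasDerivAt_id s).const_mul δ)).add
      ((hasDerivAt_inv hs0.ne').const_mul p₀)
    refine h.congr_deriv ?_
    rw [K.press_eq hθ hδ hc hs.1, rpow_sub_one hs0.ne', rpow_add_one hs0.ne', ← hp₀]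
    field_simp
    ring
  rw [intervalIntegral.integral_eq_sub_of_hasDerivAt hd (K.intervalIntegrable_press_div hρ)]
  have h1 : 0 ≤ p₀ * ρ⁻¹ := by positivity
  have h2 : p₀ * l⁻¹ = θ ^ 2 / (2 * θ + 1) * l ^ (2 * θ) + δ * l := by
    rw [hp₀, rpow_add_one hl.ne']; field_simp
  have hsq := sq_sqrt (show 0 ≤ δ * l by positivity)
  have h3 : l ^ (2 * θ) + δ * l ≤ (l ^ θ + √(δ * l)) ^ 2 := by
    rw [rpow_two_mul_eq hl]
    have : 0 ≤ l ^ θ * √(δ * l) := by positivity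
    nlinarith
  have h4 : θ / (2 * (2 * θ + 1)) ≤ θ := div_le_self hθ.le (by linarith)
  have h5 : θ ^ 2 / (2 * θ + 1) ≤ θ ^ 2 := div_le_self (sq_nonneg θ) (by linarith)
  have h6 : 0 ≤ l ^ (2 * θ) := by positivity
  have h7 : 0 ≤ δ * l := by positivity
  have h8 := mul_le_mul_of_nonneg_right h4 h6
  have h9 := mul_le_mul_of_nonneg_right h5 h6
  have h10 := mul_le_mul_of_nonneg_left h3 (show 0 ≤ θ + θ ^ 2 + 2 by positivity)
  have h11 := mul_nonneg (show 0 ≤ θ + θ ^ 2 by positivity) h7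
  rw [h2]
  nlinarith

/-- Coercivity constant of the velocity potential at rest. -/
def coer (θ : ℝ) : ℝ := min (θ / (2 * (2 * θ + 1))) 1 / 18

lemma coer_pos (hθ : 0 < θ) : 0 < coer θ := by
  unfold coer; positivity

lemma V_zero_ge (hσ : σ = l ^ θ + √(δ * l)) (hθ : 0 < θ) (hδ : 0 < δ)
    (hc : ∀ s, l ≤ s → K.c s = √(pressDeriv θ δ s)) {ρ : ℝ} (hρ : ρ ∈ Icc l r) :
    coer θ * ρ ^ θ - (θ + θ ^ 2 + 3) * σ ≤ K.V ρ 0 := by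
  have hl := K.hl
  have hρ0 := hl.trans_le hρ.1
  have hσ0 : 0 < σ := K.hσ
  have hw := K.width_pos hρ
  have h1 := K.width_mul_V_zero_ge hρ
  have h2 := K.integral_press_div_ge hθ hδ hc hρ.1
  rw [← hσ] at h2
  have h3 := K.width_sq_le hσ hθ hδ hc hρ
  have h4 := K.rpow_le_width hσ hδ hc hρ
  have h5 := K.le_width hρ
  have hc0 := coer_pos hθ
  have hA : 18 * coer θ ≤ θ / (2 * (2 * θ + 1)) := by
    have := min_le_left (θ / (2 * (2 * θ + 1))) 1
    unfold coer; linarith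
  have hB : 18 * coer θ ≤ 1 := by
    have := min_le_right (θ / (2 * (2 * θ + 1))) 1
    unfold coer; linarith
  have h6 := mul_le_mul_of_nonneg_right hA (show 0 ≤ ρ ^ (2 * θ) by positivity)
  have h7 := mul_le_mul_of_nonneg_right hB (show 0 ≤ δ * ρ by positivity)
  have h8 := mul_le_mul_of_nonneg_left h3 hc0.le
  have h6' : 0 ≤ coer θ * ρ ^ (2 * θ) := by positivity
  have h9 : σ ^ 2 ≤ σ * K.width ρ := by nlinarith
  have h10 := mul_le_mul_of_nonneg_left h9 (show 0 ≤ θ + θ ^ 2 + 2 by positivity)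
  have h11 : K.width ρ * (coer θ * K.width ρ - (θ + θ ^ 2 + 3) * σ) ≤ K.width ρ * K.V ρ 0 := by
    nlinarith [mul_pos hσ0 hw]
  have h12 := le_of_mul_le_mul_left h11 hw
  have h13 := mul_le_mul_of_nonneg_left h4 hc0.le
  linarith

lemma H_zero_ge (hσ : σ = l ^ θ + √(δ * l)) (hθ : 0 < θ) (hδ : 0 < δ)
    (hc : ∀ s, l ≤ s → K.c s = √(pressDeriv θ δ s)) {ρ : ℝ} (hρ : ρ ∈ Icc l r) :
    coer θ * θ ^ 2 / (3 * θ + 1) * ρ ^ (3 * θ + 1) - coer θ * θ ^ 2 * l ^ (3 * θ + 1)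
      - (θ + θ ^ 2 + 3) * σ * K.press ρ ≤ K.H ρ 0 := by
  have hl := K.hl
  have hρ0 := hl.trans_le hρ.1
  have hc0 := coer_pos hθ
  have hcont : ContinuousOn (fun s : ℝ => coer θ * θ ^ 2 * s ^ (3 * θ)) (uIcc l ρ) := by
    rw [uIcc_of_le hρ.1]
    exact continuousOn_const.mul (continuousOn_id.rpow_const fun s hs =>
      Or.inl (hl.trans_le hs.1).ne')
  have hcI := K.intervalIntegrable_c l ρ
  have h : ∫ s in l..ρ, (coer θ * θ ^ 2 * s ^ (3 * θ) - (θ + θ ^ 2 + 3) * σ * K.c s ^ 2) ≤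
      ∫ s in l..ρ, K.c s ^ 2 * K.V s 0 := by
    refine intervalIntegral.integral_mono_on hρ.1 (hcont.intervalIntegrable.sub (hcI.const_mul _))
      (K.intervalIntegrable_cV _ _ _) fun s hs => ?_
    have hs0 := hl.trans_le hs.1
    have h1 := K.V_zero_ge hσ hθ hδ hc ⟨hs.1, hs.2.trans hρ.2⟩
    have h2 := mul_le_mul_of_nonneg_left h1 (sq_nonneg (K.c s))
    have h3 : θ ^ 2 * s ^ (2 * θ) ≤ K.c s ^ 2 := by
      rw [K.c_sq hθ hδ hc hs.1, pressDeriv]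
      have : 0 ≤ 2 * δ * s := by positivity
      linarith
    have h4 := mul_le_mul_of_nonneg_right h3 (show 0 ≤ coer θ * s ^ θ by positivity)
    have h5 : s ^ (3 * θ) = s ^ (2 * θ) * s ^ θ := by rw [← rpow_add hs0]; ring_nf
    rw [h5]
    linarith
  rw [intervalIntegral.integral_sub hcont.intervalIntegrable (hcI.const_mul _),
    intervalIntegral.integral_const_mul, intervalIntegral.integral_const_mul,
    integral_rpow (Or.inl (by linarith))] at h
  have e1 : coer θ * θ ^ 2 * ((ρ ^ (3 * θ + 1) - l ^ (3 * θ + 1)) / (3 * θ + 1)) =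
      coer θ * θ ^ 2 / (3 * θ + 1) * ρ ^ (3 * θ + 1) -
      coer θ * θ ^ 2 / (3 * θ + 1) * l ^ (3 * θ + 1) := by ring
  have e2 : coer θ * θ ^ 2 / (3 * θ + 1) ≤ coer θ * θ ^ 2 :=
    div_le_self (by positivity) (by linarith)
  have e3 := mul_le_mul_of_nonneg_right e2 (show 0 ≤ l ^ (3 * θ + 1) by positivity)
  rw [H, press]
  linarith

end WaveKernel

/-- An entropy `ρ F`, with flux `u ρ F + H`, for sound speed `c` and densities in `I`, together
with the auxiliary functions describing its first and second derivatives. -/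
structure EntropyFlux (I : Set ℝ) where
  c : ℝ → ℝ
  F : ℝ → ℝ → ℝ
  V : ℝ → ℝ → ℝ
  J : ℝ → ℝ → ℝ
  H : ℝ → ℝ → ℝ
  y : ℝ → ℝ → ℝ
  z : ℝ → ℝ → ℝ
  hc : Continuous c
  cF : Continuous (Function.uncurry F)
  cV : Continuous (Function.uncurry V)
  cJ : Continuous (Function.uncurry J)
  cH : Continuous (Function.uncurry H)
  cy : Continuous (Function.uncurry y)
  cz : Continuous (Function.uncurry z)
  hF : HasPartials F (fun ρ u => J ρ u / ρ ^ 2) V I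
  hV : HasPartials V (fun ρ u => c ρ / ρ * z ρ u) y I
  hJ : HasPartials J (fun ρ u => c ρ ^ 2 * y ρ u) (fun ρ u => ρ * c ρ * z ρ u) I
  hH : HasPartials H (fun ρ u => c ρ ^ 2 * V ρ u) J I

/-- The entropy flux of a wave kernel, normalised by subtracting `c₀` times the momentum. -/
def WaveKernel.toEntropyFlux {l r σ : ℝ} (K : WaveKernel l r σ) (c₀ : ℝ) :
    EntropyFlux (Ioo l r) where
  c := K.c
  F ρ u := K.F ρ u - c₀ * u
  V ρ u := K.V ρ u - c₀
  J := K.J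
  H ρ u := K.H ρ u - c₀ * K.press ρ
  y := K.y
  z := K.z
  hc := K.hc
  cF := K.continuous_F.sub (by fun_prop)
  cV := K.continuous_V.sub (by fun_prop)
  cJ := K.continuous_J
  cH := K.continuous_H.sub (by have := K.continuous_press; fun_prop)
  cy := K.continuous_y
  cz := K.continuous_z
  hF := by
    obtain ⟨h1, h2, h3, -⟩ := K.hasPartials_F
    refine ⟨fun ρ hρ u => (h1 ρ hρ u).sub_const _, fun ρ hρ u => ?_, h3,
      (K.continuous_V.sub (by fun_prop)).continuousOn⟩
    exact ((h2 ρ hρ u).sub ((hasDerivAt_id u).const_mul c₀)).congr_deriv (by simp)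
  hV := by
    obtain ⟨h1, h2, h3, h4⟩ := K.hasPartials_V
    exact ⟨fun ρ hρ u => (h1 ρ hρ u).sub_const _, fun ρ hρ u => (h2 ρ hρ u).sub_const _, h3, h4⟩
  hJ := K.hasPartials_J
  hH := by
    obtain ⟨h1, h2, -, h4⟩ := K.hasPartials_H
    have hc := K.hc
    have hp : ∀ ρ, HasDerivAt K.press (K.c ρ ^ 2) ρ := fun ρ =>
      intervalIntegral.integral_hasDerivAt_right (K.intervalIntegrable_c _ _)
        ((hc.pow 2).stronglyMeasurableAtFilter _ _) (hc.pow 2).continuousAt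
    refine ⟨fun ρ hρ u => ?_, fun ρ hρ u => (h2 ρ hρ u).sub_const _,
      (Continuous.mul (by fun_prop) (K.continuous_V.sub (by fun_prop))).continuousOn, h4⟩
    exact ((h1 ρ hρ u).sub ((hp ρ).const_mul c₀)).congr_deriv (by ring)

/-- The energy density controlling the error terms. -/
def energyDensity (θ δ ρbar ρ u : ℝ) : ℝ :=
  ρ * u ^ 2 + ρ ^ (2 * θ + 1) + δ * ρ ^ 2 + ρbar ^ (2 * θ + 1) + δ * ρbar ^ 2

lemma mul_rpow_le_add_rpow {x y θ : ℝ} (hx : 0 < x) (hy : 0 < y) (hθ : 0 < θ) :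
    x * y ^ (2 * θ) ≤ x ^ (2 * θ + 1) + y ^ (2 * θ + 1) := by
  rw [rpow_add_one hx.ne', rpow_add_one hy.ne']
  rcases le_total x y with h | h
  · have h1 : x * y ^ (2 * θ) ≤ y * y ^ (2 * θ) := by gcongr
    have h2 : 0 ≤ x ^ (2 * θ) * x := by positivity
    linarith
  · have h1 : y ^ (2 * θ) ≤ x ^ (2 * θ) := by gcongr
    have h2 : 0 ≤ y ^ (2 * θ) * y := by positivity
    nlinarith

/-- Existence of an entropy with cubic growth for the regularised pressure, with bounds that do
not depend on the regularisation. -/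
theorem exists_entropyFlux {θ : ℝ} (hθ : 0 < θ) (M₀ : ℝ) :
    ∃ c₀ C : ℝ, 0 < c₀ ∧ 0 < C ∧ ∀ δ l r ρbar : ℝ, 0 < δ → δ ≤ M₀ → 0 < l → l ≤ 1 → l < ρbar →
      ρbar < r → ρbar ≤ 1 → ∃ Φ : EntropyFlux (Ioo l r),
        (∀ ρ ∈ Ioo l r, Φ.c ρ ^ 2 = pressDeriv θ δ ρ) ∧ (∀ ρ, Φ.F ρ 0 = 0) ∧ (∀ ρ, Φ.J ρ 0 = 0) ∧
        Φ.V ρbar 0 = 0 ∧ |Φ.H ρbar 0| ≤ C * (ρbar ^ (2 * θ + 1) + δ * ρbar ^ 2) ∧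
        ∀ ρ ∈ Ioo l r, ∀ u, |Φ.y ρ u| ≤ 1 ∧ |Φ.z ρ u| ≤ 1 ∧
          |ρ * Φ.F ρ u| ≤ C * energyDensity θ δ ρbar ρ u ∧
          |u * ρ * Φ.V ρ u| ≤ C * energyDensity θ δ ρbar ρ u ∧
          u * Φ.J ρ u - Φ.H ρ u ≤ C * energyDensity θ δ ρbar ρ u ∧
          c₀ * (ρ * |u| ^ 3 + ρ ^ (3 * θ + 1)) - C * energyDensity θ δ ρbar ρ u ≤
            u * ρ * Φ.F ρ u + Φ.H ρ u := by
  set N : ℝ := 1 + 3 * √M₀ with hN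
  have hN1 : 1 ≤ N := by have := sqrt_nonneg M₀; rw [hN]; linarith
  set D : ℝ := WaveKernel.coer θ * θ ^ 2 with hD
  have hD0 : 0 < D := by have := WaveKernel.coer_pos hθ; positivity
  set B : ℝ := (θ + θ ^ 2 + 4) * N * (θ ^ 2 + 1) with hB
  have hB0 : 0 < B := by positivity
  refine ⟨min (1 / 2) (D / (3 * θ + 1)), 20 + D + 2 * N + 2 * B, by positivity, by positivity, ?_⟩
  intro δ l r ρbar hδ hδM hl hl1 hlb hbr hb1
  obtain ⟨σ, hσ, K, hKc⟩ : ∃ σ, ∃ _ : σ = l ^ θ + √(δ * l), ∃ K : WaveKernel l r σ,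
      ∀ s, l ≤ s → K.c s = √(pressDeriv θ δ s) :=
    ⟨_, rfl, exists_waveKernel hθ hδ hl (hlb.trans hbr)⟩
  have hbm : ρbar ∈ Icc l r := ⟨hlb.le, hbr.le⟩
  have hb0 : 0 < ρbar := hl.trans hlb
  have hbound : ∀ x, 0 < x → x ≤ 1 → x ^ θ + 3 * √(δ * x) ≤ N := fun x hx hx1 => by
    have h1 : x ^ θ ≤ 1 := rpow_le_one hx.le hx1 hθ.le
    have h2 : √(δ * x) ≤ √M₀ := sqrt_le_sqrt (by nlinarith)
    rw [hN]; linarith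
  have hσN : σ ≤ N := by
    have h1 := hbound l hl hl1
    have h2 := sqrt_nonneg (δ * l)
    rw [hσ]; linarith
  have hσ0 : 0 < σ := K.hσ
  have hwN : K.width ρbar ≤ N := (K.width_le hσ hθ hδ hKc hbm).trans (hbound _ hb0 hb1)
  have hw0 := K.width_pos hbm
  obtain ⟨e, he⟩ : ∃ e, e = K.V ρbar 0 := ⟨_, rfl⟩
  have hew : |e| ≤ K.width ρbar := by
    have := K.abs_V_le hbm 0
    rwa [abs_zero, zero_add, ← he] at this
  have heN : |e| ≤ N := hew.trans hwN
  have he2 : e ^ 2 ≤ 2 * ρbar ^ (2 * θ) + 18 * (δ * ρbar) := by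
    have h1 := K.width_sq_le hσ hθ hδ hKc hbm
    have h2 : |e| ^ 2 ≤ K.width ρbar ^ 2 := by gcongr
    rw [sq_abs] at h2
    linarith
  refine ⟨K.toEntropyFlux e, fun ρ hρ => K.c_sq hθ hδ hKc hρ.1.le, fun ρ => ?_, K.J_zero, ?_, ?_,
    fun ρ hρ u => ?_⟩
  · simp [WaveKernel.toEntropyFlux, K.F_zero]
  · simp [WaveKernel.toEntropyFlux, he]
  · change |K.H ρbar 0 - e * K.press ρbar| ≤ _
    have h1 := K.abs_H_zero_le hbm
    have h2 := K.press_le hθ hδ hKc hbm.1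
    have h3 := K.press_nonneg hbm.1
    have h4 : |e * K.press ρbar| ≤ N * K.press ρbar := by
      rw [abs_mul, abs_of_nonneg h3]; gcongr
    have h5 : K.width ρbar * K.press ρbar ≤ N * K.press ρbar := by gcongr
    have h6 := mul_le_mul_of_nonneg_left h2 (show 0 ≤ 2 * N by positivity)
    have h7 : 0 ≤ ρbar ^ (2 * θ + 1) + δ * ρbar ^ 2 := by positivity
    have h8 : 2 * N * (θ ^ 2 + 1) ≤ 20 + D + 2 * N + 2 * B := by
      have : N * (θ ^ 2 + 1) ≤ B := by
        rw [hB]; nlinarith [show 0 ≤ (θ + θ ^ 2 + 3) * (N * (θ ^ 2 + 1)) by positivity]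
      linarith
    have h9 := mul_le_mul_of_nonneg_right h8 h7
    linarith [abs_sub (K.H ρbar 0) (e * K.press ρbar)]
  · have hm : ρ ∈ Icc l r := ⟨hρ.1.le, hρ.2.le⟩
    have hρ0 : 0 < ρ := hl.trans hρ.1
    have hE : energyDensity θ δ ρbar ρ u = ρ * u ^ 2 + ρ ^ (2 * θ + 1) + δ * ρ ^ 2
      + ρbar ^ (2 * θ + 1) + δ * ρbar ^ 2 := rfl
    have hg : 0 < ρ ^ (2 * θ + 1) := by positivity
    have hgb : 0 < ρbar ^ (2 * θ + 1) := by positivity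
    have hd : 0 ≤ δ * ρ ^ 2 := by positivity
    have hdb : 0 ≤ δ * ρbar ^ 2 := by positivity
    have hx : 0 ≤ ρ * u ^ 2 := by positivity
    have hpr := K.press_le hθ hδ hKc hm.1
    have hpr0 := K.press_nonneg hm.1
    have hw := K.width_pos hm
    have hw2 : ρ * K.width ρ ^ 2 ≤ 2 * ρ ^ (2 * θ + 1) + 18 * (δ * ρ ^ 2) := by
      have := mul_le_mul_of_nonneg_left (K.width_sq_le hσ hθ hδ hKc hm) hρ0.le
      rw [rpow_add_one hρ0.ne']; linarith
    have heρ : ρ * e ^ 2 ≤ 2 * (ρ ^ (2 * θ + 1) + ρbar ^ (2 * θ + 1))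
        + 9 * (δ * ρ ^ 2 + δ * ρbar ^ 2) := by
      have h1 := mul_le_mul_of_nonneg_left he2 hρ0.le
      have h2 := mul_rpow_le_add_rpow hρ0 hb0 hθ
      have h3 := mul_nonneg hδ.le (sq_nonneg (ρ - ρbar))
      linarith
    have hmix : ρ * |u| * (|u| + K.width ρ) + ρ * |u| * |e| ≤ 20 * energyDensity θ δ ρbar ρ u := by
      have h1 := mul_nonneg hρ0.le (sq_nonneg (|u| - K.width ρ))
      have h2 := mul_nonneg hρ0.le (sq_nonneg (|u| - |e|))
      have h3 := sq_abs u
      have h4 := sq_abs e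
      have h5 : ρ * |u| ^ 2 = ρ * u ^ 2 := by rw [h3]
      have h6 : ρ * |e| ^ 2 = ρ * e ^ 2 := by rw [h4]
      rw [hE]
      linarith
    have hE0 : 0 ≤ energyDensity θ δ ρbar ρ u := by rw [hE]; positivity
    have hC20 : 20 * energyDensity θ δ ρbar ρ u ≤
        (20 + D + 2 * N + 2 * B) * energyDensity θ δ ρbar ρ u := by
      gcongr; linarith
    have hprE : K.press ρ ≤ (θ ^ 2 + 1) * (ρ ^ (2 * θ + 1) + δ * ρ ^ 2) := hpr
    have heP : |e| * K.press ρ ≤ N * K.press ρ := by gcongr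
    have hBP : (θ + θ ^ 2 + 4) * N * K.press ρ ≤ B * (ρ ^ (2 * θ + 1) + δ * ρ ^ 2) := by
      have := mul_le_mul_of_nonneg_left hpr (show 0 ≤ (θ + θ ^ 2 + 4) * N by positivity)
      rw [hB]; linarith
    have hNP : 0 ≤ N * K.press ρ := by positivity
    have hθP : 0 ≤ (θ + θ ^ 2) * (N * K.press ρ) := by positivity
    refine ⟨K.abs_y_le hm u, K.abs_z_le hm u, ?_, ?_, ?_, ?_⟩
    · change |ρ * (K.F ρ u - e * u)| ≤ _
      refine le_trans ?_ (hmix.trans hC20)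
      have h1 : |K.F ρ u - e * u| ≤ |u| * (|u| + K.width ρ) + |e| * |u| := by
        rw [← abs_mul]
        exact (abs_sub _ _).trans (add_le_add_left (K.abs_F_le hm u) _)
      rw [abs_mul, abs_of_pos hρ0]
      have := mul_le_mul_of_nonneg_left h1 hρ0.le
      linarith
    · change |u * ρ * (K.V ρ u - e)| ≤ _
      refine le_trans ?_ (hmix.trans hC20)
      have h1 : |K.V ρ u - e| ≤ |u| + K.width ρ + |e| :=
        (abs_sub _ _).trans (add_le_add_left (K.abs_V_le hm u) _)
      rw [abs_mul, abs_mul, abs_of_pos hρ0]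
      have := mul_le_mul_of_nonneg_left h1 (show 0 ≤ |u| * ρ by positivity)
      linarith
    · change u * K.J ρ u - (K.H ρ u - e * K.press ρ) ≤ _
      have h1 := K.mul_J_sub_H_le hm u
      have h2 : e * K.press ρ ≤ |e| * K.press ρ := by gcongr; exact le_abs_self e
      have h3 : σ / 2 * K.press ρ ≤ N * K.press ρ := by gcongr; linarith
      have h4 : B * (ρ ^ (2 * θ + 1) + δ * ρ ^ 2) ≤
          (20 + D + 2 * N + 2 * B) * energyDensity θ δ ρbar ρ u := by
        gcongr
        · linarith
        · rw [hE]; linarith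
      linarith
    · change _ ≤ u * ρ * (K.F ρ u - e * u) + (K.H ρ u - e * K.press ρ)
      have h1 := mul_le_mul_of_nonneg_left (K.mul_F_ge hm u) hρ0.le
      have h2 := (K.H_zero_ge hσ hθ hδ hKc hm).trans (K.H_zero_le hm u)
      rw [← hD] at h2
      have h3 : e * K.press ρ ≤ |e| * K.press ρ := by gcongr; exact le_abs_self e
      have h4 : e * (ρ * u ^ 2) ≤ N * (ρ * u ^ 2) := by
        gcongr; exact (le_abs_self e).trans heN
      have h5 : σ * (ρ * u ^ 2) ≤ N * (ρ * u ^ 2) := by gcongr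
      have h6 : (θ + θ ^ 2 + 3) * σ * K.press ρ ≤ (θ + θ ^ 2 + 3) * N * K.press ρ := by gcongr
      have h7 : l ^ (3 * θ + 1) ≤ ρ ^ (2 * θ + 1) :=
        (rpow_le_rpow_of_exponent_ge hl hl1 (by linarith)).trans
          (rpow_le_rpow hl.le hm.1 (by linarith))
      have h8 := mul_le_mul_of_nonneg_left h7 hD0.le
      have h9 : min (1 / 2) (D / (3 * θ + 1)) * (ρ * |u| ^ 3) ≤ 1 / 2 * (ρ * |u| ^ 3) := by
        gcongr; exact min_le_left _ _
      have h10 : min (1 / 2) (D / (3 * θ + 1)) * ρ ^ (3 * θ + 1) ≤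
          D / (3 * θ + 1) * ρ ^ (3 * θ + 1) := by
        gcongr; exact min_le_right _ _
      have h11 : 2 * N * (ρ * u ^ 2) + D * ρ ^ (2 * θ + 1) + B * (ρ ^ (2 * θ + 1) + δ * ρ ^ 2) ≤
          (20 + D + 2 * N + 2 * B) * energyDensity θ δ ρbar ρ u := by
        have a1 : 2 * N * (ρ * u ^ 2) ≤ 2 * N * energyDensity θ δ ρbar ρ u := by
          gcongr; rw [hE]; linarith
        have a2 : D * ρ ^ (2 * θ + 1) ≤ D * energyDensity θ δ ρbar ρ u := by
          gcongr; rw [hE]; linarith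
        have a3 : B * (ρ ^ (2 * θ + 1) + δ * ρ ^ 2) ≤ B * energyDensity θ δ ρbar ρ u := by
          gcongr; rw [hE]; linarith
        have a4 : 0 ≤ B * energyDensity θ δ ρbar ρ u := by positivity
        linarith
      have h12 : 0 ≤ N * (ρ * u ^ 2) := by positivity
      linarith

/-- Partial derivative in time. -/
def partialT (f : ℝ → ℝ → ℝ) (t r : ℝ) : ℝ := deriv (fun s => f s r) t

/-- Partial derivative in the radius. -/
def partialR (f : ℝ → ℝ → ℝ) (t r : ℝ) : ℝ := deriv (fun y => f t y) r

lemma hasDerivAt_fderiv_left {f : ℝ → ℝ → ℝ} (hf : ContDiff ℝ (⊤ : ℕ∞) (Function.uncurry f))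
    (t r : ℝ) : HasDerivAt (fun s => f s r) (fderiv ℝ (Function.uncurry f) (t, r) (1, 0)) t :=
  ((hf.differentiable (by simp)).differentiableAt (x := (t, r))).hasFDerivAt.comp_hasDerivAt
    (f := fun s => (s, r)) t ((hasDerivAt_id t).prodMk (hasDerivAt_const t r))

lemma hasDerivAt_fderiv_right {f : ℝ → ℝ → ℝ} (hf : ContDiff ℝ (⊤ : ℕ∞) (Function.uncurry f))
    (t r : ℝ) : HasDerivAt (fun y => f t y) (fderiv ℝ (Function.uncurry f) (t, r) (0, 1)) r :=
  ((hf.differentiable (by simp)).differentiableAt (x := (t, r))).hasFDerivAt.comp_hasDerivAt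
    (f := fun y => (t, y)) r ((hasDerivAt_const r t).prodMk (hasDerivAt_id r))

lemma hasDerivAt_partialT {f : ℝ → ℝ → ℝ} (hf : ContDiff ℝ (⊤ : ℕ∞) (Function.uncurry f))
    (t r : ℝ) : HasDerivAt (fun s => f s r) (partialT f t r) t :=
  (hasDerivAt_fderiv_left hf t r).differentiableAt.hasDerivAt

lemma hasDerivAt_partialR {f : ℝ → ℝ → ℝ} (hf : ContDiff ℝ (⊤ : ℕ∞) (Function.uncurry f))
    (t r : ℝ) : HasDerivAt (fun y => f t y) (partialR f t r) r :=
  (hasDerivAt_fderiv_right hf t r).differentiableAt.hasDerivAt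

lemma contDiff_partialT {f : ℝ → ℝ → ℝ} (hf : ContDiff ℝ (⊤ : ℕ∞) (Function.uncurry f)) :
    ContDiff ℝ (⊤ : ℕ∞) (Function.uncurry (partialT f)) := by
  have h : Function.uncurry (partialT f) =
      fun p => fderiv ℝ (Function.uncurry f) p ((1, 0) : ℝ × ℝ) := by
    ext ⟨t, r⟩
    exact (hasDerivAt_fderiv_left hf t r).deriv
  rw [h]
  exact (hf.fderiv_right (m := (⊤ : ℕ∞)) (by simp)).clm_apply contDiff_const

lemma contDiff_partialR {f : ℝ → ℝ → ℝ} (hf : ContDiff ℝ (⊤ : ℕ∞) (Function.uncurry f)) :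
    ContDiff ℝ (⊤ : ℕ∞) (Function.uncurry (partialR f)) := by
  have h : Function.uncurry (partialR f) =
      fun p => fderiv ℝ (Function.uncurry f) p ((0, 1) : ℝ × ℝ) := by
    ext ⟨t, r⟩
    exact (hasDerivAt_fderiv_right hf t r).deriv
  rw [h]
  exact (hf.fderiv_right (m := (⊤ : ℕ∞)) (by simp)).clm_apply contDiff_const

lemma hasDerivAt_pow_pred {n : ℕ} (hn : 2 ≤ n) {r : ℝ} (hr : r ≠ 0) :
    HasDerivAt (fun y : ℝ => y ^ (n - 1)) ((n - 1 : ℝ) * r ^ (n - 1) / r) r := by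
  refine (hasDerivAt_pow (n - 1) r).congr_deriv ?_
  obtain ⟨k, rfl⟩ : ∃ k, n = k + 2 := ⟨n - 2, by omega⟩
  simp only [show k + 2 - 1 = k + 1 by omega, Nat.add_sub_cancel]
  rw [pow_succ]
  push_cast
  field_simp
  ring

namespace ViscousSetup

variable {n : ℕ} {θ T E₀ : ℝ} (S : ViscousSetup n (2 * θ + 1) T E₀)

/-- The velocity. -/
def vel {γ : ℝ} (S : ViscousSetup n γ T E₀) (t r : ℝ) : ℝ := S.m t r / S.ρ t r

lemma rho_pos {t r : ℝ} (ht : t ∈ Icc 0 T) (hr : r ∈ Icc S.a S.b) : 0 < S.ρ t r :=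
  S.hcε.trans_le (S.pos t ht r hr)

lemma theta_pos (S : ViscousSetup n (2 * θ + 1) T E₀) : 0 < θ := by have := S.hγ; linarith

/-- The continuity equation in non-conservative form. -/
lemma continuity_eq_expanded {t r : ℝ} (ht : t ∈ Ioo 0 T) (hr : r ∈ Ioo S.a S.b) :
    partialT S.ρ t r + (n - 1 : ℝ) / r * S.m t r + partialR S.m t r =
      S.ε * ((n - 1 : ℝ) / r * partialR S.ρ t r + partialR (partialR S.ρ) t r) := by
  have hr0 : 0 < r := S.ha0.trans hr.1
  have h := S.continuity_eq t ht r hr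
  have hw := hasDerivAt_pow_pred S.hn hr0.ne'
  have h1 := (hw.mul (hasDerivAt_partialR S.smooth_m t r)).deriv
  have h2 := (hw.mul (hasDerivAt_partialR (contDiff_partialR S.smooth_ρ) t r)).deriv
  erw [h1, h2] at h
  have hw0 : 0 < r ^ (n - 1) := by positivity
  refine mul_left_cancel₀ hw0.ne' ?_
  change r ^ (n - 1) * partialT S.ρ t r + _ = _ at h
  linear_combination h

/-- The momentum equation in non-conservative form. -/
lemma momentum_eq_expanded {t r : ℝ} (ht : t ∈ Ioo 0 T) (hr : r ∈ Ioo S.a S.b) :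
    partialT S.m t r + 2 * S.vel t r * partialR S.m t r - S.vel t r ^ 2 * partialR S.ρ t r
        + (n - 1 : ℝ) / r * (S.m t r * S.vel t r) + pressDeriv θ S.δ (S.ρ t r) * partialR S.ρ t r =
      S.ε * (partialR (partialR S.m) t r + (n - 1 : ℝ) / r * partialR S.m t r
        - (n - 1 : ℝ) / r ^ 2 * S.m t r) := by
  have hr0 : 0 < r := S.ha0.trans hr.1
  have hρ := S.rho_pos (Ioo_subset_Icc_self ht) (Ioo_subset_Icc_self hr)
  have h := S.momentum_eq t ht r hr
  have hw := hasDerivAt_pow_pred S.hn hr0.ne'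
  have hm := hasDerivAt_partialR S.smooth_m t r
  have hr' := hasDerivAt_partialR S.smooth_ρ t r
  have h1 := ((hw.mul (hm.pow 2)).div hr' hρ.ne').deriv
  have h2 := ((((hr'.rpow_const (p := 2 * θ + 1) (Or.inl hρ.ne')).const_mul
    ((2 * θ + 1 - 1) ^ (2 : ℕ) / (4 * (2 * θ + 1)))).add ((hr'.pow 2).const_mul S.δ))).deriv
  have h3 := (hw.mul hm).deriv
  have h4 : deriv (fun y => deriv (fun z => z ^ (n - 1) * S.m t z) y) r =
      ((n - 1 : ℝ) ^ 2 - (n - 1)) * r ^ (n - 1) / r ^ 2 * S.m t r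
        + 2 * ((n - 1 : ℝ) * r ^ (n - 1) / r) * partialR S.m t r
        + r ^ (n - 1) * partialR (partialR S.m) t r := by
    have he : (fun y => deriv (fun z => z ^ (n - 1) * S.m t z) y) =ᶠ[nhds r]
        fun y => (n - 1 : ℝ) * y ^ (n - 1) / y * S.m t y + y ^ (n - 1) * partialR S.m t y := by
      filter_upwards [lt_mem_nhds hr0] with y hy
      exact ((hasDerivAt_pow_pred S.hn (ne_of_gt hy)).mul
        (hasDerivAt_partialR S.smooth_m t y)).deriv
    rw [he.deriv_eq]
    refine (((((hw.const_mul (n - 1 : ℝ)).div (hasDerivAt_id r) hr0.ne').mul hm).add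
      (hw.mul (hasDerivAt_partialR (contDiff_partialR S.smooth_m) t r))).congr_deriv ?_).deriv
    simp only [id, Pi.div_apply]
    field_simp
    ring
  rw [h4] at h
  erw [h1, h2, h3] at h
  have hw0 : 0 < r ^ (n - 1) := by positivity
  refine mul_left_cancel₀ hw0.ne' ?_
  have hθ := S.theta_pos
  change r ^ (n - 1) * partialT S.m t r + _ + _ = _ at h
  rw [show 2 * θ + 1 - 1 = 2 * θ by ring] at h
  have hmu : S.m t r = S.ρ t r * S.vel t r := by unfold vel; field_simp
  simp only [Pi.pow_apply, Pi.mul_apply, Nat.add_one_sub_one, pow_one, Nat.cast_ofNat] at h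
  rw [hmu] at h ⊢
  simp only [pressDeriv]
  linear_combination (norm := (field_simp; ring)) h

end ViscousSetup

namespace EntropyFlux

variable {l R : ℝ} (Φ : EntropyFlux (Ioo l R))

/-- Derivative of the entropy with respect to the density, at fixed momentum. -/
def G (ρ u : ℝ) : ℝ := Φ.F ρ u + Φ.J ρ u / ρ - u * Φ.V ρ u

section Curve

variable {ρ u : ℝ → ℝ} {ρ₁ u₁ x : ℝ}

lemma hasDerivAt_entropy (hρ : HasDerivAt ρ ρ₁ x) (hu : HasDerivAt u u₁ x)
    (hx : ρ x ∈ Ioo l R) (hl : 0 < l) :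
    HasDerivAt (fun s => ρ s * Φ.F (ρ s) (u s))
      (Φ.G (ρ x) (u x) * ρ₁ + Φ.V (ρ x) (u x) * (ρ₁ * u x + ρ x * u₁)) x := by
  have h0 : ρ x ≠ 0 := (hl.trans hx.1).ne'
  refine (hρ.mul (Φ.hF.comp isOpen_Ioo hρ hu hx)).congr_deriv ?_
  unfold G
  field_simp
  ring

lemma hasDerivAt_G (hρ : HasDerivAt ρ ρ₁ x) (hu : HasDerivAt u u₁ x)
    (hx : ρ x ∈ Ioo l R) (hl : 0 < l) :
    HasDerivAt (fun s => Φ.G (ρ s) (u s))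
      (Φ.c (ρ x) ^ 2 / ρ x * Φ.y (ρ x) (u x) * ρ₁ + Φ.c (ρ x) * Φ.z (ρ x) (u x) * u₁
        - u x * (Φ.c (ρ x) / ρ x * Φ.z (ρ x) (u x) * ρ₁ + Φ.y (ρ x) (u x) * u₁)) x := by
  have h0 : ρ x ≠ 0 := (hl.trans hx.1).ne'
  refine (((Φ.hF.comp isOpen_Ioo hρ hu hx).add ((Φ.hJ.comp isOpen_Ioo hρ hu hx).div hρ h0)).sub
    (hu.mul (Φ.hV.comp isOpen_Ioo hρ hu hx))).congr_deriv ?_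
  field_simp
  ring

lemma hasDerivAt_flux (hρ : HasDerivAt ρ ρ₁ x) (hu : HasDerivAt u u₁ x)
    (hx : ρ x ∈ Ioo l R) (hl : 0 < l) :
    HasDerivAt (fun s => u s * ρ s * Φ.F (ρ s) (u s) + Φ.H (ρ s) (u s))
      (Φ.G (ρ x) (u x) * (ρ₁ * u x + ρ x * u₁)
        + Φ.V (ρ x) (u x) * (2 * u x * (ρ₁ * u x + ρ x * u₁) - u x ^ 2 * ρ₁
          + Φ.c (ρ x) ^ 2 * ρ₁)) x := by
  have h0 : ρ x ≠ 0 := (hl.trans hx.1).ne'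
  refine (((hu.mul hρ).mul (Φ.hF.comp isOpen_Ioo hρ hu hx)).add
    (Φ.hH.comp isOpen_Ioo hρ hu hx)).congr_deriv ?_
  simp only [Pi.mul_apply]
  unfold G
  field_simp
  ring

end Curve

end EntropyFlux

namespace ViscousSetup

variable {n : ℕ} {θ T E₀ : ℝ} (S : ViscousSetup n (2 * θ + 1) T E₀)

/-- Radial derivative of the velocity. -/
def velR (t r : ℝ) : ℝ := (partialR S.m t r - S.vel t r * partialR S.ρ t r) / S.ρ t r

/-- Time derivative of the velocity. -/
def velT (t r : ℝ) : ℝ := (partialT S.m t r - S.vel t r * partialT S.ρ t r) / S.ρ t r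

lemma m_eq {t r : ℝ} (h : S.ρ t r ≠ 0) : S.m t r = S.ρ t r * S.vel t r := by
  unfold vel; field_simp

lemma partialR_m_eq {t r : ℝ} (h : S.ρ t r ≠ 0) :
    partialR S.m t r = partialR S.ρ t r * S.vel t r + S.ρ t r * S.velR t r := by
  unfold velR; field_simp; ring

lemma partialT_m_eq {t r : ℝ} (h : S.ρ t r ≠ 0) :
    partialT S.m t r = partialT S.ρ t r * S.vel t r + S.ρ t r * S.velT t r := by
  unfold velT; field_simp; ring

lemma hasDerivAt_velR {t r : ℝ} (h : S.ρ t r ≠ 0) :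
    HasDerivAt (fun y => S.vel t y) (S.velR t r) r := by
  refine ((hasDerivAt_partialR S.smooth_m t r).div (hasDerivAt_partialR S.smooth_ρ t r)
    h).congr_deriv ?_
  unfold velR vel; field_simp

lemma hasDerivAt_velT {t r : ℝ} (h : S.ρ t r ≠ 0) :
    HasDerivAt (fun s => S.vel s r) (S.velT t r) t := by
  refine ((hasDerivAt_partialT S.smooth_m t r).div (hasDerivAt_partialT S.smooth_ρ t r)
    h).congr_deriv ?_
  unfold velT vel; field_simp

variable {l R : ℝ} (Φ : EntropyFlux (Ioo l R))

/-- Entropy along the flow. -/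
def ent (t r : ℝ) : ℝ := S.ρ t r * Φ.F (S.ρ t r) (S.vel t r)

/-- Entropy flux along the flow. -/
def flux (t r : ℝ) : ℝ :=
  S.vel t r * S.ρ t r * Φ.F (S.ρ t r) (S.vel t r) + Φ.H (S.ρ t r) (S.vel t r)

/-- Time derivative of the entropy along the flow. -/
def entT (t r : ℝ) : ℝ :=
  Φ.G (S.ρ t r) (S.vel t r) * partialT S.ρ t r + Φ.V (S.ρ t r) (S.vel t r) * partialT S.m t r

/-- Radial derivative of the entropy along the flow. -/
def entR (t r : ℝ) : ℝ :=
  Φ.G (S.ρ t r) (S.vel t r) * partialR S.ρ t r + Φ.V (S.ρ t r) (S.vel t r) * partialR S.m t r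

/-- Hessian of the entropy applied to the gradient of the solution. -/
def hess (t r : ℝ) : ℝ :=
  Φ.c (S.ρ t r) ^ 2 / S.ρ t r * Φ.y (S.ρ t r) (S.vel t r) * partialR S.ρ t r ^ 2
    + 2 * Φ.c (S.ρ t r) * Φ.z (S.ρ t r) (S.vel t r) * partialR S.ρ t r * S.velR t r
    + S.ρ t r * Φ.y (S.ρ t r) (S.vel t r) * S.velR t r ^ 2

/-- The quantity `u J - H` along the flow. -/
def stress (t r : ℝ) : ℝ :=
  S.vel t r * Φ.J (S.ρ t r) (S.vel t r) - Φ.H (S.ρ t r) (S.vel t r)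

/-- The boundary functional of the localised entropy balance. -/
def bdry (ω W : ℝ → ℝ) (t r : ℝ) : ℝ :=
  W r * (r ^ (n - 1) * (S.ε * S.entR Φ t r - S.flux Φ t r))
    - S.ε * (r ^ (n - 1) * (ω r * S.ent Φ t r))

/-- The source of the localised entropy balance, divided by the weight `r ^ (n - 1)`. -/
def source (ω W : ℝ → ℝ) (t r : ℝ) : ℝ :=
  ω r * S.flux Φ t r + S.ε * ((n - 1 : ℝ) / r * ω r + deriv ω r) * S.ent Φ t r
    - (n - 1 : ℝ) / r * W r * S.stress Φ t r - S.ε * W r * S.hess Φ t r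
    - S.ε * ((n - 1 : ℝ) / r ^ 2) * W r *
      (S.vel t r * S.ρ t r * Φ.V (S.ρ t r) (S.vel t r))

lemma hasDerivAt_ent_left {t r : ℝ} (hl : 0 < l) (hρ : S.ρ t r ∈ Ioo l R) :
    HasDerivAt (fun s => S.ent Φ s r) (S.entT Φ t r) t := by
  have h0 : S.ρ t r ≠ 0 := (hl.trans hρ.1).ne'
  have h := Φ.hasDerivAt_entropy (ρ := fun s => S.ρ s r) (u := fun s => S.vel s r)
    (hasDerivAt_partialT S.smooth_ρ t r) (S.hasDerivAt_velT h0) hρ hl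
  unfold entT
  rwa [S.partialT_m_eq h0]

lemma hasDerivAt_ent_right {t r : ℝ} (hl : 0 < l) (hρ : S.ρ t r ∈ Ioo l R) :
    HasDerivAt (fun y => S.ent Φ t y) (S.entR Φ t r) r := by
  have h0 : S.ρ t r ≠ 0 := (hl.trans hρ.1).ne'
  have h := Φ.hasDerivAt_entropy (ρ := fun y => S.ρ t y) (u := fun y => S.vel t y)
    (hasDerivAt_partialR S.smooth_ρ t r) (S.hasDerivAt_velR h0) hρ hl
  unfold entR
  rwa [S.partialR_m_eq h0]

lemma hasDerivAt_entR {t r : ℝ} (hl : 0 < l) (hρ : S.ρ t r ∈ Ioo l R) :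
    HasDerivAt (fun y => S.entR Φ t y)
      (S.hess Φ t r + Φ.G (S.ρ t r) (S.vel t r) * partialR (partialR S.ρ) t r
        + Φ.V (S.ρ t r) (S.vel t r) * partialR (partialR S.m) t r) r := by
  have h0 : S.ρ t r ≠ 0 := (hl.trans hρ.1).ne'
  have hr' := hasDerivAt_partialR S.smooth_ρ t r
  have hu := S.hasDerivAt_velR h0
  refine (((Φ.hasDerivAt_G (ρ := fun y => S.ρ t y) (u := fun y => S.vel t y) hr' hu hρ hl).mul
      (hasDerivAt_partialR (contDiff_partialR S.smooth_ρ) t r)).add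
    ((Φ.hV.comp isOpen_Ioo (x := fun y => S.ρ t y) (y := fun y => S.vel t y) hr' hu hρ).mul
      (hasDerivAt_partialR (contDiff_partialR S.smooth_m) t r))).congr_deriv ?_
  rw [S.partialR_m_eq h0]
  unfold hess
  field_simp
  ring

/-- The localised entropy balance. -/
lemma hasDerivAt_bdry {ω W : ℝ → ℝ} (hω : Differentiable ℝ ω) {t r : ℝ}
    (hW : HasDerivAt W (ω r) r) (hc : ∀ ρ ∈ Ioo l R, Φ.c ρ ^ 2 = pressDeriv θ S.δ ρ)
    (ht : t ∈ Ioo 0 T) (hr : r ∈ Ioo S.a S.b) (hl : 0 < l) (hρ : S.ρ t r ∈ Ioo l R) :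
    HasDerivAt (fun y => S.bdry Φ ω W t y)
      (r ^ (n - 1) * W r * S.entT Φ t r - r ^ (n - 1) * S.source Φ ω W t r) r := by
  have h0 : S.ρ t r ≠ 0 := (hl.trans hρ.1).ne'
  have hr0 : r ≠ 0 := (S.ha0.trans hr.1).ne'
  have hw := hasDerivAt_pow_pred S.hn hr0
  have hq := Φ.hasDerivAt_flux (ρ := fun y => S.ρ t y) (u := fun y => S.vel t y)
    (hasDerivAt_partialR S.smooth_ρ t r) (S.hasDerivAt_velR h0) hρ hl
  have he := S.hasDerivAt_ent_right Φ hl hρ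
  have h := (hW.mul (hw.mul (((S.hasDerivAt_entR Φ hl hρ).const_mul S.ε).sub hq))).sub
    ((hw.mul ((hω r).hasDerivAt.mul he)).const_mul S.ε)
  refine h.congr_deriv ?_
  have e1 := S.continuity_eq_expanded ht hr
  have e2 := S.momentum_eq_expanded ht hr
  rw [← hc _ hρ] at e2
  have e3 := S.partialR_m_eq h0
  have e4 := S.m_eq h0
  simp only [Pi.mul_apply, Pi.sub_apply]
  rw [← e3]
  change _ = r ^ (n - 1) * W r * (Φ.G (S.ρ t r) (S.vel t r) * partialT S.ρ t r
    + Φ.V (S.ρ t r) (S.vel t r) * partialT S.m t r) - _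
  have hG : Φ.G (S.ρ t r) (S.vel t r) * S.m t r
      + Φ.V (S.ρ t r) (S.vel t r) * (S.m t r * S.vel t r)
      = S.flux Φ t r + S.stress Φ t r := by
    rw [e4]; unfold EntropyFlux.G flux stress; field_simp; ring
  have hE : S.entR Φ t r = Φ.G (S.ρ t r) (S.vel t r) * partialR S.ρ t r
    + Φ.V (S.ρ t r) (S.vel t r) * partialR S.m t r := rfl
  have hf : S.vel t r * S.ρ t r * Φ.F (S.ρ t r) (S.vel t r) + Φ.H (S.ρ t r) (S.vel t r)
    = S.flux Φ t r := rfl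
  rw [hf]
  unfold source
  linear_combination (norm := (field_simp; ring))
    (-(r ^ (n - 1) * W r * Φ.G (S.ρ t r) (S.vel t r))) * e1
      - r ^ (n - 1) * W r * Φ.V (S.ρ t r) (S.vel t r) * e2
      + r ^ (n - 1) * W r * ((n - 1 : ℝ) / r) * hG
      + S.ε * (r ^ (n - 1) * W r * ((n - 1 : ℝ) / r)) * hE
      + S.ε * (r ^ (n - 1) * W r * ((n - 1 : ℝ) / r ^ 2)) * Φ.V (S.ρ t r) (S.vel t r) * e4

end ViscousSetup

namespace ViscousSetup

variable {n : ℕ} {θ T E₀ : ℝ} (S : ViscousSetup n (2 * θ + 1) T E₀)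

/-- The dissipation density controlling second-order terms. -/
def diss (t r : ℝ) : ℝ :=
  pressDeriv θ S.δ (S.ρ t r) / S.ρ t r * partialR S.ρ t r ^ 2 + S.ρ t r * S.velR t r ^ 2

/-- The space-time cylinder. -/
def cyl : Set (ℝ × ℝ) := Icc 0 T ×ˢ Icc S.a S.b

lemma continuousOn_rho : ContinuousOn (fun p : ℝ × ℝ => S.ρ p.1 p.2) S.cyl :=
  S.smooth_ρ.continuous.continuousOn

lemma continuousOn_m : ContinuousOn (fun p : ℝ × ℝ => S.m p.1 p.2) S.cyl :=
  S.smooth_m.continuous.continuousOn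

lemma rho_ne {p : ℝ × ℝ} (hp : p ∈ S.cyl) : S.ρ p.1 p.2 ≠ 0 := (S.rho_pos hp.1 hp.2).ne'

lemma continuousOn_vel : ContinuousOn (fun p : ℝ × ℝ => S.vel p.1 p.2) S.cyl :=
  S.continuousOn_m.div S.continuousOn_rho fun _ hp => S.rho_ne hp

lemma continuousOn_partialR_rho : ContinuousOn (fun p : ℝ × ℝ => partialR S.ρ p.1 p.2) S.cyl :=
  (contDiff_partialR S.smooth_ρ).continuous.continuousOn

lemma continuousOn_partialR_m : ContinuousOn (fun p : ℝ × ℝ => partialR S.m p.1 p.2) S.cyl :=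
  (contDiff_partialR S.smooth_m).continuous.continuousOn

lemma continuousOn_velR : ContinuousOn (fun p : ℝ × ℝ => S.velR p.1 p.2) S.cyl :=
  (S.continuousOn_partialR_m.sub (S.continuousOn_vel.mul S.continuousOn_partialR_rho)).div
    S.continuousOn_rho fun _ hp => S.rho_ne hp

lemma continuousOn_rho_rpow (q : ℝ) : ContinuousOn (fun p : ℝ × ℝ => S.ρ p.1 p.2 ^ q) S.cyl :=
  S.continuousOn_rho.rpow_const fun _ hp => Or.inl (S.rho_ne hp)

lemma continuousOn_diss : ContinuousOn (fun p : ℝ × ℝ => S.diss p.1 p.2) S.cyl := by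
  unfold diss pressDeriv
  exact ((((continuousOn_const.mul (S.continuousOn_rho_rpow _)).add
    (continuousOn_const.mul S.continuousOn_rho)).div S.continuousOn_rho fun _ hp => S.rho_ne hp).mul
    (S.continuousOn_partialR_rho.pow 2)).add (S.continuousOn_rho.mul (S.continuousOn_velR.pow 2))

lemma continuousOn_comp {f : ℝ → ℝ → ℝ} (hf : Continuous (Function.uncurry f)) :
    ContinuousOn (fun p : ℝ × ℝ => f (S.ρ p.1 p.2) (S.vel p.1 p.2)) S.cyl :=
  hf.comp_continuousOn (S.continuousOn_rho.prodMk S.continuousOn_vel)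

lemma continuousOn_energyDensity :
    ContinuousOn (fun p : ℝ × ℝ => energyDensity θ S.δ S.ρbar (S.ρ p.1 p.2) (S.vel p.1 p.2))
      S.cyl := by
  unfold energyDensity
  exact ((((S.continuousOn_rho.mul (S.continuousOn_vel.pow 2)).add
    (S.continuousOn_rho_rpow _)).add (continuousOn_const.mul (S.continuousOn_rho.pow 2))).add
    continuousOn_const).add continuousOn_const

variable {l R : ℝ} (Φ : EntropyFlux (Ioo l R))

lemma continuousOn_G : ContinuousOn (fun p : ℝ × ℝ => Φ.G (S.ρ p.1 p.2) (S.vel p.1 p.2)) S.cyl :=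
  ((S.continuousOn_comp Φ.cF).add ((S.continuousOn_comp Φ.cJ).div S.continuousOn_rho
    fun _ hp => S.rho_ne hp)).sub (S.continuousOn_vel.mul (S.continuousOn_comp Φ.cV))

lemma continuousOn_ent : ContinuousOn (fun p : ℝ × ℝ => S.ent Φ p.1 p.2) S.cyl :=
  S.continuousOn_rho.mul (S.continuousOn_comp Φ.cF)

lemma continuousOn_flux : ContinuousOn (fun p : ℝ × ℝ => S.flux Φ p.1 p.2) S.cyl :=
  ((S.continuousOn_vel.mul S.continuousOn_rho).mul (S.continuousOn_comp Φ.cF)).add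
    (S.continuousOn_comp Φ.cH)

lemma continuousOn_entT : ContinuousOn (fun p : ℝ × ℝ => S.entT Φ p.1 p.2) S.cyl :=
  ((S.continuousOn_G Φ).mul (contDiff_partialT S.smooth_ρ).continuous.continuousOn).add
    ((S.continuousOn_comp Φ.cV).mul (contDiff_partialT S.smooth_m).continuous.continuousOn)

lemma continuousOn_entR : ContinuousOn (fun p : ℝ × ℝ => S.entR Φ p.1 p.2) S.cyl :=
  ((S.continuousOn_G Φ).mul S.continuousOn_partialR_rho).add
    ((S.continuousOn_comp Φ.cV).mul S.continuousOn_partialR_m)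

lemma continuousOn_hess : ContinuousOn (fun p : ℝ × ℝ => S.hess Φ p.1 p.2) S.cyl := by
  have hc : ContinuousOn (fun p : ℝ × ℝ => Φ.c (S.ρ p.1 p.2)) S.cyl :=
    Φ.hc.comp_continuousOn S.continuousOn_rho
  unfold hess
  exact (((((hc.pow 2).div S.continuousOn_rho fun _ hp => S.rho_ne hp).mul
    (S.continuousOn_comp Φ.cy)).mul (S.continuousOn_partialR_rho.pow 2)).add
    ((((continuousOn_const.mul hc).mul (S.continuousOn_comp Φ.cz)).mul
      S.continuousOn_partialR_rho).mul S.continuousOn_velR)).add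
    ((S.continuousOn_rho.mul (S.continuousOn_comp Φ.cy)).mul (S.continuousOn_velR.pow 2))

lemma continuousOn_radius_inv : ContinuousOn (fun p : ℝ × ℝ => (n - 1 : ℝ) / p.2) S.cyl :=
  continuousOn_const.div continuousOn_snd fun _ hp => (S.ha0.trans_le hp.2.1).ne'

lemma continuousOn_source {ω W : ℝ → ℝ} (hω : Continuous ω) (hω' : Continuous (deriv ω))
    (hW : Continuous W) : ContinuousOn (fun p : ℝ × ℝ => S.source Φ ω W p.1 p.2) S.cyl := by
  have h1 : ContinuousOn (fun p : ℝ × ℝ => ω p.2) S.cyl := by fun_prop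
  have h2 : ContinuousOn (fun p : ℝ × ℝ => deriv ω p.2) S.cyl := by fun_prop
  have h3 : ContinuousOn (fun p : ℝ × ℝ => W p.2) S.cyl := by fun_prop
  have h4 : ContinuousOn (fun p : ℝ × ℝ => (n - 1 : ℝ) / p.2 ^ 2) S.cyl :=
    continuousOn_const.div (by fun_prop) fun _ hp => (pow_pos (S.ha0.trans_le hp.2.1) 2).ne'
  have h5 : ContinuousOn (fun p : ℝ × ℝ => S.stress Φ p.1 p.2) S.cyl :=
    (S.continuousOn_vel.mul (S.continuousOn_comp Φ.cJ)).sub (S.continuousOn_comp Φ.cH)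
  unfold source
  exact (((((h1.mul (S.continuousOn_flux Φ)).add ((continuousOn_const.mul
    ((S.continuousOn_radius_inv.mul h1).add h2)).mul (S.continuousOn_ent Φ))).sub
    ((S.continuousOn_radius_inv.mul h3).mul h5)).sub ((continuousOn_const.mul h3).mul
      (S.continuousOn_hess Φ))).sub (((continuousOn_const.mul h4).mul h3).mul
      ((S.continuousOn_vel.mul S.continuousOn_rho).mul (S.continuousOn_comp Φ.cV))))

lemma continuousOn_bdry {ω W : ℝ → ℝ} (hω : Continuous ω) (hW : Continuous W) :
    ContinuousOn (fun p : ℝ × ℝ => S.bdry Φ ω W p.1 p.2) S.cyl := by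
  have h1 : ContinuousOn (fun p : ℝ × ℝ => ω p.2) S.cyl := by fun_prop
  have h3 : ContinuousOn (fun p : ℝ × ℝ => W p.2) S.cyl := by fun_prop
  have h4 : ContinuousOn (fun p : ℝ × ℝ => p.2 ^ (n - 1)) S.cyl := by fun_prop
  exact (h3.mul (h4.mul ((continuousOn_const.mul (S.continuousOn_entR Φ)).sub
    (S.continuousOn_flux Φ)))).sub (continuousOn_const.mul (h4.mul (h1.mul (S.continuousOn_ent Φ))))

lemma hess_le {t r : ℝ} (hl : 0 < l) (hρ : S.ρ t r ∈ Ioo l R)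
    (hc : ∀ ρ ∈ Ioo l R, Φ.c ρ ^ 2 = pressDeriv θ S.δ ρ)
    (hy : |Φ.y (S.ρ t r) (S.vel t r)| ≤ 1) (hz : |Φ.z (S.ρ t r) (S.vel t r)| ≤ 1) :
    S.hess Φ t r ≤ 2 * S.diss t r := by
  have h0 : 0 < S.ρ t r := hl.trans hρ.1
  unfold hess diss
  rw [← hc _ hρ]
  generalize Φ.y (S.ρ t r) (S.vel t r) = y at *
  generalize Φ.z (S.ρ t r) (S.vel t r) = z at *
  generalize Φ.c (S.ρ t r) = c at *
  generalize partialR S.ρ t r = p at *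
  generalize S.velR t r = v at *
  generalize S.ρ t r = ρ at *
  have h1 : c ^ 2 / ρ * y * p ^ 2 ≤ c ^ 2 / ρ * p ^ 2 := by
    have : 0 ≤ c ^ 2 / ρ * p ^ 2 := by positivity
    nlinarith [(abs_le.1 hy).2]
  have h2 : ρ * y * v ^ 2 ≤ ρ * v ^ 2 := by
    have : 0 ≤ ρ * v ^ 2 := by positivity
    nlinarith [(abs_le.1 hy).2]
  have h3 : 2 * c * z * p * v ≤ c ^ 2 / ρ * p ^ 2 + ρ * v ^ 2 := by
    have e : c ^ 2 / ρ * p ^ 2 + ρ * v ^ 2 - 2 * c * z * p * v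
        = ((c * p - z * ρ * v) ^ 2 + (1 - z ^ 2) * (ρ * v) ^ 2) / ρ := by field_simp; ring
    have hz2 : z ^ 2 ≤ 1 := by rw [← sq_abs]; exact pow_le_one₀ (abs_nonneg z) hz
    have : 0 ≤ ((c * p - z * ρ * v) ^ 2 + (1 - z ^ 2) * (ρ * v) ^ 2) / ρ := by
      have : 0 ≤ (1 - z ^ 2) := by linarith
      positivity
    linarith
  linarith

/-- The bounds that the entropy flux satisfies along the flow. -/
structure Controlled (c₀ C : ℝ) : Prop where
  hl : 0 < l
  mem : ∀ t ∈ Icc 0 T, ∀ r ∈ Icc S.a S.b, S.ρ t r ∈ Ioo l R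
  hC : 0 < C
  sound : ∀ ρ ∈ Ioo l R, Φ.c ρ ^ 2 = pressDeriv θ S.δ ρ
  F_zero : ∀ ρ, Φ.F ρ 0 = 0
  J_zero : ∀ ρ, Φ.J ρ 0 = 0
  V_bar : Φ.V S.ρbar 0 = 0
  H_bar : |Φ.H S.ρbar 0| ≤ C * (S.ρbar ^ (2 * θ + 1) + S.δ * S.ρbar ^ 2)
  bounds : ∀ ρ ∈ Ioo l R, ∀ u, |Φ.y ρ u| ≤ 1 ∧ |Φ.z ρ u| ≤ 1 ∧
    |ρ * Φ.F ρ u| ≤ C * energyDensity θ S.δ S.ρbar ρ u ∧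
    |u * ρ * Φ.V ρ u| ≤ C * energyDensity θ S.δ S.ρbar ρ u ∧
    u * Φ.J ρ u - Φ.H ρ u ≤ C * energyDensity θ S.δ S.ρbar ρ u ∧
    c₀ * (ρ * |u| ^ 3 + ρ ^ (3 * θ + 1)) - C * energyDensity θ S.δ S.ρbar ρ u ≤
      u * ρ * Φ.F ρ u + Φ.H ρ u

/-- The bounds on a cut-off `ω` and its primitive `W`. -/
structure Cutoff (a b K : ℝ) (ω W : ℝ → ℝ) : Prop where
  hK : 0 < K
  diff : Differentiable ℝ ω
  cont : Continuous (deriv ω)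
  prim : ∀ r, HasDerivAt W (ω r) r
  left : W a = 0
  nonneg : ∀ r ∈ Icc a b, 0 ≤ ω r
  le : ∀ r ∈ Icc a b, ω r ≤ K
  deriv_le : ∀ r ∈ Icc a b, |deriv ω r| ≤ K
  W_nonneg : ∀ r ∈ Icc a b, 0 ≤ W r
  W_le : ∀ r ∈ Icc a b, W r ≤ K
  W_le_mul : ∀ r ∈ Icc a b, W r ≤ K * r

lemma energyDensity_nonneg {θ δ ρbar ρ u : ℝ} (hδ : 0 < δ) (hb : 0 < ρbar) (hρ : 0 < ρ) :
    0 ≤ energyDensity θ δ ρbar ρ u := by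
  unfold energyDensity; positivity

variable {Φ} {c₀ C K : ℝ} {ω W : ℝ → ℝ}

lemma source_ge (hΦ : S.Controlled Φ c₀ C) (hω : Cutoff S.a S.b K ω W) {M₀ : ℝ}
    (hM : S.ε / S.a ≤ M₀) {t r : ℝ} (ht : t ∈ Icc 0 T) (hr : r ∈ Icc S.a S.b) :
    c₀ * ((S.ρ t r * |S.vel t r| ^ 3 + S.ρ t r ^ (3 * θ + 1)) * ω r)
      - K * C * (1 + (n - 1) * M₀ + M₀ + (n - 1) + (n - 1) * M₀)
        * energyDensity θ S.δ S.ρbar (S.ρ t r) (S.vel t r)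
      - 2 * K * (S.ε * S.diss t r) ≤ S.source Φ ω W t r := by
  have hρ := hΦ.mem t ht r hr
  have hρ0 : 0 < S.ρ t r := hΦ.hl.trans hρ.1
  obtain ⟨hy, hz, b1, b2, b3, b4⟩ := hΦ.bounds _ hρ (S.vel t r)
  have hhess := S.hess_le Φ hΦ.hl hρ hΦ.sound hy hz
  have hE0 : 0 ≤ energyDensity θ S.δ S.ρbar (S.ρ t r) (S.vel t r) :=
    energyDensity_nonneg S.hδ S.hρbar hρ0
  have hd0 : 0 ≤ S.diss t r := by
    have := pressDeriv_pos S.theta_pos S.hδ hρ0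
    unfold diss; positivity
  have o1 := hω.nonneg r hr
  have o2 := hω.le r hr
  have o3 := hω.deriv_le r hr
  have o4 := hω.W_nonneg r hr
  have o5 := hω.W_le r hr
  have o6 := hω.W_le_mul r hr
  have hK := hω.hK
  have hC := hΦ.hC
  have hε := S.hε
  have ha := S.ha0
  have hr0 : 0 < r := ha.trans_le hr.1
  have hν : (0 : ℝ) ≤ n - 1 := by
    have : (2 : ℝ) ≤ n := by exact_mod_cast S.hn
    linarith
  have hM0 : 0 ≤ M₀ := le_trans (by positivity) hM
  have hεr : S.ε / r ≤ M₀ := (div_le_div_of_nonneg_left hε.le ha hr.1).trans hM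
  have hεM : S.ε ≤ M₀ := le_trans (by rw [le_div_iff₀ ha]; nlinarith [S.ha1]) hM
  unfold source
  change |S.ent Φ t r| ≤ _ at b1
  change S.stress Φ t r ≤ _ at b3
  change _ ≤ S.flux Φ t r at b4
  generalize S.flux Φ t r = q at *
  generalize S.stress Φ t r = s at *
  generalize S.hess Φ t r = h at *
  generalize S.ent Φ t r = η at *
  generalize S.vel t r * S.ρ t r * Φ.V (S.ρ t r) (S.vel t r) = v at *
  generalize S.diss t r = d at *
  generalize energyDensity θ S.δ S.ρbar (S.ρ t r) (S.vel t r) = E at *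
  generalize S.ρ t r * |S.vel t r| ^ 3 + S.ρ t r ^ (3 * θ + 1) = g at *
  generalize (n - 1 : ℝ) = ν at *
  generalize S.ε = ε at *
  have hCE : 0 ≤ C * E := by positivity
  have t1 : c₀ * (g * ω r) - K * (C * E) ≤ ω r * q := by nlinarith
  have t2 : |ε * (ν / r * ω r + deriv ω r) * η| ≤ (ν * M₀ * K + M₀ * K) * (C * E) := by
    rw [abs_mul]
    refine mul_le_mul ?_ b1 (abs_nonneg _) (by positivity)
    have e : ε * (ν / r * ω r + deriv ω r) = ν * (ε / r) * ω r + ε * deriv ω r := by ring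
    rw [e]
    refine (abs_add_le _ _).trans (add_le_add ?_ ?_)
    · rw [abs_of_nonneg (by positivity)]; gcongr
    · rw [abs_mul, abs_of_pos hε]; gcongr
  have t3 : ν / r * W r * s ≤ ν * K * (C * E) := by
    have h1 : ν / r * W r ≤ ν * K := by
      have : W r / r ≤ K := by rwa [div_le_iff₀ hr0]
      calc ν / r * W r = ν * (W r / r) := by ring
        _ ≤ ν * K := by gcongr
    calc ν / r * W r * s ≤ ν / r * W r * (C * E) := by gcongr
      _ ≤ ν * K * (C * E) := by gcongr
  have t4 : ε * W r * h ≤ 2 * K * (ε * d) := by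
    calc ε * W r * h ≤ ε * W r * (2 * d) := by gcongr
      _ ≤ ε * K * (2 * d) := by gcongr
      _ = 2 * K * (ε * d) := by ring
  have t5 : |ε * (ν / r ^ 2) * W r * v| ≤ ν * M₀ * K * (C * E) := by
    rw [abs_mul]
    refine mul_le_mul ?_ b2 (abs_nonneg _) (by positivity)
    rw [abs_of_nonneg (by positivity)]
    have : W r / r ≤ K := by rwa [div_le_iff₀ hr0]
    calc ε * (ν / r ^ 2) * W r = ν * (ε / r) * (W r / r) := by ring
      _ ≤ ν * M₀ * K := by gcongr
  have := (abs_le.1 t2).1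
  have := (abs_le.1 t5).2
  linarith

/-- The localised entropy balance integrated in the radius. -/
lemma slice_le (hΦ : S.Controlled Φ c₀ C) (hω : Cutoff S.a S.b K ω W) {M₀ : ℝ}
    (hM : S.ε / S.a ≤ M₀) {t : ℝ} (ht : t ∈ Ioo 0 T) :
    c₀ * ∫ r in S.a..S.b, r ^ (n - 1) *
        ((S.ρ t r * |S.vel t r| ^ 3 + S.ρ t r ^ (3 * θ + 1)) * ω r) ≤
      (∫ r in S.a..S.b, r ^ (n - 1) * W r * S.entT Φ t r)
      + K * C * (1 + (n - 1) * M₀ + M₀ + (n - 1) + (n - 1) * M₀) *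
        (∫ r in S.a..S.b, r ^ (n - 1) * energyDensity θ S.δ S.ρbar (S.ρ t r) (S.vel t r))
      + 2 * K * (S.ε * ∫ r in S.a..S.b, r ^ (n - 1) * S.diss t r)
      + K * C * ((S.ρbar ^ (2 * θ + 1) + S.δ * S.ρbar ^ 2) * S.b ^ (n - 1)) := by
  have hab : S.a ≤ S.b := (S.ha1.trans S.hb).le
  have ht' := Ioo_subset_Icc_self ht
  have hWc : Continuous W := continuous_iff_continuousAt.2 fun r => (hω.prim r).continuousAt
  have hωc := hω.diff.continuous
  have sl : ∀ {f : ℝ × ℝ → ℝ}, ContinuousOn f S.cyl →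
      ContinuousOn (fun r => f (t, r)) (Icc S.a S.b) := fun hf =>
    hf.comp (f := fun r => (t, r)) (by fun_prop) fun r hr => ⟨ht', hr⟩
  have hwc : ContinuousOn (fun r : ℝ => r ^ (n - 1)) (Icc S.a S.b) := by fun_prop
  have ii : ∀ {f : ℝ → ℝ}, ContinuousOn f (Icc S.a S.b) → IntervalIntegrable f volume S.a S.b :=
    fun hf => hf.intervalIntegrable_of_Icc hab
  have cT : ContinuousOn (fun r => r ^ (n - 1) * W r * S.entT Φ t r) (Icc S.a S.b) :=
    (hwc.mul hWc.continuousOn).mul (sl (S.continuousOn_entT Φ))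
  have cS : ContinuousOn (fun r => r ^ (n - 1) * S.source Φ ω W t r) (Icc S.a S.b) :=
    hwc.mul (sl (S.continuousOn_source Φ hωc hω.cont hWc))
  have cE : ContinuousOn (fun r => r ^ (n - 1) *
      energyDensity θ S.δ S.ρbar (S.ρ t r) (S.vel t r)) (Icc S.a S.b) :=
    hwc.mul (sl S.continuousOn_energyDensity)
  have cD : ContinuousOn (fun r => r ^ (n - 1) * S.diss t r) (Icc S.a S.b) :=
    hwc.mul (sl S.continuousOn_diss)
  have cG : ContinuousOn (fun r => r ^ (n - 1) *
      ((S.ρ t r * |S.vel t r| ^ 3 + S.ρ t r ^ (3 * θ + 1)) * ω r)) (Icc S.a S.b) :=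
    hwc.mul (((sl ((S.continuousOn_rho.mul (S.continuousOn_vel.abs.pow 3)).add
      (S.continuousOn_rho_rpow _)))).mul hωc.continuousOn)
  have hftc := intervalIntegral.integral_eq_sub_of_hasDerivAt_of_le hab
    (sl (S.continuousOn_bdry Φ hωc hWc))
    (fun r hr => S.hasDerivAt_bdry Φ hω.diff (hω.prim r) hΦ.sound ht hr hΦ.hl
      (hΦ.mem t ht' r (Ioo_subset_Icc_self hr))) ((ii cT).sub (ii cS))
  rw [intervalIntegral.integral_sub (ii cT) (ii cS)] at hftc
  have ba : S.bdry Φ ω W t S.a = 0 := by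
    have hv : S.vel t S.a = 0 := by unfold vel; rw [S.bc_ma t ht', zero_div]
    simp [bdry, hω.left, ent, hv, hΦ.F_zero]
  have bb : S.bdry Φ ω W t S.b = -(W S.b * (S.b ^ (n - 1) * Φ.H S.ρbar 0)) := by
    have hv : S.vel t S.b = 0 := by unfold vel; rw [S.bc_mb t ht', zero_div]
    have hb := S.bc_ρb t ht'
    simp [bdry, ent, entR, flux, EntropyFlux.G, hv, hΦ.F_zero, hb, hΦ.J_zero, hΦ.V_bar]
  have hbd : |W S.b * (S.b ^ (n - 1) * Φ.H S.ρbar 0)| ≤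
      K * C * ((S.ρbar ^ (2 * θ + 1) + S.δ * S.ρbar ^ 2) * S.b ^ (n - 1)) := by
    have hb := right_mem_Icc.2 hab
    have hb0 : 0 < S.b := by linarith [S.hb]
    have hK := hω.hK
    rw [abs_mul, abs_mul, abs_of_nonneg (hω.W_nonneg _ hb), abs_of_pos (pow_pos hb0 _)]
    calc W S.b * (S.b ^ (n - 1) * |Φ.H S.ρbar 0|)
        ≤ K * (S.b ^ (n - 1) * (C * (S.ρbar ^ (2 * θ + 1) + S.δ * S.ρbar ^ 2))) := by
          gcongr
          exacts [hω.W_le _ hb, hΦ.H_bar]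
      _ = _ := by ring
  have hmono := intervalIntegral.integral_mono_on hab
    ((((ii cG).const_mul c₀).sub ((ii cE).const_mul
      (K * C * (1 + (n - 1) * M₀ + M₀ + (n - 1) + (n - 1) * M₀)))).sub
      ((ii cD).const_mul (2 * K * S.ε))) (ii cS) fun r hr => by
    have h1 := S.source_ge hΦ hω hM ht' hr
    have hr0 : 0 < r := S.ha0.trans_le hr.1
    have := mul_le_mul_of_nonneg_left h1 (pow_pos hr0 (n - 1)).le
    linarith
  rw [intervalIntegral.integral_sub (((ii cG).const_mul c₀).sub ((ii cE).const_mul _))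
    ((ii cD).const_mul _), intervalIntegral.integral_sub ((ii cG).const_mul c₀)
    ((ii cE).const_mul _), intervalIntegral.integral_const_mul,
    intervalIntegral.integral_const_mul, intervalIntegral.integral_const_mul] at hmono
  have := (abs_le.1 hbd).1
  have := (abs_le.1 hbd).2
  linarith

end ViscousSetup

lemma continuousOn_integral_slice {a b T : ℝ} {g : ℝ → ℝ → ℝ} (hT : 0 ≤ T) (hab : a ≤ b)
    (hg : ContinuousOn (fun p : ℝ × ℝ => g p.1 p.2) (Icc 0 T ×ˢ Icc a b)) :
    ContinuousOn (fun t => ∫ r in a..b, g t r) (Icc 0 T) := by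
  have hc : Continuous fun p : ℝ × ℝ => g (projIcc 0 T hT p.1) (projIcc a b hab p.2) := by
    refine hg.comp_continuous (f := fun p : ℝ × ℝ =>
      ((projIcc 0 T hT p.1 : ℝ), (projIcc a b hab p.2 : ℝ))) ?_ fun p =>
        ⟨(projIcc 0 T hT p.1).2, (projIcc a b hab p.2).2⟩
    exact (continuous_subtype_val.comp (continuous_projIcc.comp continuous_fst)).prodMk
      (continuous_subtype_val.comp (continuous_projIcc.comp continuous_snd))
  have h := intervalIntegral.continuous_parametric_intervalIntegral_of_continuous' (μ := volume)
    (f := fun t r => g (projIcc 0 T hT t) (projIcc a b hab r)) hc a b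
  refine h.continuousOn.congr fun t ht => ?_
  refine intervalIntegral.integral_congr fun r hr => ?_
  rw [uIcc_of_le hab] at hr
  simp only [projIcc_of_mem hT ht, projIcc_of_mem hab hr]

namespace ViscousSetup

variable {n : ℕ} {θ T E₀ : ℝ} (S : ViscousSetup n (2 * θ + 1) T E₀)
  {l R : ℝ} {Φ : EntropyFlux (Ioo l R)} {c₀ C K : ℝ} {ω W : ℝ → ℝ}

lemma continuousOn_weighted {f : ℝ × ℝ → ℝ} (hf : ContinuousOn f S.cyl) :
    ContinuousOn (fun p : ℝ × ℝ => p.2 ^ (n - 1) * f p) S.cyl :=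
  ContinuousOn.mul (by fun_prop) hf

lemma intervalIntegrable_slice {f : ℝ × ℝ → ℝ} (hf : ContinuousOn f S.cyl) {t : ℝ}
    (ht : t ∈ Icc 0 T) : IntervalIntegrable (fun r => f (t, r)) volume S.a S.b :=
  ContinuousOn.intervalIntegrable_of_Icc (S.ha1.trans S.hb).le
    (hf.comp (f := fun r => (t, r)) (by fun_prop) fun r hr => ⟨ht, hr⟩)

lemma continuousOn_integral {f : ℝ × ℝ → ℝ} (hf : ContinuousOn f S.cyl) :
    ContinuousOn (fun t => ∫ r in S.a..S.b, f (t, r)) (Icc 0 T) :=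
  continuousOn_integral_slice (g := fun t r => f (t, r)) S.hT.le (S.ha1.trans S.hb).le hf

lemma intervalIntegrable_integral {f : ℝ × ℝ → ℝ} (hf : ContinuousOn f S.cyl) :
    IntervalIntegrable (fun t => ∫ r in S.a..S.b, f (t, r)) volume 0 T :=
  (S.continuousOn_integral hf).intervalIntegrable_of_Icc S.hT.le

lemma continuousOn_wW (hW : Continuous W) {f : ℝ × ℝ → ℝ} (hf : ContinuousOn f S.cyl) :
    ContinuousOn (fun p : ℝ × ℝ => p.2 ^ (n - 1) * W p.2 * f p) S.cyl :=
  ContinuousOn.mul (by fun_prop) hf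

/-- The total change of the localised entropy. -/
lemma integral_entT_eq (hΦ : S.Controlled Φ c₀ C) (hW : Continuous W) :
    (∫ t in (0)..T, ∫ r in S.a..S.b, r ^ (n - 1) * W r * S.entT Φ t r) =
      (∫ r in S.a..S.b, r ^ (n - 1) * W r * S.ent Φ T r)
        - ∫ r in S.a..S.b, r ^ (n - 1) * W r * S.ent Φ 0 r := by
  have hab : S.a ≤ S.b := (S.ha1.trans S.hb).le
  have c1 := S.continuousOn_wW hW (S.continuousOn_ent Φ)
  have c2 := S.continuousOn_wW hW (S.continuousOn_entT Φ)
  refine intervalIntegral.integral_eq_sub_of_hasDerivAt_of_le S.hT.le (S.continuousOn_integral c1)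
    (fun t ht => ?_) (S.intervalIntegrable_integral c2)
  have hsub : Ioo 0 T ×ˢ uIcc S.a S.b ⊆ S.cyl := by
    rw [uIcc_of_le hab]; exact prod_mono_left Ioo_subset_Icc_self
  refine hasDerivAt_intervalIntegral_param (f := fun t r => r ^ (n - 1) * W r * S.ent Φ t r)
    (f₁ := fun t r => r ^ (n - 1) * W r * S.entT Φ t r) (I := Ioo 0 T) isOpen_Ioo
    (fun s hs r hr => ?_) (c1.mono hsub) (c2.mono hsub) ht
  rw [uIcc_of_le hab] at hr
  exact (S.hasDerivAt_ent_left Φ hΦ.hl (hΦ.mem s (Ioo_subset_Icc_self hs) r hr)).const_mul _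

lemma abs_integral_ent_le (hΦ : S.Controlled Φ c₀ C) (hω : Cutoff S.a S.b K ω W)
    (hW : Continuous W) {t : ℝ} (ht : t ∈ Icc 0 T) :
    |∫ r in S.a..S.b, r ^ (n - 1) * W r * S.ent Φ t r| ≤ K * C *
      ∫ r in S.a..S.b, r ^ (n - 1) * energyDensity θ S.δ S.ρbar (S.ρ t r) (S.vel t r) := by
  have hab : S.a ≤ S.b := (S.ha1.trans S.hb).le
  have c1 := S.intervalIntegrable_slice (S.continuousOn_wW hW (S.continuousOn_ent Φ)) ht
  have c2 := S.intervalIntegrable_slice (S.continuousOn_weighted S.continuousOn_energyDensity) ht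
  refine (intervalIntegral.abs_integral_le_integral_abs hab).trans ?_
  rw [← intervalIntegral.integral_const_mul]
  refine intervalIntegral.integral_mono_on hab c1.abs (c2.const_mul _) fun r hr => ?_
  have hr0 : 0 < r := S.ha0.trans_le hr.1
  have hw := pow_pos hr0 (n - 1)
  have b := (hΦ.bounds _ (hΦ.mem t ht r hr) (S.vel t r)).2.2.1
  have hK := hω.hK
  change |r ^ (n - 1) * W r * S.ent Φ t r| ≤ _
  change |S.ent Φ t r| ≤ _ at b
  rw [abs_mul, abs_mul, abs_of_pos hw, abs_of_nonneg (hω.W_nonneg r hr)]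
  calc r ^ (n - 1) * W r * |S.ent Φ t r|
      ≤ r ^ (n - 1) * K * (C * energyDensity θ S.δ S.ρbar (S.ρ t r) (S.vel t r)) := by
        gcongr
        exact hω.W_le r hr
    _ = _ := by ring

/-- The space-time integral of the localised entropy balance. -/
lemma total_le (hΦ : S.Controlled Φ c₀ C) (hω : Cutoff S.a S.b K ω W) {M₀ Ce Cd Cb : ℝ}
    (hM : S.ε / S.a ≤ M₀)
    (he : ∀ t ∈ Icc 0 T,
      ∫ r in S.a..S.b, r ^ (n - 1) * energyDensity θ S.δ S.ρbar (S.ρ t r) (S.vel t r) ≤ Ce)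
    (hd : S.ε * ∫ t in (0)..T, ∫ r in S.a..S.b, r ^ (n - 1) * S.diss t r ≤ Cd)
    (hb : (S.ρbar ^ (2 * θ + 1) + S.δ * S.ρbar ^ 2) * S.b ^ (n - 1) ≤ Cb) :
    c₀ * ∫ t in (0)..T, ∫ r in S.a..S.b, r ^ (n - 1) *
        ((S.ρ t r * |S.vel t r| ^ 3 + S.ρ t r ^ (3 * θ + 1)) * ω r) ≤
      2 * (K * C * Ce) + T * (K * C * (1 + (n - 1) * M₀ + M₀ + (n - 1) + (n - 1) * M₀) * Ce)
        + 2 * K * Cd + T * (K * C * Cb) := by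
  have hT := S.hT.le
  have hK := hω.hK
  have hC := hΦ.hC
  have hWc : Continuous W := continuous_iff_continuousAt.2 fun r => (hω.prim r).continuousAt
  have hωc := hω.diff.continuous
  have hν : (0 : ℝ) ≤ n - 1 := by
    have : (2 : ℝ) ≤ n := by exact_mod_cast S.hn
    linarith
  have hM0 : 0 ≤ M₀ := le_trans (div_nonneg S.hε.le S.ha0.le) hM
  obtain ⟨C₁, hC₁⟩ : ∃ C₁, C₁ = K * C * (1 + (n - 1) * M₀ + M₀ + (n - 1) + (n - 1) * M₀) :=
    ⟨_, rfl⟩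
  have hC₁0 : 0 ≤ C₁ := by rw [hC₁]; positivity
  have iG := S.intervalIntegrable_integral (S.continuousOn_weighted
    (((S.continuousOn_rho.mul (S.continuousOn_vel.abs.pow 3)).add
      (S.continuousOn_rho_rpow (3 * θ + 1))).mul
      (show ContinuousOn (fun p : ℝ × ℝ => ω p.2) S.cyl by fun_prop)))
  have iT := S.intervalIntegrable_integral (S.continuousOn_wW hWc (S.continuousOn_entT Φ))
  have iD := S.intervalIntegrable_integral (S.continuousOn_weighted S.continuousOn_diss)
  have hmono := intervalIntegral.integral_mono_on_of_le_Ioo hT (iG.const_mul c₀)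
    ((iT.add (iD.const_mul (2 * K * S.ε))).add
      (intervalIntegrable_const (c := C₁ * Ce + K * C * Cb))) fun t ht => by
    have h := S.slice_le hΦ hω hM ht
    rw [← hC₁] at h
    have h1 := mul_le_mul_of_nonneg_left (he t (Ioo_subset_Icc_self ht)) hC₁0
    have h2 := mul_le_mul_of_nonneg_left hb (show 0 ≤ K * C by positivity)
    refine h.trans ?_
    linarith
  rw [intervalIntegral.integral_add (iT.add (iD.const_mul _)) intervalIntegrable_const,
    intervalIntegral.integral_add iT (iD.const_mul _), intervalIntegral.integral_const_mul,
    intervalIntegral.integral_const_mul, intervalIntegral.integral_const,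
    S.integral_entT_eq hΦ hWc, smul_eq_mul, sub_zero] at hmono
  have a1 := S.abs_integral_ent_le hΦ hω hWc (right_mem_Icc.2 hT)
  have a0 := S.abs_integral_ent_le hΦ hω hWc (left_mem_Icc.2 hT)
  have e1 := mul_le_mul_of_nonneg_left (he T (right_mem_Icc.2 hT)) (show 0 ≤ K * C by positivity)
  have e0 := mul_le_mul_of_nonneg_left (he 0 (left_mem_Icc.2 hT)) (show 0 ≤ K * C by positivity)
  have d1 := mul_le_mul_of_nonneg_left hd (show 0 ≤ 2 * K by positivity)
  have := (abs_le.1 a1).2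
  have := (abs_le.1 a0).1
  rw [← hC₁]
  refine hmono.trans ?_
  linarith

end ViscousSetup

lemma rpow_sub_tangent_nonneg {θ x y : ℝ} (hθ : 0 < θ) (hx : 0 < x) (hy : 0 < y) :
    0 ≤ x ^ (2 * θ + 1) - y ^ (2 * θ + 1) - (2 * θ + 1) * y ^ (2 * θ) * (x - y) := by
  have h := one_add_mul_self_le_rpow_one_add (s := x / y - 1) (p := 2 * θ + 1)
    (by have := div_pos hx hy; linarith) (by linarith)
  rw [show 1 + (x / y - 1) = x / y by ring, div_rpow hx.le hy.le, le_div_iff₀ (by positivity)] at h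
  rw [rpow_add_one hy.ne'] at h ⊢
  have e : (1 + (2 * θ + 1) * (x / y - 1)) * (y ^ (2 * θ) * y) =
    y ^ (2 * θ) * y + (2 * θ + 1) * y ^ (2 * θ) * (x - y) := by field_simp
  linarith

lemma rpow_le_sub_tangent {θ : ℝ} (hθ : 0 < θ) : ∃ Λ : ℝ, 0 < Λ ∧ ∀ x y : ℝ, 0 < x → 0 < y →
    x ^ (2 * θ + 1) ≤ 2 * (x ^ (2 * θ + 1) - y ^ (2 * θ + 1)
      - (2 * θ + 1) * y ^ (2 * θ) * (x - y)) + Λ * y ^ (2 * θ + 1) := by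
  obtain ⟨L, hL0, hL⟩ : ∃ L : ℝ, 0 < L ∧ L ^ (2 * θ) = 2 * (2 * θ + 1) :=
    ⟨(2 * (2 * θ + 1)) ^ (2 * θ)⁻¹, by positivity, rpow_inv_rpow (by positivity) (by positivity)⟩
  refine ⟨2 + 2 * (2 * θ + 1) * L, by positivity, fun x y hx hy => ?_⟩
  rw [rpow_add_one hy.ne', rpow_add_one hx.ne']
  have hY : 0 < y ^ (2 * θ) := by positivity
  have hX : 0 < x ^ (2 * θ) := by positivity
  have hp : 0 < (2 * θ + 1) * y ^ (2 * θ) * y := by positivity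
  rcases le_total (L * y) x with h | h
  · have h1 : (L * y) ^ (2 * θ) ≤ x ^ (2 * θ) := by gcongr
    rw [mul_rpow hL0.le hy.le, hL] at h1
    have h2 := mul_le_mul_of_nonneg_right h1 hx.le
    have h3 : 0 < 2 * (2 * θ + 1) * L * (y ^ (2 * θ) * y) := by positivity
    linarith
  · have h1 := mul_le_mul_of_nonneg_left h (show 0 ≤ 2 * (2 * θ + 1) * y ^ (2 * θ) by positivity)
    have h2 : 0 < x ^ (2 * θ) * x := by positivity
    linarith

lemma hBarDelta_eq {θ δ x y : ℝ} (hθ : 0 < θ) :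
    hBarDelta (2 * θ + 1) ((2 * θ + 1 - 1) ^ (2 : ℕ) / (4 * (2 * θ + 1))) δ x y =
      θ / (2 * (2 * θ + 1)) * (x ^ (2 * θ + 1) - y ^ (2 * θ + 1)
        - (2 * θ + 1) * y ^ (2 * θ) * (x - y)) + δ * (x - y) ^ 2 := by
  unfold hBarDelta hDelta hDelta'
  rw [show 2 * θ + 1 - 1 = 2 * θ by ring]
  field_simp
  ring

lemma hDelta''_eq {θ δ x : ℝ} (hθ : 0 < θ) (hx : 0 < x) :
    hDelta'' (2 * θ + 1) ((2 * θ + 1 - 1) ^ (2 : ℕ) / (4 * (2 * θ + 1))) δ x =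
      pressDeriv θ δ x / x := by
  unfold hDelta'' pressDeriv
  rw [show 2 * θ + 1 - 2 = 2 * θ - 1 by ring, rpow_sub_one hx.ne',
    show 2 * θ + 1 - 1 = 2 * θ by ring]
  field_simp
  ring

lemma hBarDelta_nonneg {θ δ x y : ℝ} (hθ : 0 < θ) (hδ : 0 < δ) (hx : 0 < x) (hy : 0 < y) :
    0 ≤ hBarDelta (2 * θ + 1) ((2 * θ + 1 - 1) ^ (2 : ℕ) / (4 * (2 * θ + 1))) δ x y := by
  rw [hBarDelta_eq hθ]
  have := rpow_sub_tangent_nonneg hθ hx hy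
  positivity

lemma exists_energyDensity_le {θ : ℝ} (hθ : 0 < θ) : ∃ C : ℝ, 0 < C ∧ ∀ δ ρbar ρ u : ℝ, 0 < δ →
    0 < ρbar → 0 < ρ → energyDensity θ δ ρbar ρ u ≤ C * ((1 / 2) * ρ * u ^ 2 +
      hBarDelta (2 * θ + 1) ((2 * θ + 1 - 1) ^ (2 : ℕ) / (4 * (2 * θ + 1))) δ ρ ρbar)
      + C * (ρbar ^ (2 * θ + 1) + δ * ρbar ^ 2) := by
  obtain ⟨Λ, hΛ, h⟩ := rpow_le_sub_tangent hθ
  set k : ℝ := θ / (2 * (2 * θ + 1)) with hk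
  have hk0 : 0 < k := by positivity
  refine ⟨5 + Λ + 2 / k, by positivity, fun δ ρbar ρ u hδ hb hρ => ?_⟩
  rw [hBarDelta_eq hθ, ← hk]
  have h1 := h ρ ρbar hρ hb
  have h2 := rpow_sub_tangent_nonneg hθ hρ hb
  generalize ρ ^ (2 * θ + 1) - ρbar ^ (2 * θ + 1) - (2 * θ + 1) * ρbar ^ (2 * θ) * (ρ - ρbar) = D
    at *
  have hx : 0 ≤ ρ * u ^ 2 := by positivity
  have hg : 0 ≤ ρbar ^ (2 * θ + 1) := by positivity
  have hd : 0 ≤ δ * ρbar ^ 2 := by positivity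
  have hq : 0 ≤ δ * (ρ - ρbar) ^ 2 := by positivity
  have hq2 : 0 ≤ δ * (ρ - 2 * ρbar) ^ 2 := by positivity
  have e1 : 2 * D ≤ (5 + Λ + 2 / k) * (k * D) := by
    have e : (5 + Λ + 2 / k) * (k * D) = 2 * D + (5 + Λ) * (k * D) := by field_simp; ring
    rw [e]
    have : 0 ≤ (5 + Λ) * (k * D) := by positivity
    linarith
  have hL : 5 + Λ ≤ 5 + Λ + 2 / k := by
    have : 0 < 2 / k := by positivity
    linarith
  have e2 := mul_le_mul_of_nonneg_right hL hx
  have e3 := mul_le_mul_of_nonneg_right hL hg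
  have e4 := mul_le_mul_of_nonneg_right hL hd
  have e5 := mul_le_mul_of_nonneg_right hL hq
  have f1 := mul_nonneg hΛ.le hx
  have f2 := mul_nonneg hΛ.le hd
  have f3 := mul_nonneg hΛ.le hq
  unfold energyDensity
  linarith

namespace ViscousSetup

variable {n : ℕ} {θ T E₀ : ℝ} (S : ViscousSetup n (2 * θ + 1) T E₀)

/-- The relative mechanical energy density. -/
def relEnergy (t r : ℝ) : ℝ :=
  (1 / 2) * S.ρ t r * S.vel t r ^ 2 +
    hBarDelta (2 * θ + 1) ((2 * θ + 1 - 1) ^ (2 : ℕ) / (4 * (2 * θ + 1))) S.δ (S.ρ t r) S.ρbar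

lemma continuousOn_relEnergy : ContinuousOn (fun p : ℝ × ℝ => S.relEnergy p.1 p.2) S.cyl := by
  have hρ := S.continuousOn_rho
  have hg := S.continuousOn_rho_rpow (2 * θ + 1)
  unfold relEnergy
  simp only [hBarDelta_eq S.theta_pos]
  exact ((continuousOn_const.mul hρ).mul (S.continuousOn_vel.pow 2)).add
    ((continuousOn_const.mul ((hg.sub continuousOn_const).sub
      (continuousOn_const.mul (hρ.sub continuousOn_const)))).add
      (continuousOn_const.mul ((hρ.sub continuousOn_const).pow 2)))

lemma relEnergy_nonneg {t r : ℝ} (ht : t ∈ Icc 0 T) (hr : r ∈ Icc S.a S.b) :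
    0 ≤ S.relEnergy t r := by
  have h0 := S.rho_pos ht hr
  have := hBarDelta_nonneg S.theta_pos S.hδ h0 S.hρbar
  unfold relEnergy; positivity

/-- The full viscous dissipation density. -/
def fullDiss (t r : ℝ) : ℝ := S.diss t r + (n - 1 : ℝ) * S.ρ t r * S.vel t r ^ 2 / r ^ 2

lemma diss_nonneg {t r : ℝ} (ht : t ∈ Icc 0 T) (hr : r ∈ Icc S.a S.b) : 0 ≤ S.diss t r := by
  have h0 := S.rho_pos ht hr
  have := pressDeriv_pos S.theta_pos S.hδ h0
  unfold diss; positivity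

lemma diss_le_fullDiss {t r : ℝ} (ht : t ∈ Icc 0 T) (hr : r ∈ Icc S.a S.b) :
    S.diss t r ≤ S.fullDiss t r := by
  have h0 := S.rho_pos ht hr
  have hν : (0 : ℝ) ≤ n - 1 := by
    have : (2 : ℝ) ≤ n := by exact_mod_cast S.hn
    linarith
  have : 0 ≤ (n - 1 : ℝ) * S.ρ t r * S.vel t r ^ 2 / r ^ 2 := by positivity
  unfold fullDiss; linarith

lemma continuousOn_fullDiss : ContinuousOn (fun p : ℝ × ℝ => S.fullDiss p.1 p.2) S.cyl :=
  S.continuousOn_diss.add (((continuousOn_const.mul S.continuousOn_rho).mul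
    (S.continuousOn_vel.pow 2)).div (by fun_prop)
      fun _ hp => (pow_pos (S.ha0.trans_le hp.2.1) 2).ne')

lemma integral_Ioo_eq {a b : ℝ} (hab : a ≤ b) (f : ℝ → ℝ) :
    ∫ r in Ioo a b, f r = ∫ r in a..b, f r := by
  rw [intervalIntegral.integral_of_le hab, integral_Ioc_eq_integral_Ioo]

lemma energy_le {t : ℝ} (ht : t ∈ Icc 0 T) :
    (∫ r in S.a..S.b, r ^ (n - 1) * S.relEnergy t r)
      + S.ε * (∫ s in (0)..T, ∫ r in S.a..S.b, r ^ (n - 1) * S.fullDiss s r) ≤ E₀ := by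
  have hab : S.a ≤ S.b := (S.ha1.trans S.hb).le
  refine le_trans (le_of_eq ?_) (S.energy t ht)
  congr 1
  · rw [integral_Ioo_eq hab]
    refine intervalIntegral.integral_congr fun r _ => ?_
    simp only [relEnergy, vel]
    ring
  · congr 1
    rw [integral_Ioo_eq S.hT.le]
    refine intervalIntegral.integral_congr fun s hs => ?_
    rw [uIcc_of_le S.hT.le] at hs
    rw [integral_Ioo_eq hab]
    refine intervalIntegral.integral_congr fun r hr => ?_
    rw [uIcc_of_le hab] at hr
    have h0 := S.rho_pos hs hr
    have hv : deriv (fun y => S.m s y / S.ρ s y) r = S.velR s r := (S.hasDerivAt_velR h0.ne').deriv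
    rw [hv, hDelta''_eq S.theta_pos h0]
    simp only [fullDiss, diss, vel, partialR]
    ring

lemma integral_slice_nonneg {f : ℝ → ℝ} (hf : ∀ r ∈ Icc S.a S.b, 0 ≤ f r) :
    0 ≤ ∫ r in S.a..S.b, r ^ (n - 1) * f r :=
  intervalIntegral.integral_nonneg (S.ha1.trans S.hb).le fun r hr =>
    mul_nonneg (pow_nonneg (S.ha0.trans_le hr.1).le _) (hf r hr)

lemma integral_relEnergy_le {t : ℝ} (ht : t ∈ Icc 0 T) :
    ∫ r in S.a..S.b, r ^ (n - 1) * S.relEnergy t r ≤ E₀ := by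
  have h : 0 ≤ ∫ s in (0)..T, ∫ r in S.a..S.b, r ^ (n - 1) * S.fullDiss s r :=
    intervalIntegral.integral_nonneg S.hT.le fun s hs => S.integral_slice_nonneg fun r hr =>
      (S.diss_nonneg hs hr).trans (S.diss_le_fullDiss hs hr)
  have := S.energy_le ht
  have := mul_nonneg S.hε.le h
  linarith

lemma integral_diss_le :
    S.ε * (∫ t in (0)..T, ∫ r in S.a..S.b, r ^ (n - 1) * S.diss t r) ≤ E₀ := by
  have hab : S.a ≤ S.b := (S.ha1.trans S.hb).le
  have h0 : (0 : ℝ) ∈ Icc 0 T := left_mem_Icc.2 S.hT.le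
  have h1 := S.energy_le h0
  have h2 := S.integral_slice_nonneg fun r hr => S.relEnergy_nonneg h0 hr
  have c1 := S.continuousOn_weighted S.continuousOn_diss
  have c2 := S.continuousOn_weighted S.continuousOn_fullDiss
  have h3 := intervalIntegral.integral_mono_on S.hT.le (S.intervalIntegrable_integral c1)
    (S.intervalIntegrable_integral c2) fun s hs =>
      intervalIntegral.integral_mono_on hab (S.intervalIntegrable_slice c1 hs)
        (S.intervalIntegrable_slice c2 hs) fun r hr =>
          mul_le_mul_of_nonneg_left (S.diss_le_fullDiss hs hr)
            (pow_nonneg (S.ha0.trans_le hr.1).le _)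
  have h4 := mul_le_mul_of_nonneg_left h3 S.hε.le
  linarith

lemma integral_energyDensity_le {C M : ℝ} (hC : 0 < C)
    (h : ∀ ρ u : ℝ, 0 < ρ → energyDensity θ S.δ S.ρbar ρ u ≤ C * ((1 / 2) * ρ * u ^ 2 +
      hBarDelta (2 * θ + 1) ((2 * θ + 1 - 1) ^ (2 : ℕ) / (4 * (2 * θ + 1))) S.δ ρ S.ρbar)
      + C * (S.ρbar ^ (2 * θ + 1) + S.δ * S.ρbar ^ 2))
    (hM : (S.ρbar ^ (2 * θ + 1) + S.δ * S.ρbar ^ 2) * S.b ^ n ≤ M) {t : ℝ} (ht : t ∈ Icc 0 T) :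
    ∫ r in S.a..S.b, r ^ (n - 1) * energyDensity θ S.δ S.ρbar (S.ρ t r) (S.vel t r) ≤
      C * E₀ + C * M := by
  have hab : S.a ≤ S.b := (S.ha1.trans S.hb).le
  obtain ⟨B, hB⟩ : ∃ B, B = S.ρbar ^ (2 * θ + 1) + S.δ * S.ρbar ^ 2 := ⟨_, rfl⟩
  have hB0 : 0 ≤ B := by
    have := S.hρbar; have := S.hδ
    rw [hB]; positivity
  rw [← hB] at hM
  have hb0 : 0 < S.b := by linarith [S.hb]
  have i1 := S.intervalIntegrable_slice (S.continuousOn_weighted S.continuousOn_energyDensity) ht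
  have i2 := S.intervalIntegrable_slice (S.continuousOn_weighted S.continuousOn_relEnergy) ht
  have h1 := intervalIntegral.integral_mono_on hab i1
    ((i2.const_mul C).add (intervalIntegrable_const (c := C * (B * S.b ^ (n - 1))))) fun r hr => by
    have hr0 := S.ha0.trans_le hr.1
    have h1 := mul_le_mul_of_nonneg_left (h _ (S.vel t r) (S.rho_pos ht hr))
      (pow_pos hr0 (n - 1)).le
    have h2 : r ^ (n - 1) * (C * B) ≤ S.b ^ (n - 1) * (C * B) := by
      gcongr
      exact hr.2
    rw [← hB] at h1
    change r ^ (n - 1) * energyDensity θ S.δ S.ρbar (S.ρ t r) (S.vel t r) ≤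
      C * (r ^ (n - 1) * S.relEnergy t r) + C * (B * S.b ^ (n - 1))
    unfold relEnergy
    linarith
  rw [intervalIntegral.integral_add (i2.const_mul C) intervalIntegrable_const,
    intervalIntegral.integral_const_mul, intervalIntegral.integral_const, smul_eq_mul] at h1
  have h2 := mul_le_mul_of_nonneg_left (S.integral_relEnergy_le ht) hC.le
  have h3 : (S.b - S.a) * (C * (B * S.b ^ (n - 1))) ≤ C * M := by
    have e : S.b ^ n = S.b ^ (n - 1) * S.b := by
      rw [← pow_succ]; congr 1; have := S.hn; omega
    have h4 : (S.b - S.a) * (C * (B * S.b ^ (n - 1))) ≤ S.b * (C * (B * S.b ^ (n - 1))) := by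
      gcongr
      linarith [S.ha0]
    have h5 := mul_le_mul_of_nonneg_left hM hC.le
    rw [e] at h5
    linarith
  refine h1.trans ?_
  linarith

lemma exists_cutoff {ω : ℝ → ℝ} (hω : ContDiff ℝ (⊤ : ℕ∞) ω) (hs : HasCompactSupport ω)
    (h0 : ∀ r : ℝ, 0 ≤ r → 0 ≤ ω r) :
    ∃ K : ℝ, ∀ a b : ℝ, 0 < a → a ≤ b → Cutoff a b K ω (fun r => ∫ x in a..r, ω x) := by
  have hc := hω.continuous
  have hc' : Continuous (deriv ω) := hω.continuous_deriv (by simp)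
  obtain ⟨K₁, hK₁⟩ := hs.exists_bound_of_continuous hc
  obtain ⟨K₂, hK₂⟩ := hs.deriv.exists_bound_of_continuous hc'
  have hInt : Integrable ω := hc.integrable_of_hasCompactSupport hs
  have hK₁0 : 0 ≤ K₁ := (norm_nonneg _).trans (hK₁ 0)
  have hK₂0 : 0 ≤ K₂ := (norm_nonneg _).trans (hK₂ 0)
  have hI0 : 0 ≤ ∫ x, ‖ω x‖ := integral_nonneg fun _ => norm_nonneg _
  refine ⟨1 + K₁ + K₂ + ∫ x, ‖ω x‖, fun a b ha hab => ?_⟩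
  have hWle : ∀ r ∈ Icc a b, ∫ x in a..r, ω x ≤ K₁ * r := fun r hr => by
    have h := intervalIntegral.norm_integral_le_of_norm_le_const (a := a) (b := r) (f := ω)
      (C := K₁) fun x _ => hK₁ x
    rw [abs_of_nonneg (by linarith [hr.1])] at h
    have h1 := (le_abs_self _).trans h
    nlinarith
  exact
  { hK := by positivity
    diff := hω.differentiable (by simp)
    cont := hc'
    prim := fun r => intervalIntegral.integral_hasDerivAt_right (hc.intervalIntegrable _ _)
      (hc.stronglyMeasurableAtFilter _ _) hc.continuousAt
    left := intervalIntegral.integral_same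
    nonneg := fun r hr => h0 r (ha.le.trans hr.1)
    le := fun r _ => by have := (le_abs_self _).trans (hK₁ r); linarith
    deriv_le := fun r _ => by have := hK₂ r; rw [Real.norm_eq_abs] at this; linarith
    W_nonneg := fun r hr => intervalIntegral.integral_nonneg hr.1 fun x hx =>
      h0 x (ha.le.trans hx.1)
    W_le := fun r hr => by
      have h1 : ∫ x in a..r, ω x ≤ ∫ x, ‖ω x‖ := by
        refine (le_abs_self _).trans ?_
        rw [intervalIntegral.integral_of_le hr.1]
        exact (norm_integral_le_integral_norm _).trans
          (setIntegral_le_integral hInt.norm (Filter.Eventually.of_forall fun _ => norm_nonneg _))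
      linarith
    W_le_mul := fun r hr => by
      have hr0 : 0 ≤ r := ha.le.trans hr.1
      have := hWle r hr
      nlinarith }

/-- A controlled entropy flux exists for every viscous flow, with uniform constants. -/
lemma exists_controlled {θ : ℝ} (hθ : 0 < θ) (M₀ : ℝ) : ∃ c₀ C : ℝ, 0 < c₀ ∧ 0 < C ∧
    ∀ {n : ℕ} {T E₀ : ℝ} (S : ViscousSetup n (2 * θ + 1) T E₀), S.δ ≤ M₀ → S.ρbar ≤ 1 →
      ∃ (l R : ℝ) (Φ : EntropyFlux (Ioo l R)), S.Controlled Φ c₀ C := by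
  obtain ⟨c₀, C, hc₀, hC, h⟩ := exists_entropyFlux hθ M₀
  refine ⟨c₀, C, hc₀, hC, fun {n T E₀} S hδ hb => ?_⟩
  have hcyl : IsCompact S.cyl := isCompact_Icc.prod isCompact_Icc
  obtain ⟨B, hB⟩ := hcyl.exists_bound_of_continuousOn S.continuousOn_rho
  have hcε := S.hcε
  have hρb := S.hρbar
  have hm : 0 < min (min S.cε S.ρbar) 1 := by positivity
  have hm1 : min (min S.cε S.ρbar) 1 ≤ 1 := min_le_right _ _
  have hm2 : min (min S.cε S.ρbar) 1 ≤ S.cε := (min_le_left _ _).trans (min_le_left _ _)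
  have hm3 : min (min S.cε S.ρbar) 1 ≤ S.ρbar := (min_le_left _ _).trans (min_le_right _ _)
  generalize min (min S.cε S.ρbar) 1 = μ at *
  have hR1 := le_max_left B S.ρbar
  have hR2 := le_max_right B S.ρbar
  obtain ⟨Φ, h1, h2, h3, h4, h5, h6⟩ := h S.δ (μ / 2) (max B S.ρbar + 1) S.ρbar S.hδ hδ
    (by linarith) (by linarith) (by linarith) (by linarith) hb
  refine ⟨_, _, Φ, ⟨by linarith, fun t ht r hr => ⟨?_, ?_⟩, hC, h1, h2, h3, h4, h5, h6⟩⟩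
  · have := S.pos t ht r hr
    linarith
  · have := (le_abs_self _).trans (hB (t, r) ⟨ht, hr⟩)
    simp only at this
    linarith

end ViscousSetup

/-- higher integrability up to the origin: under the Viscous Setup with
`δ ≤ ε`, `ρ̄ ≤ 1` and the parameter bound
`ε b^n/a + δ|log a|(1 + b^n/ε) + ρ̄^θ|log a| + ρ̄^γ b^n + √ε/a ≤ M₀`, `θ = (γ−1)/2`,
for any cutoff `ω ∈ C_c^∞([0,∞))` with `ω = 1` on `[0,1]` and `ω ≥ 0` there is `M > 0`
depending only on `n, γ, T, E₀, M₀, ω` (not on `ε`) with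
`∫₀^T∫_a^b (ρ|u|³ + ρ^{γ+θ}) ω(r) r^{n−1} dr dt ≤ M`. -/
theorem higher_integrability_at_origin (n : ℕ) (γ T E₀ M₀ : ℝ) (hM₀ : 0 < M₀)
    (ω : ℝ → ℝ) (hω_smooth : ContDiff ℝ (⊤ : ℕ∞) ω) (hω_supp : HasCompactSupport ω)
    (hω_one : ∀ r ∈ Set.Icc (0:ℝ) 1, ω r = 1) (hω_nonneg : ∀ r : ℝ, 0 ≤ r → 0 ≤ ω r) :
    ∃ M : ℝ, 0 < M ∧ ∀ S : ViscousSetup n γ T E₀, S.δ ≤ S.ε → S.ρbar ≤ 1 →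
      S.ε * S.b ^ n / S.a + S.δ * |Real.log S.a| * (1 + S.b ^ n / S.ε)
          + S.ρbar ^ ((γ - 1) / 2) * |Real.log S.a| + S.ρbar ^ γ * S.b ^ n
          + Real.sqrt S.ε / S.a ≤ M₀ →
      (∫ t in Set.Ioo 0 T, ∫ r in Set.Ioo S.a S.b,
          (S.ρ t r * |S.m t r / S.ρ t r| ^ (3:ℕ) + (S.ρ t r) ^ (γ + (γ - 1) / 2))
            * ω r * r ^ (n - 1)) ≤ M := by
  by_cases hγ : 1 < γ
  swap
  · exact ⟨1, one_pos, fun S => absurd S.hγ hγ⟩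
  obtain ⟨θ, rfl⟩ : ∃ θ, γ = 2 * θ + 1 := ⟨(γ - 1) / 2, by ring⟩
  have hθ : 0 < θ := by linarith
  obtain ⟨c₀, C, hc₀, hC, hΦ⟩ := ViscousSetup.exists_controlled hθ M₀
  obtain ⟨K, hK⟩ := ViscousSetup.exists_cutoff hω_smooth hω_supp hω_nonneg
  obtain ⟨D, hD, hE⟩ := exists_energyDensity_le hθ
  refine ⟨max 1 ((2 * (K * C * (D * E₀ + D * (2 * M₀)))
    + T * (K * C * (1 + (n - 1) * M₀ + M₀ + (n - 1) + (n - 1) * M₀) * (D * E₀ + D * (2 * M₀)))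
    + 2 * K * E₀ + T * (K * C * (2 * M₀))) / c₀), lt_max_of_lt_left one_pos, ?_⟩
  intro S hδε hb1 hM
  refine le_trans ?_ (le_max_right _ _)
  have hε := S.hε
  have hδ := S.hδ
  have ha := S.ha0
  have hb0 : 0 < S.b := by linarith [S.hb]
  have hρb := S.hρbar
  have hab : S.a ≤ S.b := (S.ha1.trans S.hb).le
  have hbn : 1 ≤ S.b ^ n := one_le_pow₀ S.hb.le
  have p1 : 0 ≤ S.ε * S.b ^ n / S.a := by positivity
  have p2 : 0 ≤ S.δ * |Real.log S.a| * (1 + S.b ^ n / S.ε) := by positivity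
  have p3 : 0 ≤ S.ρbar ^ ((2 * θ + 1 - 1) / 2) * |Real.log S.a| := by positivity
  have p4 : 0 ≤ S.ρbar ^ (2 * θ + 1) * S.b ^ n := by positivity
  have p5 : 0 ≤ Real.sqrt S.ε / S.a := by positivity
  have hεb : S.ε * S.b ^ n / S.a ≤ M₀ := by linarith
  have hεa : S.ε / S.a ≤ M₀ := by
    refine le_trans ?_ hεb
    gcongr
    nlinarith
  have hεbn : S.ε * S.b ^ n ≤ M₀ := by
    refine le_trans ?_ hεb
    rw [le_div_iff₀ ha]
    nlinarith [S.ha1, mul_pos hε (pow_pos hb0 n)]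
  have hεM : S.ε ≤ M₀ := by nlinarith
  have hbar : (S.ρbar ^ (2 * θ + 1) + S.δ * S.ρbar ^ 2) * S.b ^ n ≤ 2 * M₀ := by
    have h1 : S.δ * S.ρbar ^ 2 * S.b ^ n ≤ S.ε * 1 * S.b ^ n := by
      gcongr
      exact pow_le_one₀ hρb.le hb1
    linarith
  have hbar' : (S.ρbar ^ (2 * θ + 1) + S.δ * S.ρbar ^ 2) * S.b ^ (n - 1) ≤ 2 * M₀ := by
    refine le_trans ?_ hbar
    gcongr
    exacts [S.hb.le, by omega]
  obtain ⟨l, R, Φ, hctrl⟩ := hΦ S (hδε.trans hεM) hb1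
  have htot := S.total_le hctrl (hK S.a S.b ha hab) hεa
    (fun t ht => S.integral_energyDensity_le hD
      (fun ρ u hρ => hE S.δ S.ρbar ρ u hδ hρb hρ) hbar ht) S.integral_diss_le hbar'
  rw [le_div_iff₀ hc₀, mul_comm]
  refine le_trans (le_of_eq ?_) htot
  congr 1
  rw [ViscousSetup.integral_Ioo_eq S.hT.le]
  refine intervalIntegral.integral_congr fun t _ => ?_
  rw [ViscousSetup.integral_Ioo_eq hab]
  refine intervalIntegral.integral_congr fun r _ => ?_
  simp only [ViscousSetup.vel]
  rw [show 2 * θ + 1 + (2 * θ + 1 - 1) / 2 = 3 * θ + 1 by ring]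
  ring
end
end

section
/- Under the Entropy Setup, for all ρ > 0 and m ∈ ℝ with u = m/ρ, one has −q̌(ρ,m) + m(η̌_ρ(ρ,m) + u η̌_m(ρ,m)) ≤ 0. -/
open MeasureTheory Real Set

noncomputable section

/-- The Lions–Perthame–Tadmor weak entropy
`η̌(ρ,m) = ∫_ℝ ½ s|s| [ρ^{2θ} − (m/ρ−s)²]_+^{(3−γ)/(2(γ−1))} ds`, with `2θ = γ−1`. -/
def etaCheck (γ ρ m : ℝ) : ℝ :=
  ∫ s : ℝ, (1/2) * s * |s| *
    (max (ρ ^ (γ - 1) - (m / ρ - s) ^ (2:ℕ)) 0) ^ ((3 - γ) / (2 * (γ - 1)))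

/-- The associated weak entropy flux
`q̌(ρ,m) = ∫_ℝ ½ s|s| (θs + (1−θ)m/ρ) [ρ^{2θ} − (m/ρ−s)²]_+^{(3−γ)/(2(γ−1))} ds`. -/
def qCheck (γ ρ m : ℝ) : ℝ :=
  ∫ s : ℝ, (1/2) * s * |s| * (((γ - 1)/2) * s + (1 - (γ - 1)/2) * (m / ρ)) *
    (max (ρ ^ (γ - 1) - (m / ρ - s) ^ (2:ℕ)) 0) ^ ((3 - γ) / (2 * (γ - 1)))

/-- Partial derivative `η̌_ρ` in the variables `(ρ,m)`. -/
def etaCheckRho (γ ρ m : ℝ) : ℝ := deriv (fun x => etaCheck γ x m) ρ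

/-- Partial derivative `η̌_m` in the variables `(ρ,m)`. -/
def etaCheckM (γ ρ m : ℝ) : ℝ := deriv (fun y => etaCheck γ ρ y) m

/-- The modified entropy `η̃(ρ,m) = η̌(ρ,m) − η̌_ρ(ρ̄,0)(ρ−ρ̄) − η̌_m(ρ̄,0)m`. -/
def etaTilde (γ ρbar ρ m : ℝ) : ℝ :=
  etaCheck γ ρ m - etaCheckRho γ ρbar 0 * (ρ - ρbar) - etaCheckM γ ρbar 0 * m

/-- The modified entropy flux
`q̃(ρ,m) = q̌(ρ,m) − η̌_ρ(ρ̄,0)m − η̌_m(ρ̄,0)(m²/ρ + p(ρ))`, `p(ρ) = κρ^γ`. -/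
def qTilde (γ κ ρbar ρ m : ℝ) : ℝ :=
  qCheck γ ρ m - etaCheckRho γ ρbar 0 * m
    - etaCheckM γ ρbar 0 * (m ^ (2:ℕ) / ρ + κ * ρ ^ γ)

/-- `η̃_ρ` in the variables `(ρ,m)`. -/
def etaTildeRho (γ ρbar ρ m : ℝ) : ℝ := deriv (fun x => etaTilde γ ρbar x m) ρ

/-- `η̃_m` in the variables `(ρ,m)`. -/
def etaTildeM (γ ρbar ρ m : ℝ) : ℝ := deriv (fun y => etaTilde γ ρbar ρ y) m

/-- The Barenblatt-type weight `[1 − t²]_+^l`. -/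
def barenblattWeight (l t : ℝ) : ℝ := (max (1 - t ^ (2 : ℕ)) 0) ^ l

lemma barenblattWeight_nonneg (l t : ℝ) : 0 ≤ barenblattWeight l t :=
  Real.rpow_nonneg (le_max_right _ _) _

lemma barenblattWeight_neg (l t : ℝ) : barenblattWeight l (-t) = barenblattWeight l t := by
  simp [barenblattWeight]

lemma barenblattWeight_eq_zero {l t : ℝ} (hl : l ≠ 0) (ht : 1 ≤ |t|) :
    barenblattWeight l t = 0 := by
  have h : 1 - t ^ (2 : ℕ) ≤ 0 := by
    have := sq_abs t
    nlinarith [abs_nonneg t]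
  rw [barenblattWeight, max_eq_right h, Real.zero_rpow hl]

lemma measurable_barenblattWeight (l : ℝ) : Measurable (barenblattWeight l) := by
  unfold barenblattWeight
  fun_prop

lemma integrableOn_barenblattWeight {l : ℝ} (hl : -1 < l) (hl0 : l ≠ 0) :
    IntegrableOn (barenblattWeight l) (Icc (-1) 1) := by
  have hI : IntervalIntegrable (fun t : ℝ => t ^ l) volume 0 1 :=
    intervalIntegral.intervalIntegrable_rpow' hl
  have hA : IntegrableOn (fun t : ℝ => (1 - t) ^ l) (Icc 0 1) := by
    have h := (hI.comp_sub_left 1).symm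
    norm_num at h
    exact (intervalIntegrable_iff_integrableOn_Icc_of_le zero_le_one).1 h
  have hB : IntegrableOn (fun t : ℝ => (1 + t) ^ l) (Icc (-1) 0) := by
    have h := hI.comp_add_left 1
    norm_num at h
    exact (intervalIntegrable_iff_integrableOn_Icc_of_le (by norm_num)).1 h
  have hAbs : IntegrableOn (fun t : ℝ => (1 - |t|) ^ l) (Icc (-1) 1) := by
    rw [← Icc_union_Icc_eq_Icc (show (-1 : ℝ) ≤ 0 by norm_num) zero_le_one]
    refine IntegrableOn.union (hB.congr_fun ?_ measurableSet_Icc)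
      (hA.congr_fun ?_ measurableSet_Icc)
    · intro t ht
      simp only [abs_of_nonpos ht.2, sub_neg_eq_add]
    · intro t ht
      simp only [abs_of_nonneg ht.1]
  have hdom : IntegrableOn (fun t : ℝ => 1 + (1 - |t|) ^ l) (Icc (-1) 1) :=
    (integrableOn_const (by simp)).add hAbs
  refine hdom.mono' (measurable_barenblattWeight l).aestronglyMeasurable ?_
  refine (ae_restrict_iff' measurableSet_Icc).2 (Filter.Eventually.of_forall fun t ht => ?_)
  have ht1 : |t| ≤ 1 := abs_le.2 ht
  rw [Real.norm_of_nonneg (barenblattWeight_nonneg l t)]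
  have hpow : 0 ≤ (1 - |t|) ^ l := Real.rpow_nonneg (by linarith) _
  rcases ht1.eq_or_lt with h1 | h1
  · rw [barenblattWeight_eq_zero hl0 h1.ge]
    linarith
  have hsq : 1 - |t| ≤ 1 - t ^ (2 : ℕ) := by
    have := sq_abs t
    nlinarith [abs_nonneg t]
  rw [barenblattWeight, max_eq_left (by linarith)]
  rcases le_total 0 l with h | h
  · have : (1 - t ^ (2 : ℕ)) ^ l ≤ 1 :=
      Real.rpow_le_one (by linarith) (by linarith [sq_nonneg t]) h
    linarith
  · have := Real.rpow_le_rpow_of_nonpos (by linarith : 0 < 1 - |t|) hsq h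
    linarith

lemma integrable_mul_barenblattWeight {l : ℝ} (hl : -1 < l) (hl0 : l ≠ 0) {φ : ℝ → ℝ}
    (hφ : Continuous φ) : Integrable (fun t => φ t * barenblattWeight l t) := by
  refine (integrableOn_iff_integrable_of_support_subset (s := Icc (-1) 1) ?_).1
    ((integrableOn_barenblattWeight hl hl0).continuousOn_mul hφ.continuousOn isCompact_Icc)
  intro t ht
  by_contra hmem
  refine ht ?_
  have : 1 ≤ |t| := by
    by_contra h
    exact hmem (abs_le.1 (not_le.1 h).le)
  simp [barenblattWeight_eq_zero hl0 this]

/-- `s ↦ ½ s|s|` is differentiable with `1`-Lipschitz derivative `|s|`. -/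
lemma abs_half_mul_abs_sub_le (s d : ℝ) :
    |(1 / 2) * (s + d) * |s + d| - (1 / 2) * s * |s| - |s| * d| ≤ d ^ 2 / 2 := by
  rcases abs_cases s with ⟨h1, h1'⟩ | ⟨h1, h1'⟩ <;>
  rcases abs_cases (s + d) with ⟨h2, h2'⟩ | ⟨h2, h2'⟩ <;>
  rw [h1, h2, abs_le] <;> constructor <;> nlinarith

/-- The weighted moment `∫ ½ s|s| [1 − t²]_+^l dt` with `s = a + b t`. -/
def weightedMoment (l : ℝ) (p : ℝ × ℝ) : ℝ :=
  ∫ t : ℝ, (1 / 2) * (p.1 + p.2 * t) * |p.1 + p.2 * t| * barenblattWeight l t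

lemma hasFDerivAt_weightedMoment {l : ℝ} (hl : -1 < l) (hl0 : l ≠ 0) (p : ℝ × ℝ) :
    HasFDerivAt (weightedMoment l)
      ((∫ t : ℝ, |p.1 + p.2 * t| * barenblattWeight l t) • ContinuousLinearMap.fst ℝ ℝ ℝ +
        (∫ t : ℝ, |p.1 + p.2 * t| * t * barenblattWeight l t) •
          ContinuousLinearMap.snd ℝ ℝ ℝ) p := by
  have hint : ∀ φ : ℝ → ℝ, Continuous φ → Integrable fun t => φ t * barenblattWeight l t :=
    fun φ hφ => integrable_mul_barenblattWeight hl hl0 hφ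
  refine .of_isLittleO (Asymptotics.IsBigO.trans_isLittleO (g := fun x => ‖x - p‖ ^ 2) ?_
    (Asymptotics.isLittleO_pow_sub_sub p one_lt_two))
  refine .of_bound (∫ t : ℝ, 2 * barenblattWeight l t) (Filter.Eventually.of_forall fun x => ?_)
  have key : weightedMoment l x - weightedMoment l p -
      ((∫ t : ℝ, |p.1 + p.2 * t| * barenblattWeight l t) * (x - p).1 +
        (∫ t : ℝ, |p.1 + p.2 * t| * t * barenblattWeight l t) * (x - p).2) =
      ∫ t : ℝ, ((1 / 2) * (x.1 + x.2 * t) * |x.1 + x.2 * t| -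
        (1 / 2) * (p.1 + p.2 * t) * |p.1 + p.2 * t| -
        |p.1 + p.2 * t| * ((x - p).1 + (x - p).2 * t)) * barenblattWeight l t := by
    rw [weightedMoment, weightedMoment, ← integral_mul_const, ← integral_mul_const,
      ← integral_sub (hint _ (by fun_prop)) (hint _ (by fun_prop)),
      ← integral_add ((hint _ (by fun_prop)).mul_const _) ((hint _ (by fun_prop)).mul_const _),
      ← integral_sub ((hint _ (by fun_prop)).sub' (hint _ (by fun_prop)))
        (((hint _ (by fun_prop)).mul_const _).fun_add ((hint _ (by fun_prop)).mul_const _))]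
    refine integral_congr_ae (Filter.Eventually.of_forall fun t => ?_)
    ring
  simp only [_root_.add_apply, _root_.smul_apply,
    ContinuousLinearMap.coe_fst', ContinuousLinearMap.coe_snd', smul_eq_mul]
  rw [key, norm_pow, norm_norm, ← integral_mul_const]
  refine norm_integral_le_of_norm_le ((hint (fun _ => 2) continuous_const).mul_const _)
    (Filter.Eventually.of_forall fun t => ?_)
  rw [norm_mul, Real.norm_of_nonneg (barenblattWeight_nonneg l t)]
  rcases le_total 1 |t| with ht | ht
  · simp [barenblattWeight_eq_zero hl0 ht]
  have hx : x.1 + x.2 * t = (p.1 + p.2 * t) + ((x - p).1 + (x - p).2 * t) := by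
    simp only [Prod.fst_sub, Prod.snd_sub]
    ring
  have h1 : |(x - p).1| ≤ ‖x - p‖ := norm_fst_le (x - p)
  have h2 : |(x - p).2| ≤ ‖x - p‖ := norm_snd_le (x - p)
  have h3 : |(x - p).1 + (x - p).2 * t| ≤ 2 * ‖x - p‖ := by
    refine (abs_add_le _ _).trans ?_
    rw [abs_mul]
    nlinarith [mul_le_mul h2 ht (abs_nonneg _) (norm_nonneg (x - p))]
  have h4 : ((x - p).1 + (x - p).2 * t) ^ 2 ≤ (2 * ‖x - p‖) ^ 2 := by
    rw [← sq_abs]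
    gcongr
  have h5 := abs_half_mul_abs_sub_le (p.1 + p.2 * t) ((x - p).1 + (x - p).2 * t)
  rw [hx, Real.norm_eq_abs]
  nlinarith [mul_le_mul_of_nonneg_right
    (h5.trans (by linarith : _ ≤ 2 * ‖x - p‖ ^ 2)) (barenblattWeight_nonneg l t)]

/-- The change of variables `s = u + ρ^θ t` in the kinetic integrals. -/
lemma integral_mul_kinetic_kernel {γ ρ : ℝ} (hγ : 1 < γ) (hρ : 0 < ρ) (u : ℝ) (φ : ℝ → ℝ) :
    ∫ s : ℝ, φ s * (max (ρ ^ (γ - 1) - (u - s) ^ (2 : ℕ)) 0) ^ ((3 - γ) / (2 * (γ - 1))) =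
      ρ * ∫ t : ℝ, φ (u + ρ ^ ((γ - 1) / 2) * t) *
        barenblattWeight ((3 - γ) / (2 * (γ - 1))) t := by
  set l := (3 - γ) / (2 * (γ - 1)) with hl
  set c := ρ ^ ((γ - 1) / 2) with hc
  have hc0 : 0 < c := Real.rpow_pos_of_pos hρ _
  have hc2 : ρ ^ (γ - 1) = c ^ 2 := by
    rw [hc, ← Real.rpow_mul_natCast hρ.le]
    congr 1
    push_cast
    ring
  have hcl : c * (c ^ 2) ^ l = ρ := by
    rw [← hc2, hc, ← Real.rpow_mul hρ.le, ← Real.rpow_add hρ]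
    have : (γ - 1) / 2 + (γ - 1) * l = 1 := by
      have : γ - 1 ≠ 0 := by linarith
      rw [hl]
      field_simp
      ring
    rw [this, Real.rpow_one]
  have hker : ∀ t : ℝ, (max (c ^ 2 - (u - (u + c * t)) ^ (2 : ℕ)) 0) ^ l =
      (c ^ 2) ^ l * barenblattWeight l t := by
    intro t
    rw [barenblattWeight, ← Real.mul_rpow (by positivity) (le_max_right _ _),
      mul_max_of_nonneg _ _ (by positivity)]
    congr 2 <;> ring
  have hsub := Measure.integral_comp_mul_left
    (fun y : ℝ => φ (u + y) * (max (c ^ 2 - (u - (u + y)) ^ (2 : ℕ)) 0) ^ l) c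
  rw [integral_add_left_eq_self
    (fun s : ℝ => φ s * (max (c ^ 2 - (u - s) ^ (2 : ℕ)) 0) ^ l) u,
    abs_of_pos (inv_pos.2 hc0), smul_eq_mul] at hsub
  rw [hc2, ← hcl, mul_assoc, ← integral_const_mul, ← inv_mul_eq_iff_eq_mul₀ hc0.ne', ← hsub]
  refine integral_congr_ae (Filter.Eventually.of_forall fun t => ?_)
  simp only [hker]
  ring

lemma etaCheck_eq_weightedMoment {γ ρ : ℝ} (hγ : 1 < γ) (hρ : 0 < ρ) (m : ℝ) :
    etaCheck γ ρ m =
      ρ * weightedMoment ((3 - γ) / (2 * (γ - 1))) (m / ρ, ρ ^ ((γ - 1) / 2)) :=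
  integral_mul_kinetic_kernel hγ hρ (m / ρ) fun s => (1 / 2) * s * |s|

lemma qCheck_eq_integral {γ ρ : ℝ} (hγ : 1 < γ) (hρ : 0 < ρ) (m : ℝ) :
    qCheck γ ρ m = ρ * ∫ t : ℝ,
      (1 / 2) * (m / ρ + ρ ^ ((γ - 1) / 2) * t) * |m / ρ + ρ ^ ((γ - 1) / 2) * t| *
        (((γ - 1) / 2) * (m / ρ + ρ ^ ((γ - 1) / 2) * t) + (1 - (γ - 1) / 2) * (m / ρ)) *
        barenblattWeight ((3 - γ) / (2 * (γ - 1))) t :=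
  integral_mul_kinetic_kernel hγ hρ (m / ρ) fun s =>
    (1 / 2) * s * |s| * (((γ - 1) / 2) * s + (1 - (γ - 1) / 2) * (m / ρ))

lemma etaCheckM_eq {γ ρ : ℝ} (hγ : 1 < γ) (hρ : 0 < ρ) (m : ℝ)
    (hl : -1 < (3 - γ) / (2 * (γ - 1))) (hl0 : (3 - γ) / (2 * (γ - 1)) ≠ 0) :
    etaCheckM γ ρ m = ∫ t : ℝ, |m / ρ + ρ ^ ((γ - 1) / 2) * t| *
      barenblattWeight ((3 - γ) / (2 * (γ - 1))) t := by
  have hpath : HasDerivAt (fun y : ℝ => (y / ρ, ρ ^ ((γ - 1) / 2))) (1 / ρ, 0) m :=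
    ((hasDerivAt_id m).div_const ρ).prodMk (hasDerivAt_const m _)
  have h := ((hasFDerivAt_weightedMoment hl hl0 _).comp_hasDerivAt m hpath).const_mul ρ
  rw [etaCheckM, funext fun y => etaCheck_eq_weightedMoment hγ hρ y]
  refine h.deriv.trans ?_
  simp
  field_simp

lemma etaCheckRho_eq {γ ρ : ℝ} (hγ : 1 < γ) (hρ : 0 < ρ) (m : ℝ)
    (hl : -1 < (3 - γ) / (2 * (γ - 1))) (hl0 : (3 - γ) / (2 * (γ - 1)) ≠ 0) :
    etaCheckRho γ ρ m =
      weightedMoment ((3 - γ) / (2 * (γ - 1))) (m / ρ, ρ ^ ((γ - 1) / 2)) -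
      (m / ρ) * (∫ t : ℝ, |m / ρ + ρ ^ ((γ - 1) / 2) * t| *
        barenblattWeight ((3 - γ) / (2 * (γ - 1))) t) +
      (γ - 1) / 2 * ρ ^ ((γ - 1) / 2) * ∫ t : ℝ, |m / ρ + ρ ^ ((γ - 1) / 2) * t| * t *
        barenblattWeight ((3 - γ) / (2 * (γ - 1))) t := by
  have hpath : HasDerivAt (fun x : ℝ => (m / x, x ^ ((γ - 1) / 2)))
      (m * (-(ρ ^ 2)⁻¹), (γ - 1) / 2 * ρ ^ ((γ - 1) / 2 - 1)) ρ :=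
    ((hasDerivAt_inv hρ.ne').const_mul m).prodMk
      (Real.hasDerivAt_rpow_const (Or.inl hρ.ne'))
  have h := (hasDerivAt_id ρ).mul
    ((hasFDerivAt_weightedMoment hl hl0 _).comp_hasDerivAt ρ hpath)
  have heq : (fun x => etaCheck γ x m) =ᶠ[nhds ρ] fun x =>
      x * weightedMoment ((3 - γ) / (2 * (γ - 1))) (m / x, x ^ ((γ - 1) / 2)) := by
    filter_upwards [lt_mem_nhds hρ] with x hx using etaCheck_eq_weightedMoment hγ hx m
  rw [etaCheckRho, heq.deriv_eq]
  refine h.deriv.trans ?_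
  simp [Real.rpow_sub_one hρ.ne']
  field_simp
  ring

lemma mul_abs_add_mul_sub_symm_nonpos {c : ℝ} (hc : 0 < c) (u t : ℝ) :
    |u + c * t| * (u - c * t) * t + |u - c * t| * (u + c * t) * (-t) ≤ 0 := by
  have key : ∀ a b : ℝ, b ≤ a → |a| * b - |b| * a ≤ 0 := by
    intro a b hab
    rcases abs_cases a with ⟨h1, h1'⟩ | ⟨h1, h1'⟩ <;>
    rcases abs_cases b with ⟨h2, h2'⟩ | ⟨h2, h2'⟩ <;>
    rw [h1, h2] <;> nlinarith
  rcases le_total 0 t with ht | ht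
  · have := key (u + c * t) (u - c * t) (by nlinarith)
    nlinarith
  · have := key (u - c * t) (u + c * t) (by nlinarith)
    nlinarith

lemma integral_abs_mul_sub_mul_weight_nonpos {l c : ℝ} (hl : -1 < l) (hl0 : l ≠ 0)
    (hc : 0 < c) (u : ℝ) :
    ∫ t : ℝ, |u + c * t| * (u - c * t) * t * barenblattWeight l t ≤ 0 := by
  have hsymm : ∫ t : ℝ, |u + c * t| * (u - c * t) * t * barenblattWeight l t =
      ∫ t : ℝ, |u - c * t| * (u + c * t) * (-t) * barenblattWeight l t := by
    rw [← integral_neg_eq_self]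
    refine integral_congr_ae (Filter.Eventually.of_forall fun t => ?_)
    simp only [barenblattWeight_neg, mul_neg, sub_neg_eq_add, ← sub_eq_add_neg]
  have hsum : (∫ t : ℝ, |u + c * t| * (u - c * t) * t * barenblattWeight l t) +
      ∫ t : ℝ, |u - c * t| * (u + c * t) * (-t) * barenblattWeight l t ≤ 0 := by
    rw [← integral_add (integrable_mul_barenblattWeight hl hl0 (by fun_prop))
      (integrable_mul_barenblattWeight hl hl0 (by fun_prop))]
    refine integral_nonpos fun t => ?_
    have := mul_nonpos_of_nonpos_of_nonneg (mul_abs_add_mul_sub_symm_nonpos hc u t)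
      (barenblattWeight_nonneg l t)
    simpa [add_mul] using this
  linarith

/-- For `γ = 3` the exponent vanishes and `x ^ 0 = 1`, so the kernel is identically `1`. -/
lemma etaCheck_three (ρ m : ℝ) : etaCheck 3 ρ m = 0 := by
  have h : etaCheck 3 ρ m = ∫ s : ℝ, (1 / 2) * s * |s| := by
    simp [etaCheck]
  have hneg : ∫ s : ℝ, (1 / 2) * s * |s| = -∫ s : ℝ, (1 / 2) * s * |s| := by
    rw [← integral_neg, ← integral_neg_eq_self]
    simp
  rw [h]
  linarith

lemma qCheck_three_nonneg (ρ m : ℝ) : 0 ≤ qCheck 3 ρ m := by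
  refine integral_nonneg fun s => ?_
  have : (1 / 2) * s * |s| * ((3 - 1) / 2 * s + (1 - (3 - 1) / 2) * (m / ρ)) =
      (1 / 2) * s ^ 2 * |s| := by ring
  simp only [this]
  positivity

/-- `−q̌(ρ,m) + m(η̌_ρ(ρ,m) + u η̌_m(ρ,m)) ≤ 0` for all `ρ > 0`, `m ∈ ℝ`,
where `u = m/ρ`. -/
theorem qCheck_entropy_inequality (γ : ℝ) (hγ : 1 < γ) :
    ∀ ρ : ℝ, 0 < ρ → ∀ m : ℝ,
      -qCheck γ ρ m + m * (etaCheckRho γ ρ m + (m / ρ) * etaCheckM γ ρ m) ≤ 0 := by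
  intro ρ hρ m
  rcases eq_or_ne γ 3 with rfl | hγ3
  · have := qCheck_three_nonneg ρ m
    simp only [etaCheckRho, etaCheckM, etaCheck_three, deriv_const, mul_zero, add_zero]
    linarith
  have hγ1 : 0 < γ - 1 := by linarith
  have hl : -1 < (3 - γ) / (2 * (γ - 1)) := by
    rw [lt_div_iff₀ (by linarith)]
    linarith
  have hl0 : (3 - γ) / (2 * (γ - 1)) ≠ 0 :=
    div_ne_zero (sub_ne_zero.2 hγ3.symm) (by linarith)
  rw [qCheck_eq_integral hγ hρ, etaCheckRho_eq hγ hρ m hl hl0, etaCheckM_eq hγ hρ m hl hl0]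
  have hc : 0 < ρ ^ ((γ - 1) / 2) := Real.rpow_pos_of_pos hρ _
  have hm : m = ρ * (m / ρ) := by field_simp
  generalize ρ ^ ((γ - 1) / 2) = c at *
  generalize (3 - γ) / (2 * (γ - 1)) = l at *
  generalize m / ρ = u at *
  subst hm
  have hint : ∀ φ : ℝ → ℝ, Continuous φ → Integrable fun t => φ t * barenblattWeight l t :=
    fun φ hφ => integrable_mul_barenblattWeight hl hl0 hφ
  have key : u * weightedMoment l (u, c) +
      u * ((γ - 1) / 2 * c) * (∫ t : ℝ, |u + c * t| * t * barenblattWeight l t) -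
      (∫ t : ℝ, (1 / 2) * (u + c * t) * |u + c * t| *
        ((γ - 1) / 2 * (u + c * t) + (1 - (γ - 1) / 2) * u) * barenblattWeight l t) =
      (γ - 1) / 4 * c * ∫ t : ℝ, |u + c * t| * (u - c * t) * t * barenblattWeight l t := by
    rw [weightedMoment, ← integral_const_mul, ← integral_const_mul, ← integral_const_mul,
      ← integral_add ((hint _ (by fun_prop)).const_mul _) ((hint _ (by fun_prop)).const_mul _),
      ← integral_sub (((hint _ (by fun_prop)).const_mul _).fun_add
        ((hint _ (by fun_prop)).const_mul _)) (hint _ (by fun_prop))]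
    refine integral_congr_ae (Filter.Eventually.of_forall fun t => ?_)
    ring
  have hneg := mul_nonpos_of_nonneg_of_nonpos (by positivity : 0 ≤ ρ * ((γ - 1) / 4 * c))
    (integral_abs_mul_sub_mul_weight_nonpos hl hl0 hc u)
  rw [mul_assoc, ← key] at hneg
  linarith
end
end
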